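/- Fix a constant m ≥ 1. There exist constants C > 0 and c ≥ 0 (depending only on m) such that the following holds. Let p be an odd prime, let g, h : 𝔽_p* → 𝔽_p* be arbitrary functions with μ(g·h) ≤ m (where (g·h)(x) := g(x)h(x)), and define f(x,y) = g(x)(h(x)+y) on 𝔽_p* × 𝔽_p*. Then for every nonempty finite subset A ⊆ 𝔽_p* with |A| ≤ p^{3/5}, one has max{|f(A,A)|, |A·A|} ≥ C (log(2|A|))^{−c} |A|^{11/9}. -/

import Mathlib

open Finset Pointwise

/-- `mu g` is `max_{t ∈ 𝔽_p*} |{x ∈ 𝔽_p* : g x = t}|`. -/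
def mu {p : ℕ} [NeZero p] (g : ZMod p → ZMod p) : ℕ :=
  Finset.sup (Finset.univ.filter fun t : ZMod p => t ≠ 0)
    (fun t => (Finset.univ.filter fun x : ZMod p => x ≠ 0 ∧ g x = t).card)

/-!
A collision `m y + c = m' y' + c'` between points `y, y'` and affine functions `(m, c), (m', c')`
becomes an incidence between a line in space attached to `(y, m', c')` and one attached to
`(y', m, c)`: with coefficients in `𝔽_p(T)` these lines can be taken parallel to the planes `x₂ = 0`
and `x₁ = 0` and in general position. By the polynomial method in the style of Guth and Katz, many
such incidences force many of the lines onto a surface of small degree which they rule doubly,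
hence onto a surface `z = a x₁ x₂ + b x₁ + c x₂ + d`. The degrees stay below the characteristic, so
a collision count over `N` pairs is `≲ N^{3/2}` as long as `N ≲ p²`.

The value `f(x, a)` lies on two families of affine functions. As `g(x) d b + g(x) h(x)` with
`d = a / b`, it turns the collision bound into a bound for the fourth energy
`E₄(A) = ∑ r_{A/A}(d)⁴`. As `a u = (u / g(x)) f(x, a) - h(x) u`, it turns the collision bound, or a
second moment estimate when `N ≳ p²`, into a bound `E(A, U)² ≤ β |U|³` for the multiplicative
energy of `A` with every `U ⊆ A / A`. Combinatorially, such a `β` satisfies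
`|A|¹² ≲ β |AA|⁴ E₄(A)`, and the two energy bounds then give `|A|¹¹ ≲ max(|f(A, A)|, |AA|)⁹`.
-/

namespace ProductExpander

/-! ### Polynomials with vanishing derivatives -/

section PartialDerivatives

open MvPolynomial
open scoped Nat

variable {σ R K : Type*} [CommRing R] [Field K]

lemma pderiv_comm (i j : σ) (F : MvPolynomial σ R) :
    pderiv i (pderiv j F) = pderiv j (pderiv i F) := by
  classical
  have h : ⁅pderiv i, pderiv j⁆ = (0 : Derivation R (MvPolynomial σ R) (MvPolynomial σ R)) :=
    derivation_ext fun k => by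
      rw [Derivation.commutator_apply, pderiv_X, pderiv_X, Pi.single_apply, Pi.single_apply]
      split_ifs <;> simp
  exact sub_eq_zero.1 ((Derivation.commutator_apply ..).symm.trans (by rw [h]; rfl))

lemma totalDegree_pderiv_le (i : σ) (F : MvPolynomial σ R) :
    (pderiv i F).totalDegree ≤ F.totalDegree - 1 := by
  refine Finset.sup_le fun s hs => ?_
  rw [mem_support_iff, coeff_pderiv] at hs
  have hle := le_totalDegree (mem_support_iff.2 (left_ne_zero_of_mul hs))
  change (s + Finsupp.single i 1).degree ≤ _ at hle
  rw [map_add, Finsupp.degree_single] at hle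
  exact Nat.le_sub_one_of_lt hle

lemma totalDegree_aeval_le {τ : Type*} (g : σ → MvPolynomial τ R) {d : ℕ}
    (hg : ∀ i, (g i).totalDegree ≤ d) (F : MvPolynomial σ R) :
    (aeval g F).totalDegree ≤ d * F.totalDegree := by
  conv_lhs => rw [F.as_sum, map_sum]
  refine totalDegree_finsetSum_le fun s hs => ?_
  calc (aeval g (monomial s (coeff s F))).totalDegree
      ≤ (s.prod fun i n => g i ^ n).totalDegree := by
        rw [aeval_monomial, algebraMap_eq]
        exact (totalDegree_mul _ _).trans (by simp)
    _ ≤ s.sum fun i n => (g i ^ n).totalDegree := totalDegree_finsetProd _ _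
    _ ≤ s.sum fun _ n => d * n := Finset.sum_le_sum fun i _ =>
        (totalDegree_pow _ _).trans ((Nat.mul_le_mul_left _ (hg i)).trans_eq (mul_comm _ _))
    _ = d * s.sum fun _ n => n := (Finset.mul_sum ..).symm
    _ ≤ d * F.totalDegree := Nat.mul_le_mul_left d (le_totalDegree hs)

lemma factorial_ne_zero_of_le {m n : ℕ} (hn : (n ! : K) ≠ 0) (hmn : m ≤ n) : (m ! : K) ≠ 0 :=
  fun h => hn (zero_dvd_iff.1 (h ▸ Nat.cast_dvd_cast (Nat.factorial_dvd_factorial hmn)))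

lemma natCast_ne_zero_of_factorial_ne_zero {i n : ℕ} (hn : (n ! : K) ≠ 0) (hi : i ≠ 0)
    (hin : i ≤ n) : (i : K) ≠ 0 := by
  obtain ⟨c, hc⟩ := Nat.dvd_factorial (Nat.pos_of_ne_zero hi) hin
  rw [hc, Nat.cast_mul] at hn
  exact left_ne_zero_of_mul hn

lemma degreeOf_eq_zero_of_pderiv_eq_zero {F : MvPolynomial σ K} {i : σ}
    (hchar : (F.totalDegree ! : K) ≠ 0) (hF : pderiv i F = 0) : degreeOf i F = 0 := by
  classical
  rw [← Nat.le_zero, degreeOf_le_iff]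
  intro s hs
  by_contra! hsi
  have hcoeff := coeff_pderiv F (s - Finsupp.single i 1) (i := i)
  rw [Finsupp.sub_add_single_one_cancel hsi.ne', hF, coeff_zero, ← Nat.cast_add_one,
    Finsupp.tsub_apply, Finsupp.single_eq_same, Nat.sub_add_cancel hsi] at hcoeff
  have hle : s i ≤ F.totalDegree :=
    (degreeOf_le_iff.1 le_rfl s hs).trans (degreeOf_le_totalDegree F i)
  exact mul_ne_zero (mem_support_iff.1 hs)
    (natCast_ne_zero_of_factorial_ne_zero hchar hsi.ne' hle) hcoeff.symm

lemma eq_C_of_forall_pderiv_eq_zero {F : MvPolynomial σ K}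
    (hchar : (F.totalDegree ! : K) ≠ 0) (hF : ∀ i, pderiv i F = 0) : F = C (coeff 0 F) := by
  classical
  refine vars_eq_empty_iff_eq_C.1 (Finset.eq_empty_of_forall_notMem fun i hi => ?_)
  rw [vars_def, Multiset.mem_toFinset, ← Multiset.count_pos, ← degreeOf_def] at hi
  exact hi.ne' (degreeOf_eq_zero_of_pderiv_eq_zero hchar (hF i))

/-- A Taylor expansion argument: a polynomial all of whose iterated partial derivatives vanish
at a point is zero. -/
lemma eq_zero_of_pderiv_closed {x : σ → K} {S : Set (MvPolynomial σ K)}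
    (heval : ∀ F ∈ S, eval x F = 0) (hpderiv : ∀ F ∈ S, ∀ i, pderiv i F ∈ S)
    {F : MvPolynomial σ K} (hF : F ∈ S) (hchar : (F.totalDegree ! : K) ≠ 0) : F = 0 := by
  induction hn : F.totalDegree using Nat.strong_induction_on generalizing F with
  | _ n ih =>
    have hzero : ∀ i, pderiv i F = 0 := fun i => by
      have hle := totalDegree_pderiv_le i F
      rcases Nat.eq_zero_or_pos F.totalDegree with h0 | hpos
      · rw [totalDegree_eq_zero_iff_eq_C.1 h0, pderiv_C]
      · exact ih _ (by omega) (hpderiv F hF i) (factorial_ne_zero_of_le hchar (by omega)) rfl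
    have hconst := eq_C_of_forall_pderiv_eq_zero hchar hzero
    have h0 := heval F hF
    rw [hconst, eval_C] at h0
    rw [hconst, h0, C_0]

end PartialDerivatives

/-! ### Ruled surfaces -/

section Saturation

variable {R : Type*} [CommRing R]

/-- The saturation `J : f^∞` of an ideal. -/
def saturation (J : Ideal R) (f : R) : Ideal R where
  carrier := {q | ∃ k : ℕ, f ^ k * q ∈ J}
  zero_mem' := ⟨0, by simp⟩
  add_mem' := by
    rintro q r ⟨k, hk⟩ ⟨l, hl⟩
    refine ⟨k + l, ?_⟩
    convert J.add_mem (J.mul_mem_left (f ^ l) hk) (J.mul_mem_left (f ^ k) hl) using 1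
    ring
  smul_mem' := by
    rintro r q ⟨k, hk⟩
    exact ⟨k, by simpa only [smul_eq_mul, mul_left_comm] using J.mul_mem_left r hk⟩

lemma le_saturation (J : Ideal R) (f : R) : J ≤ saturation J f := fun q hq =>
  ⟨0, by simpa using hq⟩

lemma mem_saturation_of_pow_mul_mem {J : Ideal R} {f q : R} (k : ℕ)
    (h : f ^ k * q ∈ saturation J f) : q ∈ saturation J f := by
  obtain ⟨l, hl⟩ := h
  exact ⟨l + k, by rwa [pow_add, mul_assoc]⟩

lemma saturation_le_ker {S : Type*} [CommRing S] [IsDomain S] {J : Ideal R} {f : R} (g : R →+* S)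
    (hJ : J ≤ RingHom.ker g) (hf : g f ≠ 0) : saturation J f ≤ RingHom.ker g := by
  rintro q ⟨k, hk⟩
  have h : g f ^ k * g q = 0 := by simpa using hJ hk
  exact (mul_eq_zero.1 h).resolve_left (pow_ne_zero k hf)

lemma derivation_mem_saturation {A : Type*} [CommRing A] [Algebra A R] (D : Derivation A R R)
    {G : Set R} {f : R} (hG : ∀ g ∈ G, D g ∈ saturation (Ideal.span G) f) {q : R}
    (hq : q ∈ saturation (Ideal.span G) f) : D q ∈ saturation (Ideal.span G) f := by
  have hspan : ∀ r ∈ Ideal.span G, D r ∈ saturation (Ideal.span G) f := fun r hr => by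
    induction hr using Submodule.span_induction with
    | mem g hg => exact hG g hg
    | zero => rw [map_zero]; exact Ideal.zero_mem _
    | add r s _ _ hr hs => rw [map_add]; exact Ideal.add_mem _ hr hs
    | smul a r hr' hr =>
      rw [smul_eq_mul, D.leibniz]
      exact Ideal.add_mem _ (Ideal.mul_mem_left _ _ hr)
        (Ideal.mul_mem_right _ _ (le_saturation _ _ hr'))
  obtain ⟨k, hk⟩ := hq
  refine mem_saturation_of_pow_mul_mem k ?_
  have hleibniz : f ^ k * D q = D (f ^ k * q) - q * D (f ^ k) := by
    rw [D.leibniz, smul_eq_mul, smul_eq_mul, add_sub_cancel_right]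
  rw [hleibniz]
  exact Ideal.sub_mem _ (hspan _ hk) (Ideal.mul_mem_right _ _ ⟨k, hk⟩)

end Saturation

section SecondForm

open MvPolynomial

variable {σ R : Type*} [CommRing R]

/-- On the surface `F = 0`, seen as a graph over the coordinates other than `z`, this is `∂F/∂z`
times differentiation along the `i`-th coordinate. -/
noncomputable def tangentialDeriv (F : MvPolynomial σ R) (z i : σ) :
    Derivation R (MvPolynomial σ R) (MvPolynomial σ R) :=
  pderiv z F • pderiv i - pderiv i F • pderiv z

lemma tangentialDeriv_apply (F G : MvPolynomial σ R) (z i : σ) :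
    tangentialDeriv F z i G = pderiv z F * pderiv i G - pderiv i F * pderiv z G := rfl

lemma tangentialDeriv_self (F : MvPolynomial σ R) (z i : σ) : tangentialDeriv F z i F = 0 := by
  rw [tangentialDeriv_apply, mul_comm, sub_self]

/-- On the surface `F = 0`, seen as the graph of `z` as a function of the other coordinates, this
is `-(∂F/∂z) ^ 3` times the second derivative of `z` along the coordinates `i` and `j`. -/
noncomputable def secondForm (F : MvPolynomial σ R) (z i j : σ) : MvPolynomial σ R :=
  pderiv z F * pderiv z F * pderiv i (pderiv j F) - pderiv z F * pderiv i F * pderiv z (pderiv j F)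
    - pderiv z F * pderiv j F * pderiv z (pderiv i F)
    + pderiv i F * pderiv j F * pderiv z (pderiv z F)

lemma secondForm_comm (F : MvPolynomial σ R) (z i j : σ) :
    secondForm F z i j = secondForm F z j i := by
  rw [secondForm, secondForm, pderiv_comm i j]
  ring

lemma totalDegree_secondForm_le (F : MvPolynomial σ R) (z i j : σ) :
    (secondForm F z i j).totalDegree ≤ 3 * F.totalDegree := by
  have h₁ (k : σ) : (pderiv k F).totalDegree ≤ F.totalDegree :=
    (totalDegree_pderiv_le k F).trans (Nat.sub_le _ _)
  have h₂ (k l : σ) : (pderiv k (pderiv l F)).totalDegree ≤ F.totalDegree :=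
    (totalDegree_pderiv_le k _).trans ((Nat.sub_le _ _).trans (h₁ l))
  have hmul {A B G : MvPolynomial σ R} (hA : A.totalDegree ≤ F.totalDegree)
      (hB : B.totalDegree ≤ F.totalDegree) (hG : G.totalDegree ≤ F.totalDegree) :
      (A * B * G).totalDegree ≤ 3 * F.totalDegree := by
    have := totalDegree_mul (A * B) G
    have := totalDegree_mul A B
    omega
  refine (totalDegree_add _ _).trans (max_le ((totalDegree_sub _ _).trans (max_le
    ((totalDegree_sub _ _).trans (max_le ?_ ?_)) ?_)) ?_)
  all_goals exact hmul (h₁ _) (h₁ _) (h₂ _ _)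

/-- The Codazzi equation: the third derivatives of the graph are symmetric. -/
lemma secondForm_codazzi (F : MvPolynomial σ R) (z i j k : σ) :
    pderiv z F * tangentialDeriv F z k (secondForm F z i j)
        - 3 * secondForm F z i j * tangentialDeriv F z k (pderiv z F)
      = pderiv z F * tangentialDeriv F z i (secondForm F z k j)
        - 3 * secondForm F z k j * tangentialDeriv F z i (pderiv z F) := by
  simp only [tangentialDeriv_apply, secondForm, map_add, map_sub, Derivation.leibniz, smul_eq_mul,
    pderiv_comm i z, pderiv_comm k z, pderiv_comm k i, pderiv_comm k j]
  ring

lemma tangentialDeriv_tangentialDeriv_X_sub (F b : MvPolynomial σ R) {z i j : σ}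
    (hj : z ≠ j) (hb : pderiv z b = 0) :
    pderiv z F * tangentialDeriv F z i (tangentialDeriv F z j (X z - b))
      = tangentialDeriv F z i (pderiv z F) * tangentialDeriv F z j (X z - b)
        - (secondForm F z i j + pderiv z F ^ 3 * pderiv i (pderiv j b)) := by
  simp only [tangentialDeriv_apply, secondForm, map_sub, Derivation.leibniz, smul_eq_mul,
    pderiv_X_self, pderiv_X_of_ne hj, hb, pderiv_comm z j b, pderiv_one,
    map_zero, pderiv_comm i z]
  ring

/-- The ideal of functions on which the surface `F = 0` and the graph `z = b` agree to infinite
order, when both have vanishing second derivatives along `i` and along `j`: besides `F` and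
`z - b` it contains the discrepancies of the tangent planes and of the mixed second
derivatives. -/
noncomputable def osculatingIdeal (F b : MvPolynomial σ R) (z i j : σ) :
    Ideal (MvPolynomial σ R) :=
  saturation (Ideal.span {F, X z - b, tangentialDeriv F z i (X z - b),
    tangentialDeriv F z j (X z - b), secondForm F z i j + pderiv z F ^ 3 * pderiv i (pderiv j b)})
    (pderiv z F)

lemma osculatingIdeal_comm (F b : MvPolynomial σ R) (z i j : σ) :
    osculatingIdeal F b z i j = osculatingIdeal F b z j i := by
  rw [osculatingIdeal, osculatingIdeal, secondForm_comm F z i j, pderiv_comm i j b,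
    Set.insert_comm (tangentialDeriv F z i _)]

lemma tangentialDeriv_mem_osculatingIdeal {F b : MvPolynomial σ R} {z i j : σ} (hi : z ≠ i)
    (hj : z ≠ j) (hb : pderiv z b = 0) (hbi : pderiv i (pderiv i b) = 0)
    (hF : F ∣ secondForm F z i i) {q : MvPolynomial σ R}
    (hq : q ∈ osculatingIdeal F b z i j) :
    tangentialDeriv F z i q ∈ osculatingIdeal F b z i j := by
  set I := osculatingIdeal F b z i j with hI
  have hmem {g : MvPolynomial σ R} (hg : g ∈ ({F, X z - b, tangentialDeriv F z i (X z - b),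
      tangentialDeriv F z j (X z - b),
      secondForm F z i j + pderiv z F ^ 3 * pderiv i (pderiv j b)} : Set (MvPolynomial σ R))) :
      g ∈ I :=
    le_saturation _ _ (Ideal.subset_span hg)
  have hcancel {g : MvPolynomial σ R} (hg : pderiv z F * g ∈ I) : g ∈ I :=
    mem_saturation_of_pow_mul_mem 1 (by rwa [pow_one])
  refine derivation_mem_saturation _ (fun g hg => ?_) hq
  rw [← osculatingIdeal, ← hI]
  rcases hg with rfl | rfl | rfl | rfl | rfl
  · rw [tangentialDeriv_self]
    exact I.zero_mem
  · exact hmem (by simp)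
  · refine hcancel ?_
    rw [tangentialDeriv_tangentialDeriv_X_sub F b hi hb, hbi, mul_zero, add_zero]
    exact I.sub_mem (I.mul_mem_left _ (hmem (by simp))) (I.mem_of_dvd hF (hmem (by simp)))
  · refine hcancel ?_
    rw [tangentialDeriv_tangentialDeriv_X_sub F b hj hb]
    exact I.sub_mem (I.mul_mem_left _ (hmem (by simp))) (hmem (by simp))
  · refine hcancel ?_
    obtain ⟨t, ht⟩ := hF
    have hbij : tangentialDeriv F z i (pderiv i (pderiv j b)) = 0 := by
      rw [tangentialDeriv_apply, pderiv_comm i j b, pderiv_comm i j, hbi, map_zero,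
        pderiv_comm z j, pderiv_comm z i, hb, map_zero, map_zero, mul_zero, mul_zero, sub_zero]
    have hcodazzi := secondForm_codazzi F z j i i
    rw [ht, Derivation.leibniz, tangentialDeriv_self, secondForm_comm F z j i] at hcodazzi
    have hderiv : pderiv z F * tangentialDeriv F z i
          (secondForm F z i j + pderiv z F ^ 3 * pderiv i (pderiv j b))
        = 3 * tangentialDeriv F z i (pderiv z F)
            * (secondForm F z i j + pderiv z F ^ 3 * pderiv i (pderiv j b))
          + (pderiv z F * tangentialDeriv F z j t - 3 * t * tangentialDeriv F z j (pderiv z F))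
            * F := by
      rw [map_add, Derivation.leibniz, Derivation.leibniz_pow, hbij]
      simp only [smul_eq_mul, nsmul_eq_mul, Nat.cast_ofNat] at hcodazzi ⊢
      linear_combination hcodazzi
    rw [hderiv]
    exact I.add_mem (I.mul_mem_left _ (hmem (by simp))) (I.mul_mem_left _ (hmem (by simp)))

lemma pderiv_mem_osculatingIdeal {F b : MvPolynomial σ R} {z i j : σ} (hi : z ≠ i) (hj : z ≠ j)
    (hb : pderiv z b = 0) (hbi : pderiv i (pderiv i b) = 0) (hF : F ∣ secondForm F z i i)
    {q : MvPolynomial σ R} (hq : q ∈ osculatingIdeal F b z i j) (hqz : pderiv z q = 0) :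
    pderiv i q ∈ osculatingIdeal F b z i j := by
  have h := tangentialDeriv_mem_osculatingIdeal hi hj hb hbi hF hq
  rw [tangentialDeriv_apply, hqz, mul_zero, sub_zero] at h
  exact mem_saturation_of_pow_mul_mem 1 (by rwa [pow_one])

end SecondForm

/-! ### Doubly ruled surfaces -/

section GraphSubstitution

open MvPolynomial

variable {σ R : Type*} [CommRing R] [DecidableEq σ] {z : σ} {b : MvPolynomial σ R}

lemma X_sub_dvd_sub_aeval_update (F : MvPolynomial σ R) :
    X z - b ∣ F - aeval (Function.update X z b) F := by
  have hquot : (Ideal.Quotient.mkₐ R (Ideal.span {X z - b})).comp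
      (aeval (Function.update X z b)) = Ideal.Quotient.mkₐ R (Ideal.span {X z - b}) := by
    refine algHom_ext fun k => ?_
    rw [AlgHom.comp_apply, aeval_X]
    obtain rfl | hk := eq_or_ne k z
    · rw [Function.update_self]
      refine (Ideal.Quotient.eq.2 ?_).symm
      exact Ideal.mem_span_singleton_self _
    · rw [Function.update_of_ne hk]
  exact Ideal.mem_span_singleton.1 (Ideal.Quotient.eq.1 (DFunLike.congr_fun hquot F).symm)

lemma pderiv_aeval_update_eq_zero (hb : pderiv z b = 0) (F : MvPolynomial σ R) :
    pderiv z (aeval (Function.update X z b) F) = 0 := by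
  induction F using MvPolynomial.induction_on with
  | C r => rw [aeval_C, algebraMap_eq, pderiv_C]
  | add F G hF hG => rw [map_add, map_add, hF, hG, add_zero]
  | mul_X F k hF =>
    rw [map_mul, Derivation.leibniz, hF, smul_zero, add_zero, aeval_X]
    obtain rfl | hk := eq_or_ne k z
    · rw [Function.update_self, hb, smul_zero]
    · rw [Function.update_of_ne hk, pderiv_X_of_ne hk, smul_zero]

end GraphSubstitution

section Bilinear

open MvPolynomial
open scoped Nat

variable {K : Type*} [Field K]

/-- The bilinear polynomial with coefficient matrix `M` in the variables `X 1` and `X 2`. The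
surface `X 0 = bilinear M` is doubly ruled, by lines along the first and along the second
coordinate. -/
noncomputable def bilinear (M : Matrix (Fin 2) (Fin 2) K) : MvPolynomial (Fin 3) K :=
  ∑ i : Fin 2, ∑ j : Fin 2, C (M i j) * (X 1 ^ (i : ℕ) * X 2 ^ (j : ℕ))

section

variable (M : Matrix (Fin 2) (Fin 2) K)

lemma bilinear_eq :
    bilinear M = C (M 0 0) + C (M 0 1) * X 2 + C (M 1 0) * X 1 + C (M 1 1) * (X 1 * X 2) := by
  simp only [bilinear, Fin.sum_univ_two, Fin.val_zero, Fin.val_one, pow_zero, pow_one, mul_one,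
    one_mul, add_assoc]

lemma pderiv_zero_bilinear : pderiv 0 (bilinear M) = 0 := by
  simp [bilinear_eq, pderiv_X]

lemma pderiv_one_bilinear : pderiv 1 (bilinear M) = C (M 1 0) + C (M 1 1) * X 2 := by
  simp [bilinear_eq, pderiv_X]

lemma pderiv_two_bilinear : pderiv 2 (bilinear M) = C (M 0 1) + C (M 1 1) * X 1 := by
  simp [bilinear_eq, pderiv_X]

lemma totalDegree_bilinear_le : (bilinear M).totalDegree ≤ 2 :=
  totalDegree_finsetSum_le fun i _ => totalDegree_finsetSum_le fun j _ => by
    calc _ ≤ (C (M i j) : MvPolynomial (Fin 3) K).totalDegree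
          + ((X 1 ^ (i : ℕ) : MvPolynomial (Fin 3) K).totalDegree
            + (X 2 ^ (j : ℕ) : MvPolynomial (Fin 3) K).totalDegree) :=
          (totalDegree_mul _ _).trans (Nat.add_le_add_left (totalDegree_mul _ _) _)
      _ ≤ 2 := by
        rw [totalDegree_C, totalDegree_X_pow, totalDegree_X_pow]
        omega

end

lemma exists_bilinear_of_jet (x : Fin 3 → K) (a₁ a₂ c : K) : ∃ M : Matrix (Fin 2) (Fin 2) K,
    eval x (bilinear M) = x 0 ∧ eval x (pderiv 1 (bilinear M)) = a₁ ∧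
      eval x (pderiv 2 (bilinear M)) = a₂ ∧ pderiv 1 (pderiv 2 (bilinear M)) = C c := by
  refine ⟨!![x 0 - a₁ * x 1 - a₂ * x 2 + c * x 1 * x 2, a₂ - c * x 1; a₁ - c * x 2, c], ?_⟩
  rw [pderiv_one_bilinear, pderiv_two_bilinear, bilinear_eq]
  refine ⟨?_, ?_, ?_, ?_⟩
  · simp only [Matrix.of_apply, Matrix.cons_val', Matrix.cons_val_zero, Matrix.cons_val_one,
      Matrix.cons_val_fin_one, map_add, map_mul, eval_C, eval_X]
    ring
  · simp
  · simp
  · simp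

lemma osculatingIdeal_le_ker_eval {F b : MvPolynomial (Fin 3) K} {x : Fin 3 → K}
    (hF : eval x F = 0) (hz : eval x (pderiv 0 F) ≠ 0) (hb : pderiv 0 b = 0)
    (hbx : eval x b = x 0)
    (h₁ : eval x (pderiv 1 b) = -eval x (pderiv 1 F) / eval x (pderiv 0 F))
    (h₂ : eval x (pderiv 2 b) = -eval x (pderiv 2 F) / eval x (pderiv 0 F))
    (h₁₂ : eval x (pderiv 1 (pderiv 2 b))
      = -eval x (secondForm F 0 1 2) / eval x (pderiv 0 F) ^ 3) :
    osculatingIdeal F b 0 1 2 ≤ RingHom.ker (eval x) := by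
  refine saturation_le_ker _ (Ideal.span_le.2 ?_) hz
  rintro g (rfl | rfl | rfl | rfl | rfl)
  · exact hF
  · simp [hbx]
  · simp only [SetLike.mem_coe, RingHom.mem_ker, tangentialDeriv_apply, map_sub, map_mul, map_zero,
      pderiv_X_self, pderiv_X_of_ne (show (0 : Fin 3) ≠ 1 by decide), map_one, hb, h₁]
    field_simp
    ring
  · simp only [SetLike.mem_coe, RingHom.mem_ker, tangentialDeriv_apply, map_sub, map_mul, map_zero,
      pderiv_X_self, pderiv_X_of_ne (show (0 : Fin 3) ≠ 2 by decide), map_one, hb, h₂]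
    field_simp
    ring
  · simp only [SetLike.mem_coe, RingHom.mem_ker, map_add, map_mul, map_pow, h₁₂]
    field_simp
    ring

/-- A surface both of whose rulings along the first and the second coordinate osculate it to
second order at every point agrees to infinite order with the bilinear surface that has the same
mixed second jet at a smooth point. -/
theorem exists_X_sub_bilinear_dvd {F : MvPolynomial (Fin 3) K} {x : Fin 3 → K}
    (hF : eval x F = 0) (hz : eval x (pderiv 0 F) ≠ 0) (h₁ : F ∣ secondForm F 0 1 1)
    (h₂ : F ∣ secondForm F 0 2 2) (hchar : ((2 * F.totalDegree)! : K) ≠ 0) :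
    ∃ M : Matrix (Fin 2) (Fin 2) K, X 0 - bilinear M ∣ F := by
  obtain ⟨M, hM, hM₁, hM₂, hM₁₂⟩ := exists_bilinear_of_jet x
    (-eval x (pderiv 1 F) / eval x (pderiv 0 F)) (-eval x (pderiv 2 F) / eval x (pderiv 0 F))
    (-eval x (secondForm F 0 1 2) / eval x (pderiv 0 F) ^ 3)
  set b := bilinear M with hb_def
  set I := osculatingIdeal F b 0 1 2 with hI
  have hb : pderiv 0 b = 0 := pderiv_zero_bilinear M
  have hIx : I ≤ RingHom.ker (eval x) :=
    osculatingIdeal_le_ker_eval hF hz hb hM hM₁ hM₂ (by rw [hM₁₂, eval_C])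
  have hclosed : ∀ q ∈ I, pderiv 0 q = 0 → ∀ i, pderiv i q ∈ I := by
    intro q hq hq0 i
    fin_cases i
    · exact hq0 ▸ I.zero_mem
    · refine pderiv_mem_osculatingIdeal (by decide) (by decide) hb ?_ h₁ hq hq0
      simp [hb_def, pderiv_one_bilinear, pderiv_X]
    · rw [hI, osculatingIdeal_comm] at hq ⊢
      refine pderiv_mem_osculatingIdeal (by decide) (by decide) hb ?_ h₂ hq hq0
      simp [hb_def, pderiv_two_bilinear, pderiv_X]
  set G := aeval (Function.update X 0 b) F
  have hdvd : X 0 - b ∣ F - G := X_sub_dvd_sub_aeval_update F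
  have hGI : G ∈ I := by
    rw [← sub_sub_cancel F G]
    exact I.sub_mem (le_saturation _ _ (Ideal.subset_span (by simp)))
      (I.mem_of_dvd hdvd (le_saturation _ _ (Ideal.subset_span (by simp))))
  have hGdeg : G.totalDegree ≤ 2 * F.totalDegree := by
    refine totalDegree_aeval_le _ (fun i => ?_) F
    fin_cases i
    · exact totalDegree_bilinear_le M
    · exact (totalDegree_X 1).trans_le one_le_two
    · exact (totalDegree_X 2).trans_le one_le_two
  have hG0 : G = 0 := by
    refine eq_zero_of_pderiv_closed (x := x) (S := {q | q ∈ I ∧ pderiv 0 q = 0})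
      (fun q hq => hIx hq.1) (fun q hq i => ⟨hclosed q hq.1 hq.2 i, ?_⟩)
      ⟨hGI, pderiv_aeval_update_eq_zero hb F⟩ fun h => hchar ?_
    · rw [pderiv_comm, hq.2, map_zero]
    · exact zero_dvd_iff.1 (h ▸ Nat.cast_dvd_cast (Nat.factorial_dvd_factorial hGdeg))
  exact ⟨M, by rwa [hG0, sub_zero] at hdvd⟩

end Bilinear

/-! ### Lines along the coordinate axes -/

section AxisLine

open MvPolynomial

/-- A line of the form `z = slope * t + intercept`, `x i = t`, `x j = pos` in the space with
coordinates `(z, x 1, x 2)`, where `{i, j} = {1, 2}`. The axis `i` is not part of the data: the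
same triple stands for one line along each of the two axes. -/
structure AxisLine (K : Type*) where
  /-- the coefficient of the parameter in the coordinate `z` -/
  slope : K
  /-- the value of the coordinate that is constant on the line -/
  pos : K
  /-- the constant term of the coordinate `z` -/
  intercept : K

namespace AxisLine

variable {K : Type*} [Field K]

/-- The line `P` along the first axis meets the line `Q` along the second axis. -/
def Meets (P Q : AxisLine K) : Prop :=
  P.slope * Q.pos + P.intercept = Q.slope * P.pos + Q.intercept

/-- The line `P` along the first axis lies on the surface `z = bilinear M`. For a line along the
second axis one has to replace `M` by its transpose. -/
def LiesOn (P : AxisLine K) (M : Matrix (Fin 2) (Fin 2) K) : Prop :=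
  P.slope = M 1 0 + M 1 1 * P.pos ∧ P.intercept = M 0 0 + M 0 1 * P.pos

/-- The point with parameter `t` on the line `P` along the axis `i`. -/
def point (P : AxisLine K) (i : Fin 3) (t : K) (k : Fin 3) : K :=
  if k = 0 then P.slope * t + P.intercept else if k = i then t else P.pos

/-- The restriction of a polynomial function to the line `P` along the axis `i`. -/
noncomputable def restrict (P : AxisLine K) (i : Fin 3) :
    MvPolynomial (Fin 3) K →ₐ[K] Polynomial K :=
  aeval fun k => if k = 0 then .C P.slope * .X + .C P.intercept else if k = i then .X else .C P.pos

variable (P Q : AxisLine K) (i : Fin 3) (F : MvPolynomial (Fin 3) K)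

lemma eval_restrict (t : K) : (P.restrict i F).eval t = eval (P.point i t) F := by
  have hhom : (Polynomial.aeval t).comp (P.restrict i) = aeval (P.point i t) := by
    refine algHom_ext fun k => ?_
    simp only [restrict, point, AlgHom.comp_apply, aeval_X]
    split_ifs <;> simp
  rw [← Polynomial.coe_aeval_eq_eval, ← aeval_eq_eval]
  exact DFunLike.congr_fun hhom F

variable {P Q} in
lemma Meets.point_eq (h : P.Meets Q) : P.point 1 Q.pos = Q.point 2 P.pos := by
  funext k
  fin_cases k
  · exact h
  · simp [point]
  · simp [point]

variable {i} in
lemma derivative_restrict (hi : i ≠ 0) :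
    (P.restrict i F).derivative
      = .C P.slope * P.restrict i (pderiv 0 F) + P.restrict i (pderiv i F) := by
  induction F using MvPolynomial.induction_on with
  | C r => simp [restrict]
  | add F G hF hG => simp only [map_add, hF, hG]; ring
  | mul_X F k hF =>
    rw [map_mul, Polynomial.derivative_mul, hF]
    simp only [Derivation.leibniz, map_add, smul_eq_mul, map_mul]
    have hX : (P.restrict i (X k)).derivative
        = .C P.slope * P.restrict i (pderiv 0 (X k)) + P.restrict i (pderiv i (X k)) := by
      simp only [restrict, pderiv_X, Pi.single_apply, aeval_X]
      split_ifs <;> simp_all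
    rw [hX]
    ring

lemma natDegree_restrict_le : (P.restrict i F).natDegree ≤ F.totalDegree := by
  refine (aeval_natDegree_le F le_rfl _ (n := 1) fun k => ?_).trans_eq (mul_one _)
  split_ifs
  · exact Polynomial.natDegree_linear_le
  · exact Polynomial.natDegree_X_le
  · exact (Polynomial.natDegree_C _).trans_le zero_le_one

variable {P i F} in
/-- A line contained in the surface `F = 0` is an asymptotic curve of it. -/
lemma restrict_secondForm (hi : i ≠ 0) (h : P.restrict i F = 0) :
    P.restrict i (secondForm F 0 i i) = 0 := by
  have h₁ : Polynomial.C P.slope * P.restrict i (pderiv 0 F) + P.restrict i (pderiv i F) = 0 := by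
    rw [← derivative_restrict P F hi, h, Polynomial.derivative_zero]
  have h₂ := congrArg Polynomial.derivative h₁
  rw [Polynomial.derivative_add, Polynomial.derivative_C_mul, derivative_restrict P _ hi,
    derivative_restrict P _ hi, Polynomial.derivative_zero, pderiv_comm i 0] at h₂
  simp only [secondForm, map_add, map_sub, map_mul]
  rw [eq_neg_of_add_eq_zero_right h₁]
  linear_combination (P.restrict i (pderiv 0 F)) ^ 2 * h₂

variable {P Q} in
lemma eval_restrict_of_meets (h : P.Meets Q) :
    (P.restrict 1 F).eval Q.pos = (Q.restrict 2 F).eval P.pos := by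
  rw [eval_restrict, eval_restrict, h.point_eq]

lemma liesOn_of_restrict_eq_zero {M : Matrix (Fin 2) (Fin 2) K}
    (h : P.restrict 1 (X 0 - bilinear M) = 0) : P.LiesOn M := by
  have hlinear : Polynomial.C (P.slope - (M 1 0 + M 1 1 * P.pos)) * Polynomial.X
      + Polynomial.C (P.intercept - (M 0 0 + M 0 1 * P.pos)) = 0 := by
    rw [← h]
    simp only [restrict, bilinear_eq, map_sub, map_add, map_mul, aeval_X, algHom_C, reduceIte,
      Polynomial.algebraMap_eq, Fin.reduceEq, one_ne_zero]
    ring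
  exact ⟨sub_eq_zero.1 (by simpa using congrArg (Polynomial.coeff · 1) hlinear),
    sub_eq_zero.1 (by simpa using congrArg (Polynomial.coeff · 0) hlinear)⟩

lemma liesOn_transpose_of_restrict_eq_zero {M : Matrix (Fin 2) (Fin 2) K}
    (h : P.restrict 2 (X 0 - bilinear M) = 0) : P.LiesOn M.transpose := by
  have hlinear : Polynomial.C (P.slope - (M 0 1 + M 1 1 * P.pos)) * Polynomial.X
      + Polynomial.C (P.intercept - (M 0 0 + M 1 0 * P.pos)) = 0 := by
    rw [← h]
    simp only [restrict, bilinear_eq, map_sub, map_add, map_mul, aeval_X, algHom_C, reduceIte,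
      Polynomial.algebraMap_eq, Fin.reduceEq, one_ne_zero]
    ring
  exact ⟨sub_eq_zero.1 (by simpa using congrArg (Polynomial.coeff · 1) hlinear),
    sub_eq_zero.1 (by simpa using congrArg (Polynomial.coeff · 0) hlinear)⟩

end AxisLine

end AxisLine

/-! ### Elimination of a variable -/

section Elimination

open MvPolynomial
open scoped Nat

variable {R K : Type*} [CommRing R] [Field K] {n : ℕ}

lemma totalDegree_det_le {ι σ : Type*} [Fintype ι] [DecidableEq ι]
    (M : Matrix ι ι (MvPolynomial σ R)) {d : ℕ} (hM : ∀ i j, (M i j).totalDegree ≤ d) :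
    M.det.totalDegree ≤ Fintype.card ι * d := by
  rw [Matrix.det_apply]
  refine totalDegree_finsetSum_le fun s _ => (totalDegree_smul_le _ _).trans ?_
  refine (totalDegree_finsetProd _ _).trans ((Finset.sum_le_sum fun i _ => hM _ _).trans ?_)
  simp

lemma totalDegree_resultant_le {σ : Type*} (f g : Polynomial (MvPolynomial σ R)) {d : ℕ}
    (hf : ∀ i, (f.coeff i).totalDegree ≤ d) (hg : ∀ i, (g.coeff i).totalDegree ≤ d) :
    (f.resultant g).totalDegree ≤ (f.natDegree + g.natDegree) * d := by
  refine (totalDegree_det_le _ fun i j => ?_).trans_eq (by rw [Fintype.card_fin])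
  rw [Polynomial.sylvester, Matrix.of_apply]
  induction j using Fin.addCases with
  | left j =>
    rw [Fin.addCases_left]
    split_ifs
    · exact hg _
    · simp
  | right j =>
    rw [Fin.addCases_right]
    split_ifs
    · exact hf _
    · simp

lemma resultant_ne_zero_of_irreducible {A : Type*} [CommRing A] [IsDomain A] [IsGCDMonoid A]
    {f g : Polynomial A} (hf : Irreducible f) (hdeg : f.natDegree ≠ 0) (hfg : ¬ f ∣ g) :
    f.resultant g ≠ 0 := by
  let L := FractionRing A
  have hinj := IsFractionRing.injective A L
  have hprim : f.IsPrimitive := hf.isPrimitive hdeg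
  have hirr : Irreducible (f.map (algebraMap A L)) :=
    hprim.irreducible_iff_irreducible_map_fraction_map.1 hf
  have hcoprime : IsCoprime (f.map (algebraMap A L)) (g.map (algebraMap A L)) :=
    hirr.coprime_iff_not_dvd.2 fun h => hfg (hprim.dvd_of_fraction_map_dvd_fraction_map h)
  intro h0
  refine (Polynomial.resultant_eq_zero_iff.1 ?_).2 hcoprime
  rw [Polynomial.natDegree_map_eq_of_injective hinj, Polynomial.natDegree_map_eq_of_injective hinj,
    Polynomial.resultant_map_map, h0, map_zero]

lemma finSuccEquiv_rename_succ (F : MvPolynomial (Fin n) R) :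
    finSuccEquiv R n (rename Fin.succ F) = Polynomial.C F := by
  induction F using MvPolynomial.induction_on with
  | C r => simp [finSuccEquiv_apply]
  | add F G hF hG => simp only [map_add, hF, hG]
  | mul_X F i hF => rw [map_mul, map_mul, hF, rename_X, finSuccEquiv_X_succ, map_mul]

lemma totalDegree_coeff_finSuccEquiv_le (F : MvPolynomial (Fin (n + 1)) R) (i : ℕ) :
    ((finSuccEquiv R n F).coeff i).totalDegree ≤ F.totalDegree := by
  by_cases h : (finSuccEquiv R n F).coeff i = 0
  · rw [h, totalDegree_zero]
    exact Nat.zero_le _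
  · exact (Nat.le_add_right _ _).trans (totalDegree_coeff_finSuccEquiv_add_le F i h)

lemma exists_eq_rename_succ_of_degreeOf_eq_zero {F : MvPolynomial (Fin (n + 1)) R}
    (hF : degreeOf 0 F = 0) :
    ∃ G : MvPolynomial (Fin n) R, G.totalDegree ≤ F.totalDegree ∧ rename Fin.succ G = F := by
  rw [← natDegree_finSuccEquiv, Polynomial.natDegree_eq_zero] at hF
  obtain ⟨G, hG⟩ := hF
  refine ⟨G, ?_, (finSuccEquiv R n).injective ((finSuccEquiv_rename_succ G).trans hG)⟩
  simpa [← hG] using totalDegree_coeff_finSuccEquiv_le F 0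

/-- The resultant with respect to the first variable. -/
lemma exists_rename_succ_mem_span_pair {F G : MvPolynomial (Fin (n + 1)) K} (hF : Irreducible F)
    (hFG : ¬ F ∣ G) {d e : ℕ} (hFd : F.totalDegree ≤ d) (hde : d ≤ e) (hGe : G.totalDegree ≤ e) :
    ∃ H : MvPolynomial (Fin n) K, H ≠ 0 ∧ H.totalDegree ≤ (d + e) * e ∧
      rename Fin.succ H ∈ Ideal.span {F, G} := by
  by_cases hdeg : (finSuccEquiv K n F).natDegree = 0
  · obtain ⟨H, hH, hHF⟩ :=
      exists_eq_rename_succ_of_degreeOf_eq_zero ((natDegree_finSuccEquiv F).symm.trans hdeg)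
    refine ⟨H, ?_, ?_, hHF ▸ Ideal.subset_span (Set.mem_insert _ _)⟩
    · rintro rfl
      exact hF.ne_zero (hHF.symm.trans (map_zero _))
    · calc H.totalDegree ≤ e := hH.trans (hFd.trans hde)
        _ ≤ e * e := Nat.le_mul_self e
        _ ≤ (d + e) * e := Nat.mul_le_mul_right _ (Nat.le_add_left e d)
  · have hirr : Irreducible (finSuccEquiv K n F) := (MulEquiv.irreducible_iff _).2 hF
    have hndvd : ¬ finSuccEquiv K n F ∣ finSuccEquiv K n G := by rwa [map_dvd_iff]
    have hdegF : (finSuccEquiv K n F).natDegree ≤ d :=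
      (natDegree_finSuccEquiv F).trans_le ((degreeOf_le_totalDegree F 0).trans hFd)
    have hdegG : (finSuccEquiv K n G).natDegree ≤ e :=
      (natDegree_finSuccEquiv G).trans_le ((degreeOf_le_totalDegree G 0).trans hGe)
    refine ⟨_, resultant_ne_zero_of_irreducible hirr hdeg hndvd, ?_, ?_⟩
    · refine (totalDegree_resultant_le _ _ (d := e) (fun i => ?_) fun i => ?_).trans ?_
      · exact (totalDegree_coeff_finSuccEquiv_le F i).trans (hFd.trans hde)
      · exact (totalDegree_coeff_finSuccEquiv_le G i).trans hGe
      · gcongr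
    · obtain ⟨a, b, -, -, hab⟩ := Polynomial.exists_mul_add_mul_eq_C_resultant
        (finSuccEquiv K n F) (finSuccEquiv K n G) le_rfl le_rfl (Or.inl hdeg)
      refine Ideal.mem_span_pair.2 ⟨(finSuccEquiv K n).symm a, (finSuccEquiv K n).symm b,
        (finSuccEquiv K n).injective ?_⟩
      rw [finSuccEquiv_rename_succ, ← hab]
      simp only [map_add, map_mul, AlgEquiv.apply_symm_apply, mul_comm]

/-- The positions of the lines are zeros of `H` as a polynomial in its first variable. -/
lemma card_le_totalDegree_of_restrict_rename_eq_zero [Infinite K] {H : MvPolynomial (Fin 2) K}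
    (hH : H ≠ 0) {S : Finset (AxisLine K)} (hpos : Set.InjOn AxisLine.pos (S : Set (AxisLine K)))
    (hS : ∀ Q ∈ S, Q.restrict 2 (rename Fin.succ H) = 0) : S.card ≤ H.totalDegree := by
  classical
  have hinj : Set.InjOn (fun Q : AxisLine K => (C Q.pos : MvPolynomial (Fin 1) K)) S :=
    fun P hP Q hQ h => hpos hP hQ (C_injective _ _ h)
  rw [← Finset.card_image_of_injOn hinj]
  refine (Polynomial.card_le_degree_of_subset_roots fun c hc => ?_).trans
    ((natDegree_finSuccEquiv H).trans_le (degreeOf_le_totalDegree H 0))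
  obtain ⟨Q, hQ, rfl⟩ := Finset.mem_image.1 (Finset.mem_def.2 hc)
  rw [Polynomial.mem_roots ((map_ne_zero_iff _ (finSuccEquiv K 1).injective).2 hH),
    Polynomial.IsRoot]
  refine MvPolynomial.funext fun x => ?_
  rw [eval_polynomial_eval_finSuccEquiv, eval_C, map_zero]
  have hpoint : Q.point 2 (x 0) ∘ Fin.succ = fun i => Fin.cases Q.pos x i := by
    funext i
    fin_cases i <;> rfl
  rw [← hpoint, ← eval_rename, ← AxisLine.eval_restrict, hS Q hQ, Polynomial.eval_zero]

lemma card_le_of_restrict_eq_zero [Infinite K] {F G : MvPolynomial (Fin 3) K} (hF : Irreducible F)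
    (hFG : ¬ F ∣ G) (hG : G.totalDegree ≤ 3 * F.totalDegree) {S : Finset (AxisLine K)}
    (hpos : Set.InjOn AxisLine.pos (S : Set (AxisLine K)))
    (hS : ∀ Q ∈ S, Q.restrict 2 F = 0 ∧ Q.restrict 2 G = 0) :
    S.card ≤ 12 * F.totalDegree ^ 2 := by
  obtain ⟨H, hH, hdeg, hmem⟩ :=
    exists_rename_succ_mem_span_pair hF hFG le_rfl (Nat.le_mul_of_pos_left _ three_pos) hG
  obtain ⟨a, b, hab⟩ := Ideal.mem_span_pair.1 hmem
  refine (card_le_totalDegree_of_restrict_rename_eq_zero hH hpos fun Q hQ => ?_).trans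
    (hdeg.trans_eq (by ring))
  rw [← hab, map_add, map_mul, map_mul, (hS Q hQ).1, (hS Q hQ).2, mul_zero, mul_zero, add_zero]

lemma card_le_of_restrict_eq_zero_of_pderiv_eq_zero [Infinite K] {F : MvPolynomial (Fin 3) K}
    (hF : F ≠ 0) (hchar : (F.totalDegree ! : K) ≠ 0) (hz : pderiv 0 F = 0)
    {S : Finset (AxisLine K)} (hpos : Set.InjOn AxisLine.pos (S : Set (AxisLine K)))
    (hS : ∀ Q ∈ S, Q.restrict 2 F = 0) : S.card ≤ F.totalDegree := by
  obtain ⟨H, hdeg, rfl⟩ :=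
    exists_eq_rename_succ_of_degreeOf_eq_zero (degreeOf_eq_zero_of_pderiv_eq_zero hchar hz)
  refine (card_le_totalDegree_of_restrict_rename_eq_zero ?_ hpos hS).trans hdeg
  rintro rfl
  exact hF (map_zero _)

end Elimination

/-! ### Lines on a surface -/

section ResidualLines

open MvPolynomial
open scoped Nat

variable {K : Type*} [Field K] {PS QS : Finset (AxisLine K)}
  {ℬ : Finset (Matrix (Fin 2) (Fin 2) K)} {F G : MvPolynomial (Fin 3) K} {Q : AxisLine K}

lemma totalDegree_pos_of_irreducible {σ : Type*} {F : MvPolynomial σ K} (hF : Irreducible F) :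
    0 < F.totalDegree := by
  rw [Nat.pos_iff_ne_zero, Ne, totalDegree_eq_zero_iff_eq_C]
  intro hC
  have hcoeff : coeff 0 F ≠ 0 := fun h => hF.ne_zero (hC.trans (by rw [h, C_0]))
  exact hF.not_isUnit (hC ▸ (isUnit_iff_ne_zero.2 hcoeff).map C)

open Classical in
/-- The lines of `PS` that lie on the surface `F = 0` and meet `Q` in a way that is not explained
by a surface `z = bilinear M` with `M ∈ ℬ` containing both lines. -/
noncomputable def residualLines (PS : Finset (AxisLine K)) (ℬ : Finset (Matrix (Fin 2) (Fin 2) K))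
    (F : MvPolynomial (Fin 3) K) (Q : AxisLine K) : Finset (AxisLine K) :=
  {P ∈ PS | P.restrict 1 F = 0 ∧ P.Meets Q ∧ ∀ M ∈ ℬ, P.LiesOn M → ¬ Q.LiesOn M.transpose}

lemma mem_residualLines {P : AxisLine K} : P ∈ residualLines PS ℬ F Q ↔
    P ∈ PS ∧ P.restrict 1 F = 0 ∧ P.Meets Q ∧ ∀ M ∈ ℬ, P.LiesOn M → ¬ Q.LiesOn M.transpose := by
  simp only [residualLines, Finset.mem_filter]

lemma card_residualLines_le (hPS : Set.InjOn AxisLine.pos (PS : Set (AxisLine K)))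
    (hG : Q.restrict 2 G ≠ 0) (hFG : ∀ P : AxisLine K, P.restrict 1 F = 0 → P.restrict 1 G = 0) :
    (residualLines PS ℬ F Q).card ≤ G.totalDegree := by
  classical
  have hsub : residualLines PS ℬ F Q ⊆ PS := fun P hP => (mem_residualLines.1 hP).1
  rw [← Finset.card_image_of_injOn (hPS.mono (Finset.coe_subset.2 hsub))]
  refine (Polynomial.card_le_degree_of_subset_roots fun t ht => ?_).trans
    (Q.natDegree_restrict_le 2 G)
  obtain ⟨P, hP, rfl⟩ := Finset.mem_image.1 (Finset.mem_def.2 ht)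
  obtain ⟨-, hF, hmeets, -⟩ := mem_residualLines.1 hP
  rw [Polynomial.mem_roots hG, Polynomial.IsRoot, ← AxisLine.eval_restrict_of_meets G hmeets,
    hFG P hF, Polynomial.eval_zero]

/-- Up to a controlled set of exceptional lines of `QS` and a controlled set of surfaces
`z = bilinear M`, no line of `QS` meets many lines of `PS` on the surface `F = 0`. -/
def HasFewResidualLines (PS QS : Finset (AxisLine K)) (F : MvPolynomial (Fin 3) K) : Prop :=
  ∃ bad ⊆ QS, bad.card ≤ 12 * F.totalDegree ^ 2 ∧
    ∃ ℬ : Finset (Matrix (Fin 2) (Fin 2) K), ℬ.card ≤ F.totalDegree ∧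
      ∀ Q ∈ QS, Q ∉ bad → (residualLines PS ℬ F Q).card ≤ 3 * F.totalDegree

namespace HasFewResidualLines

lemma of_isUnit (hF : IsUnit F) : HasFewResidualLines PS QS F := by
  refine ⟨∅, Finset.empty_subset _, Nat.zero_le _, ∅, Nat.zero_le _, fun Q _ _ => ?_⟩
  refine (Finset.card_eq_zero.2 (Finset.eq_empty_of_forall_notMem fun P hP => ?_)).trans_le
    (Nat.zero_le _)
  exact (hF.map (P.restrict 1)).ne_zero (mem_residualLines.1 hP).2.1

lemma mul (hF₀ : F ≠ 0) (hG₀ : G ≠ 0) (hF : HasFewResidualLines PS QS F)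
    (hG : HasFewResidualLines PS QS G) : HasFewResidualLines PS QS (F * G) := by
  classical
  obtain ⟨badF, hbadF, hcardF, ℬF, hℬF, hfewF⟩ := hF
  obtain ⟨badG, hbadG, hcardG, ℬG, hℬG, hfewG⟩ := hG
  rw [HasFewResidualLines, totalDegree_mul_of_isDomain hF₀ hG₀]
  refine ⟨badF ∪ badG, Finset.union_subset hbadF hbadG,
    (Finset.card_union_le _ _).trans (by nlinarith), ℬF ∪ ℬG,
    (Finset.card_union_le _ _).trans (add_le_add hℬF hℬG), fun Q hQ hbad => ?_⟩
  rw [Finset.mem_union, not_or] at hbad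
  have hsub : residualLines PS (ℬF ∪ ℬG) (F * G) Q
      ⊆ residualLines PS ℬF F Q ∪ residualLines PS ℬG G Q := fun P hP => by
    obtain ⟨hP, hzero, hmeets, hlies⟩ := mem_residualLines.1 hP
    rw [Finset.mem_union, mem_residualLines, mem_residualLines]
    rcases mul_eq_zero.1 ((map_mul (P.restrict 1) F G).symm.trans hzero) with hzero | hzero
    · exact .inl ⟨hP, hzero, hmeets, fun M hM => hlies M (Finset.mem_union_left _ hM)⟩
    · exact .inr ⟨hP, hzero, hmeets, fun M hM => hlies M (Finset.mem_union_right _ hM)⟩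
  calc _ ≤ _ := (Finset.card_le_card hsub).trans (Finset.card_union_le _ _)
    _ ≤ 3 * F.totalDegree + 3 * G.totalDegree := add_le_add (hfewF Q hQ hbad.1) (hfewG Q hQ hbad.2)
    _ = _ := by ring

lemma of_restrict_eq_zero (hPS : Set.InjOn AxisLine.pos (PS : Set (AxisLine K)))
    {bad : Finset (AxisLine K)} (hbad : bad ⊆ QS) (hcard : bad.card ≤ 12 * F.totalDegree ^ 2)
    (hℬ : ℬ.card ≤ F.totalDegree) (hfew : ∀ Q ∈ QS, Q ∉ bad → Q.restrict 2 F = 0 →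
      (residualLines PS ℬ F Q).card ≤ 3 * F.totalDegree) :
    HasFewResidualLines PS QS F := by
  refine ⟨bad, hbad, hcard, ℬ, hℬ, fun Q hQ hQbad => ?_⟩
  by_cases hzero : Q.restrict 2 F = 0
  · exact hfew Q hQ hQbad hzero
  · exact (card_residualLines_le hPS hzero fun _ => id).trans (Nat.le_mul_of_pos_left _ three_pos)

lemma of_dvd_X_sub_bilinear (hPS : Set.InjOn AxisLine.pos (PS : Set (AxisLine K)))
    (hF : Irreducible F) {M : Matrix (Fin 2) (Fin 2) K} (hM : F ∣ X 0 - bilinear M) :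
    HasFewResidualLines PS QS F := by
  refine of_restrict_eq_zero hPS (Finset.empty_subset _) (Nat.zero_le _) (ℬ := {M})
    (totalDegree_pos_of_irreducible hF) fun Q _ _ hQ => ?_
  refine (Finset.card_eq_zero.2 (Finset.eq_empty_of_forall_notMem fun P hP => ?_)).trans_le
    (Nat.zero_le _)
  obtain ⟨-, hzero, -, hlies⟩ := mem_residualLines.1 hP
  have hdvd {i : Fin 3} {P : AxisLine K} (h : P.restrict i F = 0) :
      P.restrict i (X 0 - bilinear M) = 0 := zero_dvd_iff.1 (h ▸ map_dvd (P.restrict i) hM)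
  exact hlies M (Finset.mem_singleton_self M) (P.liesOn_of_restrict_eq_zero (hdvd hzero))
    (Q.liesOn_transpose_of_restrict_eq_zero (hdvd hQ))

variable [Infinite K]

lemma of_pderiv_eq_zero (hPS : Set.InjOn AxisLine.pos (PS : Set (AxisLine K)))
    (hQS : Set.InjOn AxisLine.pos (QS : Set (AxisLine K))) (hF : F ≠ 0)
    (hchar : (F.totalDegree ! : K) ≠ 0) (hz : pderiv 0 F = 0) : HasFewResidualLines PS QS F := by
  classical
  refine of_restrict_eq_zero hPS (Finset.filter_subset (fun Q => Q.restrict 2 F = 0) QS) ?_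
    (ℬ := ∅) (Nat.zero_le _) fun Q hQ hbad hzero => absurd (Finset.mem_filter.2 ⟨hQ, hzero⟩) hbad
  refine (card_le_of_restrict_eq_zero_of_pderiv_eq_zero hF hchar hz
    (hQS.mono (Finset.coe_subset.2 (Finset.filter_subset _ _)))
    fun Q hQ => (Finset.mem_filter.1 hQ).2).trans ?_
  nlinarith [Nat.le_mul_self F.totalDegree]

lemma of_not_dvd (hPS : Set.InjOn AxisLine.pos (PS : Set (AxisLine K)))
    (hQS : Set.InjOn AxisLine.pos (QS : Set (AxisLine K))) (hF : Irreducible F) (hFG : ¬ F ∣ G)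
    (hdeg : G.totalDegree ≤ 3 * F.totalDegree)
    (hfew : ∀ Q : AxisLine K, Q.restrict 2 F = 0 → Q.restrict 2 G ≠ 0 →
      (residualLines PS ∅ F Q).card ≤ 3 * F.totalDegree) :
    HasFewResidualLines PS QS F := by
  classical
  refine of_restrict_eq_zero hPS
    (Finset.filter_subset (fun Q => Q.restrict 2 F = 0 ∧ Q.restrict 2 G = 0) QS) ?_
    (Nat.zero_le _) fun Q hQ hbad hzero => hfew Q hzero fun h =>
      hbad (Finset.mem_filter.2 ⟨hQ, hzero, h⟩)
  exact card_le_of_restrict_eq_zero hF hFG hdeg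
    (hQS.mono (Finset.coe_subset.2 (Finset.filter_subset _ _)))
    fun Q hQ => (Finset.mem_filter.1 hQ).2

/-- A surface without exceptional behaviour is doubly ruled at a generic point, hence bilinear. -/
lemma of_irreducible (hPS : Set.InjOn AxisLine.pos (PS : Set (AxisLine K)))
    (hQS : Set.InjOn AxisLine.pos (QS : Set (AxisLine K))) (hF : Irreducible F)
    (hchar : ((2 * F.totalDegree)! : K) ≠ 0) : HasFewResidualLines PS QS F := by
  by_cases hz : pderiv 0 F = 0
  · exact of_pderiv_eq_zero hPS hQS hF.ne_zero (factorial_ne_zero_of_le hchar (by lia)) hz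
  by_cases h₂ : F ∣ secondForm F 0 2 2
  swap
  · exact of_not_dvd hPS hQS hF h₂ (totalDegree_secondForm_le F 0 2 2) fun Q hQ hne =>
      absurd (AxisLine.restrict_secondForm (by decide) hQ) hne
  by_cases h₁ : F ∣ secondForm F 0 1 1
  swap
  · exact of_not_dvd hPS hQS hF h₁ (totalDegree_secondForm_le F 0 1 1) fun Q _ hne =>
      (card_residualLines_le (G := secondForm F 0 1 1) hPS hne fun P hP =>
        AxisLine.restrict_secondForm one_ne_zero hP).trans (totalDegree_secondForm_le F 0 1 1)
  by_cases hM : ∃ M, X 0 - bilinear M ∣ F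
  · obtain ⟨M, hM⟩ := hM
    have hunit : ¬ IsUnit (X 0 - bilinear M) := fun h => by
      simpa [bilinear_eq] using h.map (eval ![M 0 0, 0, 0])
    exact of_dvd_X_sub_bilinear hPS hF ((hF.dvd_iff.1 hM).resolve_left hunit).dvd
  · have hdeg : (pderiv 0 F).totalDegree ≤ F.totalDegree - 1 := totalDegree_pderiv_le 0 F
    have hpos := totalDegree_pos_of_irreducible hF
    have hndvd : ¬ F ∣ pderiv 0 F := fun h => by
      have := totalDegree_le_of_dvd_of_isDomain h hz
      lia
    refine of_not_dvd hPS hQS hF hndvd (by lia) fun Q hQ hne => absurd ?_ hM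
    obtain ⟨t, ht⟩ : ∃ t, (Q.restrict 2 (pderiv 0 F)).eval t ≠ 0 := by
      contrapose! hne
      exact Polynomial.funext fun t => (hne t).trans Polynomial.eval_zero.symm
    rw [AxisLine.eval_restrict] at ht
    exact exists_X_sub_bilinear_dvd (by rw [← AxisLine.eval_restrict, hQ, Polynomial.eval_zero])
      ht h₁ h₂ hchar

lemma of_factorial_ne_zero (hPS : Set.InjOn AxisLine.pos (PS : Set (AxisLine K)))
    (hQS : Set.InjOn AxisLine.pos (QS : Set (AxisLine K))) (hF : F ≠ 0)
    (hchar : ((2 * F.totalDegree)! : K) ≠ 0) : HasFewResidualLines PS QS F := by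
  induction F using WfDvdMonoid.induction_on_irreducible with
  | zero => exact absurd rfl hF
  | unit F hunit => exact of_isUnit hunit
  | mul G F hG hirr ih =>
    have hdeg := totalDegree_mul_of_isDomain hirr.ne_zero hG
    exact mul hirr.ne_zero hG
      (of_irreducible hPS hQS hirr (factorial_ne_zero_of_le hchar (by lia)))
      (ih hG (factorial_ne_zero_of_le hchar (by lia)))

end HasFewResidualLines

end ResidualLines

/-! ### Incidences between lines along two axes -/

section Interpolation

open MvPolynomial

variable {K : Type*} [Field K]

lemma finrank_restrictDegree (σ : Type*) [Fintype σ] (d : ℕ) :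
    Module.finrank K (restrictDegree σ K d) = (d + 1) ^ Fintype.card σ := by
  rw [restrictDegree, Module.finrank_eq_nat_card_basis (basisRestrictSupport K _)]
  let boxEquiv : {s : σ →₀ ℕ | ∀ i, s i ≤ d} ≃ (σ → {j : ℕ // j < d + 1}) :=
    (Finsupp.equivFunOnFinite.subtypeEquiv fun s => by
      simp only [Set.mem_ofPred_eq, Nat.lt_succ_iff, Finsupp.equivFunOnFinite_apply]).trans
      Equiv.subtypePiEquivPi
  rw [Nat.card_congr boxEquiv, Nat.card_fun, Nat.card_congr Fin.equivSubtype.symm, Nat.card_fin,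
    Nat.card_eq_fintype_card]

lemma totalDegree_le_of_mem_restrictDegree {σ : Type*} [Fintype σ] {d : ℕ} {F : MvPolynomial σ K}
    (hF : F ∈ restrictDegree σ K d) : F.totalDegree ≤ Fintype.card σ * d := by
  refine Finset.sup_le fun s hs => ?_
  rw [Finsupp.sum_fintype _ _ fun _ => rfl]
  exact Finset.sum_le_card_nsmul _ _ _ fun i _ => (mem_restrictDegree _ F d).1 hF s hs i

lemma AxisLine.natDegree_restrict_le_of_mem_restrictDegree (P : AxisLine K) {d : ℕ}
    {F : MvPolynomial (Fin 3) K} (hF : F ∈ restrictDegree (Fin 3) K d) :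
    (P.restrict 1 F).natDegree ≤ 2 * d := by
  rw [restrict, aeval_def, eval₂_eq']
  refine Polynomial.natDegree_sum_le_of_forall_le _ _ fun s hs => ?_
  have hs := (mem_restrictDegree _ F d).1 hF s hs
  have h₀ := Polynomial.natDegree_pow_le_of_le (s 0)
    (Polynomial.natDegree_linear_le (a := P.slope) (b := P.intercept))
  have h₂ : ((Polynomial.C P.pos) ^ s 2).natDegree = 0 := by
    rw [← Polynomial.C_pow, Polynomial.natDegree_C]
  simp only [Fin.prod_univ_three, if_true, one_ne_zero, if_false, Fin.reduceEq]
  refine (Polynomial.natDegree_C_mul_le _ _).trans ?_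
  refine (Polynomial.natDegree_mul_le_of_le (Polynomial.natDegree_mul_le_of_le h₀
    (Polynomial.natDegree_X_pow_le _)) h₂.le).trans ?_
  have := hs 0
  have := hs 1
  lia

lemma exists_ne_zero_forall_restrict_eq_zero (PS : Finset (AxisLine K)) {e : ℕ}
    (he : 2 * PS.card < (e + 1) ^ 2) :
    ∃ F : MvPolynomial (Fin 3) K, F ≠ 0 ∧ F.totalDegree ≤ 3 * e ∧ ∀ P ∈ PS, P.restrict 1 F = 0 := by
  let coeffs : restrictDegree (Fin 3) K e →ₗ[K] PS × Fin (2 * e + 1) → K :=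
    LinearMap.pi fun x => Polynomial.lcoeff K x.2 ∘ₗ (x.1.1.restrict 1).toLinearMap ∘ₗ
      Submodule.subtype _
  have hlt : Module.finrank K (PS × Fin (2 * e + 1) → K)
      < Module.finrank K (restrictDegree (Fin 3) K e) := by
    rw [finrank_restrictDegree, Module.finrank_fintype_fun_eq_card, Fintype.card_prod,
      Fintype.card_coe, Fintype.card_fin, Fintype.card_fin]
    calc PS.card * (2 * e + 1) ≤ 2 * PS.card * (e + 1) := by nlinarith
      _ < (e + 1) ^ 2 * (e + 1) := Nat.mul_lt_mul_of_pos_right he e.succ_pos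
      _ = (e + 1) ^ 3 := by ring
  obtain ⟨F, hker, hF⟩ := (Submodule.ne_bot_iff _).1
    (LinearMap.ker_ne_bot_of_finrank_lt hlt (f := coeffs))
  refine ⟨F, fun h => hF (Subtype.ext h), totalDegree_le_of_mem_restrictDegree F.2, fun P hP => ?_⟩
  ext j
  rw [Polynomial.coeff_zero]
  by_cases hj : j < 2 * e + 1
  · exact congrFun hker (⟨P, hP⟩, ⟨j, hj⟩)
  · have hdeg := P.natDegree_restrict_le_of_mem_restrictDegree F.2
    exact Polynomial.coeff_eq_zero_of_natDegree_lt (by lia)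

end Interpolation

section Incidences

open MvPolynomial
open scoped Nat

variable {K : Type*} [Field K]

lemma AxisLine.pos_eq_of_liesOn {M N : Matrix (Fin 2) (Fin 2) K} (hMN : M ≠ N) {P Q : AxisLine K}
    (hPM : P.LiesOn M) (hPN : P.LiesOn N) (hQM : Q.LiesOn M) (hQN : Q.LiesOn N) :
    P.pos = Q.pos := by
  obtain ⟨hPM₁, hPM₀⟩ := hPM
  obtain ⟨hPN₁, hPN₀⟩ := hPN
  obtain ⟨hQM₁, hQM₀⟩ := hQM
  obtain ⟨hQN₁, hQN₀⟩ := hQN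
  by_contra hne
  have h₁₁ : M 1 1 = N 1 1 := mul_right_cancel₀ (sub_ne_zero.2 hne)
    (by linear_combination hPN₁ - hPM₁ - hQN₁ + hQM₁)
  have h₀₁ : M 0 1 = N 0 1 := mul_right_cancel₀ (sub_ne_zero.2 hne)
    (by linear_combination hPN₀ - hPM₀ - hQN₀ + hQM₀)
  have h₁₀ : M 1 0 = N 1 0 := by linear_combination hPN₁ - hPM₁ - P.pos * h₁₁
  have h₀₀ : M 0 0 = N 0 0 := by linear_combination hPN₀ - hPM₀ - P.pos * h₀₁
  exact hMN (Matrix.ext (by simp [Fin.forall_fin_two, *]))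

lemma card_le_of_liesOn_pair {S : Finset (AxisLine K)}
    (hpos : Set.InjOn AxisLine.pos (S : Set (AxisLine K))) {ℬ : Finset (Matrix (Fin 2) (Fin 2) K)}
    (hS : ∀ Q ∈ S, ∃ M ∈ ℬ, ∃ N ∈ ℬ, M ≠ N ∧ Q.LiesOn M.transpose ∧ Q.LiesOn N.transpose) :
    S.card ≤ ℬ.card ^ 2 := by
  choose! M hM N hN hMN hQM hQN using hS
  rw [sq, ← Finset.card_product]
  refine Finset.card_le_card_of_injOn (fun Q => (M Q, N Q))
    (fun Q hQ => Finset.mem_product.2 ⟨hM Q hQ, hN Q hQ⟩) fun P hP Q hQ h => hpos hP hQ ?_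
  obtain ⟨hM', hN'⟩ := Prod.ext_iff.1 h
  dsimp only at hM' hN'
  exact AxisLine.pos_eq_of_liesOn (Matrix.transpose_injective.ne (hMN P hP)) (hQM P hP) (hQN P hP)
    (hM' ▸ hQM Q hQ) (hN' ▸ hQN Q hQ)

open Classical in
/-- The lines of `PS`, seen along the first axis, that meet the line `Q` along the second axis. -/
noncomputable def meetingLines (PS : Finset (AxisLine K)) (Q : AxisLine K) : Finset (AxisLine K) :=
  {P ∈ PS | P.Meets Q}

lemma mem_meetingLines {PS : Finset (AxisLine K)} {P Q : AxisLine K} :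
    P ∈ meetingLines PS Q ↔ P ∈ PS ∧ P.Meets Q := by
  simp only [meetingLines, Finset.mem_filter]

/-- No surface `z = bilinear M` contains more than `k` of the lines of `PS`. -/
def AtMostOnBilinear (PS : Finset (AxisLine K)) (k : ℕ) : Prop :=
  ∀ M : Matrix (Fin 2) (Fin 2) K, ∀ S ⊆ PS, (∀ P ∈ S, P.LiesOn M) → S.card ≤ k

lemma card_meetingLines_le {PS : Finset (AxisLine K)} {F : MvPolynomial (Fin 3) K}
    (hF : ∀ P ∈ PS, P.restrict 1 F = 0) {k : ℕ} (hk : AtMostOnBilinear PS k)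
    {ℬ : Finset (Matrix (Fin 2) (Fin 2) K)} {Q : AxisLine K}
    (hQ : ∀ M ∈ ℬ, ∀ N ∈ ℬ, Q.LiesOn M.transpose → Q.LiesOn N.transpose → M = N) :
    (meetingLines PS Q).card ≤ (residualLines PS ℬ F Q).card + k := by
  classical
  refine Nat.sub_le_iff_le_add'.1 ((Finset.le_card_sdiff _ _).trans ?_)
  have hdiff {P : AxisLine K} (hP : P ∈ meetingLines PS Q \ residualLines PS ℬ F Q) :
      P ∈ PS ∧ ∃ M ∈ ℬ, P.LiesOn M ∧ Q.LiesOn M.transpose := by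
    rw [Finset.mem_sdiff, mem_meetingLines, mem_residualLines] at hP
    obtain ⟨⟨hP, hmeets⟩, hres⟩ := hP
    by_contra! h
    exact hres ⟨hP, hF P hP, hmeets, h hP⟩
  by_cases hM : ∃ M ∈ ℬ, Q.LiesOn M.transpose
  · obtain ⟨M, hM, hQM⟩ := hM
    refine hk M _ (fun P hP => (hdiff hP).1) fun P hP => ?_
    obtain ⟨-, N, hN, hPN, hQN⟩ := hdiff hP
    exact hQ N hN M hM hQN hQM ▸ hPN
  · refine (Finset.card_eq_zero.2 (Finset.eq_empty_of_forall_notMem fun P hP => hM ?_)).trans_le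
      (Nat.zero_le _)
    obtain ⟨-, N, hN, -, hQN⟩ := hdiff hP
    exact ⟨N, hN, hQN⟩

variable [Infinite K]

lemma exists_bad_lines {PS QS : Finset (AxisLine K)}
    (hPS : Set.InjOn AxisLine.pos (PS : Set (AxisLine K)))
    (hQS : Set.InjOn AxisLine.pos (QS : Set (AxisLine K)))
    (hchar : ((6 * Nat.sqrt (2 * PS.card))! : K) ≠ 0) {k : ℕ} (hk : AtMostOnBilinear PS k) :
    ∃ bad ⊆ QS, bad.card ≤ 234 * PS.card ∧
      ∀ Q ∈ QS, Q ∉ bad → (meetingLines PS Q).card ≤ 9 * Nat.sqrt (2 * PS.card) + k := by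
  classical
  obtain ⟨F, hF, hdeg, hzero⟩ := exists_ne_zero_forall_restrict_eq_zero PS
    ((Nat.lt_succ_sqrt (2 * PS.card)).trans_eq (sq _).symm)
  obtain ⟨bad₁, hbad₁, hcard₁, ℬ, hℬ, hfew⟩ := HasFewResidualLines.of_factorial_ne_zero hPS hQS hF
    (factorial_ne_zero_of_le hchar (by lia))
  set bad₂ := {Q ∈ QS | ∃ M ∈ ℬ, ∃ N ∈ ℬ, M ≠ N ∧ Q.LiesOn M.transpose ∧ Q.LiesOn N.transpose}
  have hcard₂ : bad₂.card ≤ ℬ.card ^ 2 :=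
    card_le_of_liesOn_pair (hQS.mono (Finset.coe_subset.2 (Finset.filter_subset _ _)))
      fun Q hQ => (Finset.mem_filter.1 hQ).2
  refine ⟨bad₁ ∪ bad₂, Finset.union_subset hbad₁ (Finset.filter_subset _ _), ?_,
    fun Q hQ hbad => ?_⟩
  · calc (bad₁ ∪ bad₂).card ≤ 12 * F.totalDegree ^ 2 + ℬ.card ^ 2 :=
          (Finset.card_union_le _ _).trans (add_le_add hcard₁ hcard₂)
      _ ≤ 12 * (3 * Nat.sqrt (2 * PS.card)) ^ 2 + (3 * Nat.sqrt (2 * PS.card)) ^ 2 := by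
          gcongr
          exact hℬ.trans hdeg
      _ = 117 * Nat.sqrt (2 * PS.card) ^ 2 := by ring
      _ ≤ 117 * (2 * PS.card) := Nat.mul_le_mul_left _ (Nat.sqrt_le' _)
      _ = 234 * PS.card := by ring
  · rw [Finset.mem_union, not_or] at hbad
    have hunique : ∀ M ∈ ℬ, ∀ N ∈ ℬ, Q.LiesOn M.transpose → Q.LiesOn N.transpose → M = N := by
      intro M hM N hN hQM hQN
      by_contra hMN
      exact hbad.2 (Finset.mem_filter.2 ⟨hQ, M, hM, N, hN, hMN, hQM, hQN⟩)
    have := hfew Q hQ hbad.1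
    exact (card_meetingLines_le hzero hk hunique).trans (by lia)

/-- The number of incidences of the lines of `PS` along the first axis with the lines of `QS` along
the second axis. -/
noncomputable def lineIncidences (PS QS : Finset (AxisLine K)) : ℕ :=
  ∑ Q ∈ QS, (meetingLines PS Q).card

end Incidences

section Recursion

open scoped Nat

variable {K : Type*} [Field K]

lemma lineIncidences_sdiff {PS₁ PS : Finset (AxisLine K)} (hsub : PS₁ ⊆ PS)
    (QS : Finset (AxisLine K)) [DecidableEq (AxisLine K)] :
    lineIncidences PS QS = lineIncidences PS₁ QS + lineIncidences (PS \ PS₁) QS := by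
  classical
  rw [lineIncidences, lineIncidences, lineIncidences, ← Finset.sum_add_distrib]
  refine Finset.sum_congr rfl fun Q _ => ?_
  rw [meetingLines, meetingLines, meetingLines, ← Finset.card_union_of_disjoint
    (Finset.disjoint_filter_filter Finset.disjoint_sdiff), ← Finset.filter_union,
    Finset.union_sdiff_of_subset hsub]

lemma AtMostOnBilinear.mono {PS₁ PS : Finset (AxisLine K)} {k : ℕ} (hk : AtMostOnBilinear PS k)
    (hsub : PS₁ ⊆ PS) : AtMostOnBilinear PS₁ k :=
  fun M S hS => hk M S (hS.trans hsub)

lemma lineIncidences_le_card {PS : Finset (AxisLine K)} (hPS : PS.card ≤ 1)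
    (QS : Finset (AxisLine K)) : lineIncidences PS QS ≤ QS.card := by
  refine (Finset.sum_le_card_nsmul _ _ 1 fun Q _ => ?_).trans_eq (by rw [smul_eq_mul, mul_one])
  exact (Finset.card_le_card fun P hP => (mem_meetingLines.1 hP).1).trans hPS

lemma two_mul_incidenceBound_le (j k : ℕ) :
    2 * (234 * 2 ^ (j + 1) * (9 * √2 ^ (j + 1) + k) + (14500 * √2 ^ (3 * j) + 468 * k * j * 2 ^ j))
      ≤ 14500 * √2 ^ (3 * (j + 1)) + 468 * k * (j + 1) * 2 ^ (j + 1) := by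
  have hroot : 1.41 < √2 := Real.lt_sqrt_of_sq_lt (by norm_num)
  have hsq : √2 ^ 2 = 2 := Real.sq_sqrt zero_le_two
  have hgain : 0 ≤ √2 ^ (3 * j) * (20576 * √2 - 29000) :=
    mul_nonneg (by positivity) (by linarith)
  have hcube : √2 ^ (3 * (j + 1)) = 2 * √2 * √2 ^ (3 * j) := by
    rw [mul_add, pow_add, mul_one, pow_succ √2 2, hsq]
    ring
  have hprod : (2 : ℝ) ^ (j + 1) * √2 ^ (j + 1) = 2 * √2 * √2 ^ (3 * j) := by
    rw [← hcube, mul_comm 3, pow_mul' √2, pow_succ √2 2, hsq, mul_pow]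
  rw [hcube]
  calc _ = 8424 * √2 * √2 ^ (3 * j) + 29000 * √2 ^ (3 * j) + 468 * k * (j + 1) * 2 ^ (j + 1) := by
        linear_combination 4212 * hprod - 468 * k * j * pow_succ (2 : ℝ) j
    _ ≤ _ := by
        gcongr
        linarith

variable [Infinite K]

lemma exists_lineIncidences_le {PS QS : Finset (AxisLine K)}
    (hPS : Set.InjOn AxisLine.pos (PS : Set (AxisLine K)))
    (hQS : Set.InjOn AxisLine.pos (QS : Set (AxisLine K)))
    (hchar : ((6 * Nat.sqrt (2 * PS.card))! : K) ≠ 0) {k : ℕ} (hk : AtMostOnBilinear PS k) :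
    ∃ bad ⊆ QS, bad.card ≤ 234 * PS.card ∧ lineIncidences PS QS
      ≤ QS.card * (9 * Nat.sqrt (2 * PS.card) + k) + lineIncidences PS bad := by
  classical
  obtain ⟨bad, hbad, hcard, hfew⟩ := exists_bad_lines hPS hQS hchar hk
  refine ⟨bad, hbad, hcard, ?_⟩
  rw [lineIncidences, ← Finset.sum_sdiff hbad, ← smul_eq_mul]
  refine Nat.add_le_add_right ((Finset.sum_le_card_nsmul _ _ _ fun Q hQ => ?_).trans
    (Nat.mul_le_mul_right _ (Finset.card_le_card Finset.sdiff_subset))) _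
  exact hfew Q (Finset.mem_sdiff.1 hQ).1 (Finset.mem_sdiff.1 hQ).2

/-- Halving `PS` in each step keeps the number of exceptional lines of `QS` proportional to the
number of lines of `PS`. -/
lemma lineIncidences_le (j : ℕ) {PS QS : Finset (AxisLine K)}
    (hPS : Set.InjOn AxisLine.pos (PS : Set (AxisLine K)))
    (hQS : Set.InjOn AxisLine.pos (QS : Set (AxisLine K)))
    (hchar : ((6 * Nat.sqrt (2 * 2 ^ j))! : K) ≠ 0) {k : ℕ} (hk : AtMostOnBilinear PS k)
    (hPScard : PS.card ≤ 2 ^ j) (hQScard : QS.card ≤ 234 * 2 ^ j) :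
    (lineIncidences PS QS : ℝ) ≤ 14500 * √2 ^ (3 * j) + 468 * k * j * 2 ^ j := by
  classical
  induction j generalizing PS QS with
  | zero =>
    have hle : lineIncidences PS QS ≤ 14500 := (lineIncidences_le_card hPScard QS).trans (by lia)
    simpa using (Nat.cast_le (α := ℝ)).2 hle
  | succ j ih =>
    have hsqrt {m : ℕ} (hm : m ≤ 2 ^ j) :
        ((6 * Nat.sqrt (2 * m))! : K) ≠ 0 := factorial_ne_zero_of_le hchar (by
      gcongr
      exact hm.trans (Nat.pow_le_pow_right two_pos j.le_succ))
    have hhalf {P : Finset (AxisLine K)} (hsub : P ⊆ PS) (hcard : P.card ≤ 2 ^ j) :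
        (lineIncidences P QS : ℝ) ≤ 234 * 2 ^ (j + 1) * (9 * √2 ^ (j + 1) + k)
          + (14500 * √2 ^ (3 * j) + 468 * k * j * 2 ^ j) := by
      have hinj := hPS.mono (Finset.coe_subset.2 hsub)
      obtain ⟨bad, hbad, hbadcard, hle⟩ :=
        exists_lineIncidences_le hinj hQS (hsqrt hcard) (hk.mono hsub)
      have hrec := ih hinj (hQS.mono (Finset.coe_subset.2 hbad)) (hsqrt le_rfl) (hk.mono hsub)
        hcard (hbadcard.trans (Nat.mul_le_mul_left _ hcard))
      have hroot : (Nat.sqrt (2 * P.card) : ℝ) ≤ √2 ^ (j + 1) := by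
        refine Real.nat_sqrt_le_real_sqrt.trans (Real.sqrt_le_iff.2 ⟨by positivity, ?_⟩)
        rw [← pow_mul, mul_comm (j + 1) 2, pow_mul, Real.sq_sqrt zero_le_two, pow_succ']
        exact_mod_cast Nat.mul_le_mul_left 2 hcard
      calc (lineIncidences P QS : ℝ)
          ≤ QS.card * (9 * Nat.sqrt (2 * P.card) + k) + lineIncidences P bad := mod_cast hle
        _ ≤ _ := by
          gcongr
          exact_mod_cast hQScard
    obtain ⟨PS₁, hPS₁, hcard₁⟩ := Finset.exists_subset_card_eq (min_le_left PS.card (2 ^ j))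
    have hcard₂ : (PS \ PS₁).card ≤ 2 ^ j := by
      rw [Finset.card_sdiff_of_subset hPS₁, hcard₁]
      lia
    have h₁ := hhalf hPS₁ (hcard₁.trans_le (min_le_right _ _))
    have h₂ := hhalf Finset.sdiff_subset hcard₂
    rw [lineIncidences_sdiff hPS₁, Nat.cast_add, Nat.cast_succ]
    exact (add_le_add h₁ h₂).trans ((two_mul _).symm.trans_le (two_mul_incidenceBound_le j k))

end Recursion

/-! ### Generic lines -/

section GenericLine

variable {F K : Type*} [Field F] [Field K] [Algebra F K] {T : K}

lemma eq_zero_of_sum_mul_pow_eq_zero (hT : Transcendental F T) {n : ℕ} (a : Fin n → F)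
    (h : ∑ i, algebraMap F K (a i) * T ^ (i : ℕ) = 0) (i : Fin n) : a i = 0 := by
  classical
  have hpoly : (Polynomial.ofFn n a : Polynomial F) = 0 := by
    refine transcendental_iff.1 hT _ ?_
    simpa only [Polynomial.ofFn_eq_sum_monomial, map_sum, Polynomial.aeval_monomial] using h
  rw [← Polynomial.ofFn_coeff_eq_val_of_lt a i.is_lt, hpoly, Polynomial.coeff_zero]

variable (T) in
/-- The common denominator of the coordinates of the generic line `genericLine₁ T v`. -/
def genericDenom₁ (v : F × F × F) : K :=
  1 + T ^ 3 * algebraMap F K v.2.1 + T ^ 4 * algebraMap F K v.2.2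

variable (T) in
/-- The common denominator of the coordinates of the generic line `genericLine₂ T v`. -/
def genericDenom₂ (v : F × F × F) : K :=
  1 + T ^ 2 * algebraMap F K v.2.1 + T ^ 4 * algebraMap F K v.2.2

variable (T) in
/-- The line along the first axis attached to the triple `(y, m, c)` of a point `y` and an affine
function `x ↦ m * x + c`. The denominators are chosen such that `genericLine₁ T (y', m, c)` meets
`genericLine₂ T (y, m', c')` exactly when `m * y + c = m' * y' + c'`, and such that all these lines
have different positions if `T` is transcendental. -/
def genericLine₁ (v : F × F × F) : AxisLine K where
  slope := algebraMap F K v.2.1 / genericDenom₁ T v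
  pos := (algebraMap F K v.1 + T * algebraMap F K v.2.1 + T ^ 2 * algebraMap F K v.2.2) /
    genericDenom₁ T v
  intercept := algebraMap F K v.2.2 / genericDenom₁ T v

variable (T) in
/-- The line along the second axis attached to the triple `(y, m, c)` of a point `y` and an affine
function `x ↦ m * x + c`; see `genericLine₁`. -/
def genericLine₂ (v : F × F × F) : AxisLine K where
  slope := algebraMap F K v.2.1 / genericDenom₂ T v
  pos := (algebraMap F K v.1 + T * algebraMap F K v.2.1 + T ^ 3 * algebraMap F K v.2.2) /
    genericDenom₂ T v
  intercept := algebraMap F K v.2.2 / genericDenom₂ T v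

lemma genericDenom₁_ne_zero (hT : Transcendental F T) (v : F × F × F) : genericDenom₁ T v ≠ 0 := by
  intro h
  have h₀ := eq_zero_of_sum_mul_pow_eq_zero hT ![1, 0, 0, v.2.1, v.2.2] (by
    rw [← h]
    simp only [Fin.sum_univ_five, Matrix.cons_val, Fin.coe_ofNat_eq_mod, map_zero,
      map_one, genericDenom₁]
    ring) 0
  exact one_ne_zero h₀

lemma genericDenom₂_ne_zero (hT : Transcendental F T) (v : F × F × F) : genericDenom₂ T v ≠ 0 := by
  intro h
  have h₀ := eq_zero_of_sum_mul_pow_eq_zero hT ![1, 0, v.2.1, 0, v.2.2] (by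
    rw [← h]
    simp only [Fin.sum_univ_five, Matrix.cons_val, Fin.coe_ofNat_eq_mod, map_zero,
      map_one, genericDenom₂]
    ring) 0
  exact one_ne_zero h₀

lemma pos_genericLine₁_injective (hT : Transcendental F T) :
    Function.Injective fun v : F × F × F => (genericLine₁ T v).pos := by
  rintro ⟨y, m, c⟩ ⟨y', m', c'⟩ h
  simp only [genericLine₁] at h
  rw [div_eq_div_iff (genericDenom₁_ne_zero hT _) (genericDenom₁_ne_zero hT _)] at h
  have hcoeff := eq_zero_of_sum_mul_pow_eq_zero hT
    ![y - y', m - m', c - c', y * m' - y' * m, y * c' - y' * c, m * c' + c * m' - m' * c - c' * m]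
    (by
      simp only [Fin.sum_univ_six, Matrix.cons_val, Fin.coe_ofNat_eq_mod, map_sub,
        map_add, map_mul]
      simp only [genericDenom₁] at h
      linear_combination h)
  have hy : y - y' = 0 := hcoeff 0
  have hm : m - m' = 0 := hcoeff 1
  have hc : c - c' = 0 := hcoeff 2
  rw [sub_eq_zero.1 hy, sub_eq_zero.1 hm, sub_eq_zero.1 hc]

lemma pos_genericLine₂_injective (hT : Transcendental F T) :
    Function.Injective fun v : F × F × F => (genericLine₂ T v).pos := by
  rintro ⟨y, m, c⟩ ⟨y', m', c'⟩ h
  simp only [genericLine₂] at h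
  rw [div_eq_div_iff (genericDenom₂_ne_zero hT _) (genericDenom₂_ne_zero hT _)] at h
  have hcoeff := eq_zero_of_sum_mul_pow_eq_zero hT
    ![y - y', m - m', y * m' - y' * m, c - c', y * c' - y' * c,
      c * m' - c' * m + m * c' - m' * c]
    (by
      simp only [Fin.sum_univ_six, Matrix.cons_val, Fin.coe_ofNat_eq_mod, map_sub,
        map_add, map_mul]
      simp only [genericDenom₂] at h
      linear_combination h)
  have hy : y - y' = 0 := hcoeff 0
  have hm : m - m' = 0 := hcoeff 1
  have hc : c - c' = 0 := hcoeff 3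
  rw [sub_eq_zero.1 hy, sub_eq_zero.1 hm, sub_eq_zero.1 hc]

lemma genericLine₁_meets_genericLine₂_iff (hT : Transcendental F T) (y y' m c m' c' : F) :
    (genericLine₁ T (y', m, c)).Meets (genericLine₂ T (y, m', c')) ↔
      m * y + c = m' * y' + c' := by
  have h₁ := genericDenom₁_ne_zero hT (y', m, c)
  have h₂ := genericDenom₂_ne_zero hT (y, m', c')
  rw [AxisLine.Meets, ← (algebraMap F K).injective.eq_iff]
  simp only [genericLine₁, genericLine₂]
  field_simp
  simp only [genericDenom₁, genericDenom₂, map_add, map_mul]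
  constructor <;> intro h <;> linear_combination h

lemma liesOn_genericLine₁_iff (hT : Transcendental F T) (v : F × F × F)
    (M : Matrix (Fin 2) (Fin 2) K) :
    (genericLine₁ T v).LiesOn M ↔
      algebraMap F K v.2.1 = M 1 0 * genericDenom₁ T v + M 1 1 * (algebraMap F K v.1 +
        T * algebraMap F K v.2.1 + T ^ 2 * algebraMap F K v.2.2) ∧
      algebraMap F K v.2.2 = M 0 0 * genericDenom₁ T v + M 0 1 * (algebraMap F K v.1 +
        T * algebraMap F K v.2.1 + T ^ 2 * algebraMap F K v.2.2) := by
  have h := genericDenom₁_ne_zero hT v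
  simp only [AxisLine.LiesOn, genericLine₁]
  field_simp

/-- Two generic lines with the same `y` on a surface `z = bilinear M` determine the position of
the surface relative to `T`. -/
lemma add_mul_add_eq_one_of_liesOn (hT : Transcendental F T) {M : Matrix (Fin 2) (Fin 2) K}
    {y m₁ c₁ m₂ c₂ : F} (hne : (m₁, c₁) ≠ (m₂, c₂))
    (h₁ : (genericLine₁ T (y, m₁, c₁)).LiesOn M) (h₂ : (genericLine₁ T (y, m₂, c₂)).LiesOn M) :
    (M 1 0 + T * M 0 0) * T ^ 3 + (M 1 1 + T * M 0 1) * T = 1 := by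
  rw [liesOn_genericLine₁_iff hT] at h₁ h₂
  simp only [genericDenom₁] at h₁ h₂
  obtain ⟨hm₁, hc₁⟩ := h₁
  obtain ⟨hm₂, hc₂⟩ := h₂
  have hdiff : algebraMap F K (m₂ - m₁) + T * algebraMap F K (c₂ - c₁) ≠ 0 := by
    intro h
    have hcoeff := eq_zero_of_sum_mul_pow_eq_zero hT ![m₂ - m₁, c₂ - c₁] (by
      rw [← h]
      simp only [Fin.sum_univ_two, Matrix.cons_val_zero, Matrix.cons_val_one, Fin.val_zero,
        Fin.val_one]
      ring)
    exact hne (Prod.ext (sub_eq_zero.1 (hcoeff 0)).symm (sub_eq_zero.1 (hcoeff 1)).symm)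
  apply mul_left_cancel₀ hdiff
  simp only [map_sub]
  linear_combination hm₁ - hm₂ + T * (hc₁ - hc₂)

lemma eq_and_collinear_of_liesOn (hT : Transcendental F T) {M : Matrix (Fin 2) (Fin 2) K}
    {y m₁ c₁ m₂ c₂ y₃ m₃ c₃ : F} (hne : (m₁, c₁) ≠ (m₂, c₂))
    (h₁ : (genericLine₁ T (y, m₁, c₁)).LiesOn M) (h₂ : (genericLine₁ T (y, m₂, c₂)).LiesOn M)
    (h₃ : (genericLine₁ T (y₃, m₃, c₃)).LiesOn M) :
    y₃ = y ∧ (c₂ - c₁) * m₃ + (m₁ - m₂) * c₃ = (c₂ - c₁) * m₁ + (m₁ - m₂) * c₁ := by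
  have hone := add_mul_add_eq_one_of_liesOn hT hne h₁ h₂
  rw [liesOn_genericLine₁_iff hT] at h₁ h₂ h₃
  simp only [genericDenom₁] at h₁ h₂ h₃
  obtain ⟨hm₁, hc₁⟩ := h₁
  obtain ⟨hm₂, hc₂⟩ := h₂
  obtain ⟨hm₃, hc₃⟩ := h₃
  set φ := algebraMap F K
  have hy : (M 1 1 + T * M 0 1) * (φ y₃ - φ y) = 0 := by
    linear_combination hm₁ + T * hc₁ - hm₃ - T * hc₃
      - (φ m₃ + T * φ c₃ - φ m₁ - T * φ c₁) * hone
  rcases mul_eq_zero.1 hy with h0 | hy₃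
  · rw [h0, zero_mul, add_zero] at hone
    refine absurd ?_ (one_ne_zero (α := K))
    linear_combination -T ^ 3 * (hm₁ + T * hc₁)
      - T ^ 3 * (φ y + T * φ m₁ + T ^ 2 * φ c₁) * h0
      - (1 + T ^ 3 * φ m₁ + T ^ 4 * φ c₁) * hone
  · rw [sub_eq_zero] at hy₃
    refine ⟨φ.injective hy₃, φ.injective ?_⟩
    rw [hy₃] at hm₃ hc₃
    have hm₁₂ : φ m₂ - φ m₁ = (φ m₂ - φ m₁ + T * (φ c₂ - φ c₁)) * (M 1 0 * T ^ 3 + M 1 1 * T) := by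
      linear_combination hm₂ - hm₁
    have hc₁₂ : φ c₂ - φ c₁ = (φ m₂ - φ m₁ + T * (φ c₂ - φ c₁)) * (M 0 0 * T ^ 3 + M 0 1 * T) := by
      linear_combination hc₂ - hc₁
    have hm₁₃ : φ m₃ - φ m₁ = (φ m₃ - φ m₁ + T * (φ c₃ - φ c₁)) * (M 1 0 * T ^ 3 + M 1 1 * T) := by
      linear_combination hm₃ - hm₁
    have hc₁₃ : φ c₃ - φ c₁ = (φ m₃ - φ m₁ + T * (φ c₃ - φ c₁)) * (M 0 0 * T ^ 3 + M 0 1 * T) := by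
      linear_combination hc₃ - hc₁
    simp only [map_sub, map_mul, map_add]
    linear_combination (φ c₂ - φ c₁) * hm₁₃ - (φ m₂ - φ m₁) * hc₁₃
      + (φ m₃ - φ m₁ + T * (φ c₃ - φ c₁)) * (M 1 0 * T ^ 3 + M 1 1 * T) * hc₁₂
      - (φ m₃ - φ m₁ + T * (φ c₃ - φ c₁)) * (M 0 0 * T ^ 3 + M 0 1 * T) * hm₁₂

end GenericLine

section CollisionCount

variable {α β : Type*} [DecidableEq β]

/-- The number of pairs of elements of `s` at which `f` has the same value. -/
def collisionCount (s : Finset α) (f : α → β) : ℕ :=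
  ((s ×ˢ s).filter fun q => f q.1 = f q.2).card

lemma sum_sq_card_filter_eq_le_collisionCount (s : Finset α) (f : α → β) (t : Finset β) :
    ∑ z ∈ t, (s.filter fun a => f a = z).card ^ 2 ≤ collisionCount s f := by
  have hfiber (z : β) : (s.filter fun a => f a = z).card ^ 2 =
      (((s ×ˢ s).filter fun q => f q.1 = f q.2).filter fun q => f q.2 = z).card := by
    rw [sq, ← Finset.card_product, Finset.filter_filter, ← Finset.filter_product]
    exact congrArg _ (Finset.filter_congr fun q _ => by grind)
  simp only [hfiber]
  rw [Finset.sum_card_fiberwise_eq_card_filter]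
  exact Finset.card_filter_le _ _

lemma sq_card_filter_mem_le (s : Finset α) (f : α → β) (t : Finset β) :
    (s.filter fun a => f a ∈ t).card ^ 2 ≤ t.card * collisionCount s f := by
  rw [← Finset.sum_card_fiberwise_eq_card_filter]
  exact sq_sum_le_card_mul_sum_sq.trans
    (Nat.mul_le_mul_left _ (sum_sq_card_filter_eq_le_collisionCount s f t))

end CollisionCount

section GenericCollisions

variable {F : Type*} [Field F]

/-- The value `m * y + c` of the affine function of a triple `(y, m, c)` at its point. -/
def affineEval (v : F × F × F) : F := v.2.1 * v.1 + v.2.2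

/-- At most `k` elements of `L`, seen as points of the plane, lie on a common line. -/
def AtMostOnLine (L : Finset (F × F)) (k : ℕ) : Prop :=
  ∀ α β γ : F, (α ≠ 0 ∨ β ≠ 0) → ∀ S ⊆ L, (∀ l ∈ S, α * l.1 + β * l.2 = γ) → S.card ≤ k

lemma AtMostOnLine.mono {L : Finset (F × F)} {k k' : ℕ} (hL : AtMostOnLine L k) (hk : k ≤ k') :
    AtMostOnLine L k' :=
  fun α β γ hαβ S hS hline => (hL α β γ hαβ S hS hline).trans hk

variable {K : Type*} [Field K] [Algebra F K] {T : K}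

open Classical in
lemma lineIncidences_genericLine [DecidableEq F] (hT : Transcendental F T) (Y : Finset F)
    (L : Finset (F × F)) :
    lineIncidences ((Y ×ˢ L).image (genericLine₁ T)) ((Y ×ˢ L).image (genericLine₂ T)) =
      collisionCount (Y ×ˢ L) affineEval := by
  have hinj₁ := (pos_genericLine₁_injective hT).of_comp (f := AxisLine.pos)
  have hinj₂ := (pos_genericLine₂_injective hT).of_comp (f := AxisLine.pos)
  have hmeet : ∀ w ∈ Y ×ˢ L, (meetingLines ((Y ×ˢ L).image (genericLine₁ T))
      (genericLine₂ T w)).card = ((Y ×ˢ L).filter fun v =>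
        v.2.1 * w.1 + v.2.2 = w.2.1 * v.1 + w.2.2).card := by
    intro w _
    rw [meetingLines, Finset.filter_image, Finset.card_image_of_injective _ hinj₁]
    simp only [genericLine₁_meets_genericLine₂_iff hT]
  rw [collisionCount, lineIncidences, Finset.sum_image hinj₂.injOn, Finset.sum_congr rfl hmeet,
    ← Finset.card_sigma]
  refine Finset.card_nbij' (fun x => ((x.1.1, x.2.2), (x.2.1, x.1.2)))
    (fun x => ⟨(x.1.1, x.2.2), (x.2.1, x.1.2)⟩) ?_ ?_ (fun _ _ => rfl) fun _ _ => rfl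
  all_goals
    intro x
    simp only [Finset.mem_coe, Finset.mem_sigma, Finset.mem_filter, Finset.mem_product]
    unfold affineEval
    tauto

open Classical in
/-- The generic lines on a surface `z = bilinear M` either all have different `y`, or all have the
same `y` and collinear affine functions. -/
lemma atMostOnBilinear_genericLine (hT : Transcendental F T) {Y : Finset F} {L : Finset (F × F)}
    {k : ℕ} (hY : Y.card ≤ k) (hL : AtMostOnLine L k) :
    AtMostOnBilinear ((Y ×ˢ L).image (genericLine₁ T)) k := by
  intro M S hS hlies
  obtain ⟨W, hW, rfl⟩ := Finset.subset_image_iff.1 hS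
  have hW' : ∀ v ∈ W, v.1 ∈ Y ∧ v.2 ∈ L := fun v hv => Finset.mem_product.1 (hW hv)
  replace hlies : ∀ v ∈ W, (genericLine₁ T v).LiesOn M := fun v hv =>
    hlies _ (Finset.mem_image_of_mem _ hv)
  refine Finset.card_image_le.trans ?_
  by_cases hinj : Set.InjOn Prod.fst (W : Set (F × F × F))
  · exact (Finset.card_le_card_of_injOn _ (fun v hv => (hW' v hv).1) hinj).trans hY
  · simp only [Set.InjOn, not_forall] at hinj
    obtain ⟨⟨y, m₁, c₁⟩, h₁, ⟨y', m₂, c₂⟩, h₂, rfl, hne⟩ := hinj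
    have hne : (m₁, c₁) ≠ (m₂, c₂) := fun h => hne (by rw [h])
    have hcol (v) (hv : v ∈ W) := eq_and_collinear_of_liesOn hT hne (hlies _ h₁) (hlies _ h₂)
      (hlies v hv)
    have hinj' : Set.InjOn Prod.snd (W : Set (F × F × F)) := fun v hv w hw h =>
      Prod.ext ((hcol v hv).1.trans (hcol w hw).1.symm) h
    rw [← Finset.card_image_of_injOn hinj']
    refine hL (c₂ - c₁) (m₁ - m₂) _ ?_ _ (Finset.image_subset_iff.2 fun v hv => (hW' v hv).2)
      (Finset.forall_mem_image.2 fun v hv => (hcol v hv).2)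
    contrapose! hne
    rw [sub_eq_zero.1 hne.1, sub_eq_zero.1 hne.2]

lemma two_pow_clog_le {n : ℕ} (hn : 0 < n) : 2 ^ Nat.clog 2 n ≤ 2 * n := by
  rcases Nat.eq_or_lt_of_le hn with h1 | h1
  · simp [← h1]
  · have := Nat.pow_pred_clog_lt_self one_lt_two h1
    rw [← Nat.succ_pred_eq_of_pos (Nat.clog_pos one_lt_two h1), pow_succ']
    lia

open scoped Nat

lemma collisionCount_affineEval_le_pow [DecidableEq F] (j : ℕ) {Y : Finset F}
    {L : Finset (F × F)} {k : ℕ} (hY : Y.card ≤ k) (hL : AtMostOnLine L k)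
    (hchar : ((6 * Nat.sqrt (2 * 2 ^ j))! : F) ≠ 0) (hcard : (Y ×ˢ L).card ≤ 2 ^ j) :
    (collisionCount (Y ×ˢ L) affineEval : ℝ) ≤ 14500 * √2 ^ (3 * j) + 468 * k * j * 2 ^ j := by
  classical
  have hT : Transcendental F (RatFunc.X : RatFunc F) := RatFunc.transcendental_X
  have : Infinite (RatFunc F) := Infinite.of_injective _ (RatFunc.algebraMap_injective F)
  have hpos₁ : Set.InjOn AxisLine.pos
      (↑((Y ×ˢ L).image (genericLine₁ (RatFunc.X : RatFunc F))) : Set (AxisLine (RatFunc F))) := by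
    rw [Finset.coe_image]
    exact (pos_genericLine₁_injective hT).injOn.image_of_comp
  have hpos₂ : Set.InjOn AxisLine.pos
      (↑((Y ×ˢ L).image (genericLine₂ (RatFunc.X : RatFunc F))) : Set (AxisLine (RatFunc F))) := by
    rw [Finset.coe_image]
    exact (pos_genericLine₂_injective hT).injOn.image_of_comp
  have hchar' : ((6 * Nat.sqrt (2 * 2 ^ j))! : RatFunc F) ≠ 0 := by
    rw [← map_natCast (algebraMap F (RatFunc F))]
    exact (map_ne_zero _).2 hchar
  rw [← lineIncidences_genericLine hT]
  exact lineIncidences_le j hpos₁ hpos₂ hchar' (atMostOnBilinear_genericLine hT hY hL)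
    (Finset.card_image_le.trans hcard)
    (Finset.card_image_le.trans (hcard.trans (Nat.le_mul_of_pos_left _ (by norm_num))))

lemma collisionCount_affineEval_le [DecidableEq F] {Y : Finset F} {L : Finset (F × F)} {k c : ℕ}
    {M : ℝ} (hY : Y.card ≤ k) (hL : AtMostOnLine L k)
    (hchar : ((6 * Nat.sqrt (4 * (Y.card * L.card)))! : F) ≠ 0) (hM : 0 ≤ M)
    (hNM : (Y.card * L.card : ℝ) ≤ M ^ 2) (hc : Y.card * L.card ≤ 2 ^ c) :
    (collisionCount (Y ×ˢ L) affineEval : ℝ) ≤ 43500 * M ^ 3 + 936 * k * c * M ^ 2 := by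
  rcases Nat.eq_zero_or_pos (Y ×ˢ L).card with hN | hN
  · rw [Finset.card_eq_zero.1 hN, collisionCount, Finset.empty_product, Finset.filter_empty,
      Finset.card_empty, Nat.cast_zero]
    positivity
  rw [← Finset.card_product] at hchar hc
  rw [← Nat.cast_mul, ← Finset.card_product] at hNM
  set N := (Y ×ˢ L).card
  set j := Nat.clog 2 N
  have hj : 2 ^ j ≤ 2 * N := two_pow_clog_le hN
  have hpow : (2 : ℝ) ^ j ≤ 2 * M ^ 2 := by
    refine le_trans ?_ (mul_le_mul_of_nonneg_left hNM zero_le_two)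
    exact_mod_cast hj
  have hroot : √2 ^ j ≤ √2 * M := by
    rw [← sq_le_sq₀ (by positivity) (by positivity), ← pow_mul, mul_comm j, pow_mul, mul_pow,
      Real.sq_sqrt zero_le_two]
    exact hpow
  have hjc : (j : ℝ) ≤ c := mod_cast Nat.clog_le_of_le_pow hc
  calc (collisionCount (Y ×ˢ L) affineEval : ℝ)
      ≤ 14500 * √2 ^ (3 * j) + 468 * k * j * 2 ^ j :=
        collisionCount_affineEval_le_pow j hY hL
          (factorial_ne_zero_of_le hchar (by gcongr 6 * Nat.sqrt ?_; lia))
          (Nat.le_pow_clog one_lt_two N)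
    _ = 14500 * (√2 ^ j) ^ 3 + 468 * k * j * 2 ^ j := by rw [← pow_mul, mul_comm j]
    _ ≤ 14500 * (√2 * M) ^ 3 + 468 * k * c * (2 * M ^ 2) := by gcongr
    _ = 29000 * √2 * M ^ 3 + 936 * k * c * M ^ 2 := by
      rw [mul_pow, pow_succ √2 2, Real.sq_sqrt zero_le_two]
      ring
    _ ≤ 29000 * 1.5 * M ^ 3 + 936 * k * c * M ^ 2 := by
      gcongr
      exact Real.sqrt_le_iff.2 (by norm_num)
    _ = _ := by norm_num

end GenericCollisions

/-! ### Energies in abelian groups -/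

section GroupCombinatorics

open scoped Combinatorics.Additive

section Group

variable {G : Type*} [Group G] [DecidableEq G]

lemma convolution_mono_left {B C : Finset G} (hBC : B ⊆ C) (A : Finset G) (x : G) :
    B.convolution A x ≤ C.convolution A x :=
  card_le_card (filter_subset_filter _ (product_subset_product_left hBC))

lemma convolution_erase_add_one_le {A B : Finset G} {a c : G} (ha : a ∈ B) (hc : c ∈ A) :
    (B.erase a).convolution A (a * c) + 1 ≤ B.convolution A (a * c) := by
  have hnotMem : (a, c) ∉ {q ∈ B.erase a ×ˢ A | q.1 * q.2 = a * c} := by simp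
  rw [convolution, ← card_insert_of_notMem hnotMem]
  refine card_le_card (insert_subset ?_ ?_)
  · simp [ha, hc]
  · exact filter_subset_filter _ (product_subset_product_left (erase_subset a B))

lemma card_filter_convolution_le_le_sum {B C S : Finset G} {a : G} (δ : ℝ) (ha : a ∈ B)
    (hS : ∀ c ∈ C, a * c ∈ S) :
    (#{c ∈ C | (B.convolution C (a * c) : ℝ) ≤ δ} : ℝ) ≤
      ∑ x ∈ S, (min (B.convolution C x : ℝ) δ - min ((B.erase a).convolution C x : ℝ) δ) := by
  set drop : G → ℝ := fun x =>
    min (B.convolution C x : ℝ) δ - min ((B.erase a).convolution C x : ℝ) δ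
  have hdrop_nonneg (x : G) : 0 ≤ drop x :=
    sub_nonneg.2 (min_le_min_right δ
      (Nat.cast_le.2 (convolution_mono_left (erase_subset a B) C x)))
  have hdrop_one : ∀ c ∈ ({c ∈ C | (B.convolution C (a * c) : ℝ) ≤ δ} : Finset G),
      1 ≤ drop (a * c) := by
    intro c hc
    rw [mem_filter] at hc
    have hone : ((B.erase a).convolution C (a * c) : ℝ) + 1 ≤ B.convolution C (a * c) := by
      exact_mod_cast convolution_erase_add_one_le ha hc.1
    change 1 ≤ min _ _ - min _ _
    rw [min_eq_left hc.2]
    linarith [min_le_left ((B.erase a).convolution C (a * c) : ℝ) δ]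
  calc (#{c ∈ C | (B.convolution C (a * c) : ℝ) ≤ δ} : ℝ)
      ≤ ∑ c ∈ C with (B.convolution C (a * c) : ℝ) ≤ δ, drop (a * c) := by
        simpa using card_nsmul_le_sum _ _ _ hdrop_one
    _ = ∑ x ∈ image (a * ·) {c ∈ C | (B.convolution C (a * c) : ℝ) ≤ δ}, drop x :=
        (sum_image (mul_right_injective a).injOn).symm
    _ ≤ ∑ x ∈ S, drop x :=
        sum_le_sum_of_subset_of_nonneg
          (image_subset_iff.2 fun c hc => hS c (mem_filter.1 hc).1) fun x _ _ => hdrop_nonneg x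

/- `B` minimises `∑ x ∈ A * C, min (r x) δ - κ |B|`, where `r x` counts the representations of `x`
in `B * C`. -/
lemma exists_subset_card_filter_convolution_le {A C : Finset G} {δ κ : ℝ} (hδ : 0 ≤ δ)
    (hAC : (A * C).card * δ < κ * A.card) :
    ∃ B ⊆ A, B.Nonempty ∧ ∀ a ∈ B, (#{c ∈ C | (B.convolution C (a * c) : ℝ) ≤ δ} : ℝ) ≤ κ := by
  let Ψ : Finset G → ℝ := fun B => ∑ x ∈ A * C, min (B.convolution C x : ℝ) δ - κ * B.card
  obtain ⟨B, hB, hmin⟩ := exists_min_image A.powerset Ψ ⟨A, mem_powerset_self A⟩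
  rw [mem_powerset] at hB
  refine ⟨B, hB, ?_, fun a ha => ?_⟩
  · rw [nonempty_iff_ne_empty]
    rintro rfl
    have hΨA : Ψ A ≤ (A * C).card * δ - κ * A.card := by
      have hsum := sum_le_sum fun x (_ : x ∈ A * C) => min_le_right (A.convolution C x : ℝ) δ
      rw [sum_const, nsmul_eq_mul] at hsum
      exact sub_le_sub_right hsum _
    have hΨempty : 0 ≤ Ψ ∅ := by
      simp only [Ψ, card_empty, Nat.cast_zero, mul_zero, sub_zero]
      exact sum_nonneg fun x _ => le_min (Nat.cast_nonneg _) hδ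
    linarith [hmin A (mem_powerset_self A)]
  · have herase := hmin (B.erase a) (mem_powerset.2 ((erase_subset a B).trans hB))
    have hcard : ((B.erase a).card : ℝ) = B.card - 1 := by
      rw [← card_erase_add_one ha, Nat.cast_add_one, add_sub_cancel_right]
    simp only [Ψ, hcard] at herase
    have hdrop := card_filter_convolution_le_le_sum (C := C) δ ha
      fun c hc => mul_mem_mul (hB ha) hc
    rw [sum_sub_distrib] at hdrop
    linarith

lemma card_filter_div_mem (B D : Finset G) :
    #{q ∈ B ×ˢ B | q.1 / q.2 ∈ D} = ∑ d ∈ D, B.convolution B⁻¹ d := by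
  simp only [← card_div_eq]
  exact (sum_card_fiberwise_eq_card_filter _ _ _).symm

/- All but at most `2 κ` of the `c ∈ C` move both entries of a given pair into `P`. -/
lemma sub_mul_card_le_card_filter_mul_mem {B C D P : Finset G} {κ : ℝ}
    (hP : ∀ a ∈ B, (#{c ∈ C | a * c ∉ P} : ℝ) ≤ κ) :
    (C.card - 2 * κ) * ∑ d ∈ D, (B.convolution B⁻¹ d : ℝ) ≤
      #{t ∈ (B ×ˢ B) ×ˢ C | t.1.1 / t.1.2 ∈ D ∧ t.1.1 * t.2 ∈ P ∧ t.1.2 * t.2 ∈ P} := by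
  set pairs : Finset (G × G) := {q ∈ B ×ˢ B | q.1 / q.2 ∈ D} with hpairs
  set triples := ({t ∈ (B ×ˢ B) ×ˢ C | t.1.1 / t.1.2 ∈ D ∧ t.1.1 * t.2 ∈ P ∧ t.1.2 * t.2 ∈ P})
    with htriples
  have hcount : triples.card =
      ∑ q ∈ pairs, #{c ∈ C | q.1 * c ∈ P ∧ q.2 * c ∈ P} := by
    simp only [htriples, hpairs, card_filter, sum_product, sum_filter, ite_and, sum_ite_irrel,
      sum_const_zero]
  have hfew : ∀ q ∈ pairs, C.card - 2 * κ ≤ (#{c ∈ C | q.1 * c ∈ P ∧ q.2 * c ∈ P} : ℝ) := by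
    intro q hq
    simp only [hpairs, mem_filter, mem_product] at hq
    have hcover : C ⊆ {c ∈ C | q.1 * c ∈ P ∧ q.2 * c ∈ P} ∪
        ({c ∈ C | q.1 * c ∉ P} ∪ {c ∈ C | q.2 * c ∉ P}) := by
      intro c hc
      simp only [mem_union, mem_filter, hc, true_and]
      tauto
    have hcard : (C.card : ℝ) ≤ #{c ∈ C | q.1 * c ∈ P ∧ q.2 * c ∈ P} +
        (#{c ∈ C | q.1 * c ∉ P} + #{c ∈ C | q.2 * c ∉ P}) := by
      exact_mod_cast (card_le_card hcover).trans
        ((card_union_le _ _).trans (Nat.add_le_add_left (card_union_le _ _) _))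
    linarith [hP q.1 hq.1.1, hP q.2 hq.1.2]
  have hsum := card_nsmul_le_sum _ _ _ hfew
  rw [nsmul_eq_mul, hpairs, card_filter_div_mem, ← hpairs] at hsum
  rw [hcount]
  push_cast at hsum ⊢
  linarith

lemma card_filter_div_mem_mul_sq_le {A B D P : Finset G} {δ : ℝ} (hδ : 0 ≤ δ)
    (hP : ∀ x ∈ P, δ ≤ B.convolution A x) :
    (#{z ∈ P ×ˢ P | z.1 / z.2 ∈ D} : ℝ) * δ ^ 2 ≤
      #{q ∈ (B ×ˢ A) ×ˢ (B ×ˢ A) | q.1.1 * q.1.2 / (q.2.1 * q.2.2) ∈ D} := by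
  set X := ({z ∈ P ×ˢ P | z.1 / z.2 ∈ D}) with hX
  have hcount : ∑ z ∈ X, B.convolution A z.1 * B.convolution A z.2 ≤
      #{q ∈ (B ×ˢ A) ×ˢ (B ×ˢ A) | q.1.1 * q.1.2 / (q.2.1 * q.2.2) ∈ D} := by
    simp only [convolution, ← card_product, ← filter_product]
    simp only [← Prod.mk_inj, Prod.mk.eta]
    rw [sum_card_fiberwise_eq_card_filter]
    refine card_le_card (monotone_filter_right _ fun q _ hq => ?_)
    exact (mem_filter.1 hq).2
  have hpoint : ∀ z ∈ X, δ ^ 2 ≤ (B.convolution A z.1 : ℝ) * B.convolution A z.2 := by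
    intro z hz
    simp only [hX, mem_filter, mem_product] at hz
    rw [sq]
    exact mul_le_mul (hP _ hz.1.1) (hP _ hz.1.2) hδ (Nat.cast_nonneg _)
  have hsum := card_nsmul_le_sum _ _ _ hpoint
  rw [nsmul_eq_mul] at hsum
  exact hsum.trans (by exact_mod_cast hcount)

end Group

end GroupCombinatorics

section GroupEnergies

open scoped Combinatorics.Additive

variable {G : Type*} [CommGroup G] [DecidableEq G]

lemma sum_sq_convolution_le_mulEnergy (A B S : Finset G) :
    ∑ x ∈ S, A.convolution B x ^ 2 ≤ Eₘ[A, B] := by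
  rw [mulEnergy_eq_sum_sq']
  refine sum_le_sum_of_ne_zero fun x _ hx => convolution_ne_zero.1 ?_
  exact (pow_ne_zero_iff two_ne_zero).1 hx

/- Rewriting `v * a / b = d` as `a * v = b * d` compares representations in `A * V` with
representations in `A * D`. -/
lemma sq_sum_card_filter_mul_div_mem_le (A V D : Finset G) :
    (∑ v ∈ V, #{q ∈ A ×ˢ A | v * q.1 / q.2 ∈ D}) ^ 2 ≤ Eₘ[A, V] * Eₘ[A, D] := by
  have hcount : ∑ v ∈ V, #{q ∈ A ×ˢ A | v * q.1 / q.2 ∈ D} ≤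
      ∑ x ∈ A * V, A.convolution V x * A.convolution D x := by
    simp only [convolution, ← card_product]
    rw [← card_sigma, ← card_sigma]
    refine card_le_card_of_injOn
      (fun z => ⟨z.2.1 * z.1, ((z.2.1, z.1), (z.2.2, z.1 * z.2.1 / z.2.2))⟩) ?_ ?_
    · rintro ⟨v, a, b⟩ h
      simp only [coe_sigma, Set.mem_sigma_iff, mem_coe, mem_filter, mem_product] at h ⊢
      exact ⟨mul_mem_mul h.2.1.1 h.1, ⟨⟨h.2.1.1, h.1⟩, trivial⟩, ⟨h.2.1.2, h.2.2⟩,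
        by rw [mul_div_cancel, mul_comm]⟩
    · rintro ⟨v, a, b⟩ _ ⟨v', a', b'⟩ _ h
      simp only [Sigma.mk.injEq, heq_eq_eq, Prod.mk.injEq] at h
      obtain ⟨_, ⟨rfl, rfl⟩, rfl, _⟩ := h
      rfl
  calc (∑ v ∈ V, #{q ∈ A ×ˢ A | v * q.1 / q.2 ∈ D}) ^ 2
      ≤ (∑ x ∈ A * V, A.convolution V x * A.convolution D x) ^ 2 := Nat.pow_le_pow_left hcount 2
    _ ≤ (∑ x ∈ A * V, A.convolution V x ^ 2) * ∑ x ∈ A * V, A.convolution D x ^ 2 :=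
        sum_mul_sq_le_sq_mul_sq _ _ _
    _ ≤ Eₘ[A, V] * Eₘ[A, D] := Nat.mul_le_mul (sum_sq_convolution_le_mulEnergy A V _)
        (sum_sq_convolution_le_mulEnergy A D _)

/-- The fourth moment `∑ r(u) ^ 4` of the number `r(u)` of representations of `u` as a quotient of
two elements of `A`. -/
def fourthEnergy (A : Finset G) : ℕ := ∑ u ∈ A / A, A.convolution A⁻¹ u ^ 4

/-- The pairs in `B × B` with quotient in `D` that the translation by `u` maps into `B × B`. -/
def shiftPairs (B D : Finset G) (u : G) : Finset (G × G) :=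
  {z ∈ B ×ˢ B | u * z.1 ∈ B ∧ u * z.2 ∈ B ∧ z.1 / z.2 ∈ D}

lemma card_shiftPairs_le_sq (B D : Finset G) (u : G) :
    (shiftPairs B D u).card ≤ B.convolution B⁻¹ u ^ 2 := by
  rw [sq, ← card_div_eq, ← card_product]
  refine card_le_card_of_injOn (fun z => ((u * z.1, z.1), (u * z.2, z.2))) ?_ ?_
  · rintro ⟨a, b⟩ h
    simp only [shiftPairs, mem_coe, mem_filter, mem_product, mul_div_cancel_right] at h ⊢
    tauto
  · rintro ⟨a, b⟩ _ ⟨a', b'⟩ _ h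
    simp only [Prod.mk.injEq] at h
    exact Prod.ext h.1.2 h.2.2

lemma sum_card_shiftPairs_le (B D S : Finset G) :
    ∑ u ∈ S, (shiftPairs B D u).card ≤ ∑ d ∈ D, B.convolution B⁻¹ d ^ 2 := by
  simp only [← card_div_eq, sq, ← card_product]
  rw [← card_sigma, ← card_sigma]
  refine card_le_card_of_injOn
    (fun z => ⟨z.2.1 / z.2.2, (z.2, (z.1 * z.2.1, z.1 * z.2.2))⟩) ?_ ?_
  · rintro ⟨u, a, b⟩ h
    simp only [shiftPairs, coe_sigma, Set.mem_sigma_iff, mem_coe, mem_filter, mem_product,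
      mul_div_mul_left_eq_div] at h ⊢
    tauto
  · rintro ⟨u, a, b⟩ _ ⟨u', a', b'⟩ _ h
    simp only [Sigma.mk.injEq, heq_eq_eq, Prod.mk.injEq] at h
    obtain ⟨_, ⟨rfl, rfl⟩, hu, _⟩ := h
    rw [mul_right_cancel hu]

lemma collisionCount_triples_le_sum {A B D : Finset G} {T : Finset ((G × G) × G)}
    (hT : T ⊆ {t ∈ (B ×ˢ B) ×ˢ A | t.1.1 / t.1.2 ∈ D}) :
    collisionCount T (fun t => (t.1.1 * t.2, t.1.2 * t.2)) ≤
      ∑ u ∈ A / A, A.convolution A⁻¹ u * (shiftPairs B D u).card := by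
  simp only [collisionCount, ← card_div_eq, ← card_product]
  rw [← card_sigma]
  refine card_le_card_of_injOn
    (fun z => ⟨z.1.2 / z.2.2, ((z.1.2, z.2.2), z.1.1)⟩) ?_ ?_
  · rintro ⟨⟨⟨a, b⟩, c⟩, ⟨⟨a', b'⟩, c'⟩⟩ h
    simp only [coe_filter, mem_product, Set.mem_ofPred_eq, Prod.mk.injEq] at h
    obtain ⟨⟨ht, ht'⟩, ha, hb⟩ := h
    have hmem := hT ht
    have hmem' := hT ht'
    simp only [mem_filter, mem_product] at hmem hmem'
    have shift {x x' : G} (hx : x * c = x' * c') : c / c' * x = x' := by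
      rw [div_mul_eq_mul_div, mul_comm c, hx, mul_div_cancel_right]
    simp only [shiftPairs, coe_sigma, Set.mem_sigma_iff, mem_coe, mem_filter, mem_product,
      shift ha, shift hb]
    exact ⟨div_mem_div hmem.1.2 hmem'.1.2, ⟨⟨hmem.1.2, hmem'.1.2⟩, trivial⟩, hmem.1.1,
      hmem'.1.1.1, hmem'.1.1.2, hmem.2⟩
  · rintro ⟨⟨⟨a, b⟩, c⟩, ⟨⟨a', b'⟩, c'⟩⟩ h ⟨⟨⟨x, y⟩, z⟩, ⟨⟨x', y'⟩, z'⟩⟩ hx heq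
    simp only [coe_filter, Set.mem_ofPred_eq, Prod.mk.injEq] at h hx
    simp only [Sigma.mk.injEq, heq_eq_eq, Prod.mk.injEq] at heq
    obtain ⟨_, ⟨rfl, rfl⟩, rfl, rfl⟩ := heq
    rw [mul_right_cancel (h.2.1.symm.trans hx.2.1), mul_right_cancel (h.2.2.symm.trans hx.2.2)]

lemma sq_collisionCount_triples_le {A B D : Finset G} {T : Finset ((G × G) × G)} (hBA : B ⊆ A)
    (hT : T ⊆ {t ∈ (B ×ˢ B) ×ˢ A | t.1.1 / t.1.2 ∈ D}) :
    collisionCount T (fun t => (t.1.1 * t.2, t.1.2 * t.2)) ^ 2 ≤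
      fourthEnergy A * ∑ d ∈ D, B.convolution B⁻¹ d ^ 2 := by
  have hpow (u : G) : A.convolution A⁻¹ u ^ 2 * (shiftPairs B D u).card ≤
      A.convolution A⁻¹ u ^ 4 := by
    have hconv : B.convolution B⁻¹ u ≤ A.convolution A⁻¹ u := by
      rw [← card_div_eq, ← card_div_eq]
      exact card_le_card (filter_subset_filter _ (product_subset_product hBA hBA))
    calc A.convolution A⁻¹ u ^ 2 * (shiftPairs B D u).card
        ≤ A.convolution A⁻¹ u ^ 2 * A.convolution A⁻¹ u ^ 2 := by
          gcongr
          exact (card_shiftPairs_le_sq B D u).trans (by gcongr)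
      _ = A.convolution A⁻¹ u ^ 4 := by ring
  calc collisionCount T (fun t => (t.1.1 * t.2, t.1.2 * t.2)) ^ 2
      ≤ (∑ u ∈ A / A, A.convolution A⁻¹ u * (shiftPairs B D u).card) ^ 2 :=
        Nat.pow_le_pow_left (collisionCount_triples_le_sum hT) 2
    _ ≤ (∑ u ∈ A / A, A.convolution A⁻¹ u ^ 2 * (shiftPairs B D u).card) *
          ∑ u ∈ A / A, (shiftPairs B D u).card :=
        sum_sq_le_sum_mul_sum_of_sq_le_mul _ (fun _ _ => Nat.zero_le _)
          (fun _ _ => Nat.zero_le _) fun u _ => (by ring : _ = _).le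
    _ ≤ fourthEnergy A * ∑ d ∈ D, B.convolution B⁻¹ d ^ 2 :=
        Nat.mul_le_mul (sum_le_sum fun u _ => hpow u) (sum_card_shiftPairs_le B D _)

end GroupEnergies

section DyadicLevels

open scoped Combinatorics.Additive

variable {G : Type*} [CommGroup G] [DecidableEq G]

/-- The elements of `B / B` whose number of representations as a quotient of two elements of `B`
lies in `[2 ^ i, 2 ^ (i + 1))`. -/
def dyadicLevel (B : Finset G) (i : ℕ) : Finset G :=
  {d ∈ B / B | Nat.log 2 (B.convolution B⁻¹ d) = i}

lemma convolution_inv_ne_zero_iff {B : Finset G} {d : G} :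
    B.convolution B⁻¹ d ≠ 0 ↔ d ∈ B / B := by
  rw [convolution_ne_zero, ← div_eq_mul_inv]

lemma dyadicLevel_subset_div (B : Finset G) (i : ℕ) : dyadicLevel B i ⊆ B / B :=
  filter_subset _ _

lemma two_pow_le_of_mem_dyadicLevel {B : Finset G} {i : ℕ} {d : G} (hd : d ∈ dyadicLevel B i) :
    2 ^ i ≤ B.convolution B⁻¹ d := by
  obtain ⟨hmem, rfl⟩ := mem_filter.1 hd
  exact Nat.pow_log_le_self 2 (convolution_inv_ne_zero_iff.2 hmem)

lemma le_of_mem_dyadicLevel {B : Finset G} {i : ℕ} {d : G} (hd : d ∈ dyadicLevel B i) :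
    B.convolution B⁻¹ d ≤ 2 * 2 ^ i := by
  obtain ⟨-, rfl⟩ := mem_filter.1 hd
  rw [← pow_succ']
  exact (Nat.lt_pow_succ_log_self one_lt_two _).le

lemma log_convolution_inv_mem_range (B : Finset G) (d : G) :
    Nat.log 2 (B.convolution B⁻¹ d) ∈ range (Nat.log 2 B.card + 1) :=
  mem_range_succ_iff.2 (Nat.log_mono_right convolution_le_card_left)

lemma sum_convolution_mul_le_sum_dyadicLevel (B : Finset G) (w : G → ℕ) :
    ∑ v ∈ B / B, B.convolution B⁻¹ v * w v ≤
      ∑ j ∈ range (Nat.log 2 B.card + 1), 2 * 2 ^ j * ∑ v ∈ dyadicLevel B j, w v := by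
  rw [← sum_fiberwise_of_maps_to fun v _ => log_convolution_inv_mem_range B v]
  refine sum_le_sum fun j _ => ?_
  rw [mul_sum]
  exact sum_le_sum fun v hv => Nat.mul_le_mul_right _ (le_of_mem_dyadicLevel hv)

lemma exists_dyadicLevel_nonempty_forall_le {B : Finset G} (hB : B.Nonempty) :
    ∃ i, (dyadicLevel B i).Nonempty ∧ ∀ j ∈ range (Nat.log 2 B.card + 1),
      (2 ^ j) ^ 4 * (dyadicLevel B j).card ^ 3 ≤ (2 ^ i) ^ 4 * (dyadicLevel B i).card ^ 3 := by
  obtain ⟨i, -, hmax⟩ := exists_max_image (range (Nat.log 2 B.card + 1))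
    (fun j => (2 ^ j) ^ 4 * (dyadicLevel B j).card ^ 3) nonempty_range_add_one
  refine ⟨i, ?_, hmax⟩
  have hone : (1 : G) ∈ dyadicLevel B (Nat.log 2 (B.convolution B⁻¹ 1)) :=
    mem_filter.2 ⟨hB.one_mem_div, rfl⟩
  have hpos : 0 < (2 ^ i) ^ 4 * (dyadicLevel B i).card ^ 3 :=
    lt_of_lt_of_le (Nat.mul_pos (by positivity) (Nat.pow_pos (card_pos.2 ⟨1, hone⟩)))
      (hmax _ (log_convolution_inv_mem_range B 1))
  exact card_pos.1 (Nat.pos_of_ne_zero (by rintro h; simp [h] at hpos))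

lemma card_filter_mul_div_mul_mem_le (A B D : Finset G) :
    #{q ∈ (B ×ˢ A) ×ˢ (B ×ˢ A) | q.1.1 * q.1.2 / (q.2.1 * q.2.2) ∈ D} ≤
      ∑ v ∈ B / B, B.convolution B⁻¹ v * #{q ∈ A ×ˢ A | v * q.1 / q.2 ∈ D} := by
  simp only [← card_div_eq, ← card_product]
  rw [← card_sigma]
  refine card_le_card_of_injOn
    (fun z => ⟨z.1.1 / z.2.1, ((z.1.1, z.2.1), (z.1.2, z.2.2))⟩) ?_ ?_
  · rintro ⟨⟨a, c⟩, ⟨b, e⟩⟩ h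
    simp only [coe_sigma, Set.mem_sigma_iff, mem_coe, mem_filter, mem_product] at h ⊢
    rw [div_mul_eq_mul_div, div_div]
    exact ⟨div_mem_div h.1.1.1 h.1.2.1, ⟨⟨h.1.1.1, h.1.2.1⟩, trivial⟩, ⟨h.1.1.2, h.1.2.2⟩, h.2⟩
  · rintro ⟨⟨a, c⟩, ⟨b, e⟩⟩ _ ⟨⟨a', c'⟩, ⟨b', e'⟩⟩ _ h
    simp only [Sigma.mk.injEq, heq_eq_eq, Prod.mk.injEq] at h
    obtain ⟨_, ⟨rfl, rfl⟩, rfl, rfl⟩ := h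
    rfl

lemma two_pow_mul_two_pow_mul_le_sqrt {A B : Finset G} {b H : ℝ} {i j : ℕ} (hb : 0 ≤ b)
    (henergy : ∀ U ⊆ B / B, (Eₘ[A, U] : ℝ) ^ 2 ≤ b * (U.card : ℝ) ^ 3)
    (hi : ((2 : ℝ) ^ i) ^ 4 * ((dyadicLevel B i).card : ℝ) ^ 3 ≤ H)
    (hj : ((2 : ℝ) ^ j) ^ 4 * ((dyadicLevel B j).card : ℝ) ^ 3 ≤ H) :
    (2 : ℝ) ^ j * 2 ^ i *
      (∑ v ∈ dyadicLevel B j, #{q ∈ A ×ˢ A | v * q.1 / q.2 ∈ dyadicLevel B i} : ℕ) ≤ √(b * H) := by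
  set N := ∑ v ∈ dyadicLevel B j, #{q ∈ A ×ˢ A | v * q.1 / q.2 ∈ dyadicLevel B i}
  have hH : 0 ≤ H := le_trans (by positivity) hi
  have hN : (N : ℝ) ^ 2 ≤ Eₘ[A, dyadicLevel B j] * Eₘ[A, dyadicLevel B i] := by
    exact_mod_cast sq_sum_card_filter_mul_div_mem_le A (dyadicLevel B j) (dyadicLevel B i)
  refine Real.le_sqrt_of_sq_le (abs_le_of_sq_le_sq' ?_ (by positivity)).2
  calc (((2 : ℝ) ^ j * 2 ^ i * N) ^ 2) ^ 2
      = (2 ^ j) ^ 4 * (2 ^ i) ^ 4 * ((N : ℝ) ^ 2) ^ 2 := by ring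
    _ ≤ (2 ^ j) ^ 4 * (2 ^ i) ^ 4 *
          ((Eₘ[A, dyadicLevel B j] : ℝ) * Eₘ[A, dyadicLevel B i]) ^ 2 := by gcongr
    _ = (2 ^ j) ^ 4 * (2 ^ i) ^ 4 *
          ((Eₘ[A, dyadicLevel B j] : ℝ) ^ 2 * (Eₘ[A, dyadicLevel B i] : ℝ) ^ 2) := by ring
    _ ≤ (2 ^ j) ^ 4 * (2 ^ i) ^ 4 * ((b * (dyadicLevel B j).card ^ 3) *
          (b * (dyadicLevel B i).card ^ 3)) := by
        gcongr
        · exact henergy _ (dyadicLevel_subset_div B j)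
        · exact henergy _ (dyadicLevel_subset_div B i)
    _ = b ^ 2 * ((2 ^ j) ^ 4 * (dyadicLevel B j).card ^ 3) *
          ((2 ^ i) ^ 4 * (dyadicLevel B i).card ^ 3) := by ring
    _ ≤ b ^ 2 * H * H := by gcongr
    _ = (b * H) ^ 2 := by ring

lemma card_filter_mul_div_mul_mem_dyadicLevel_le {A B : Finset G} {b : ℝ} {i : ℕ} (hb : 0 ≤ b)
    (henergy : ∀ U ⊆ B / B, (Eₘ[A, U] : ℝ) ^ 2 ≤ b * (U.card : ℝ) ^ 3)
    (hmax : ∀ j ∈ range (Nat.log 2 B.card + 1),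
      (2 ^ j) ^ 4 * (dyadicLevel B j).card ^ 3 ≤ (2 ^ i) ^ 4 * (dyadicLevel B i).card ^ 3) :
    (#{q ∈ (B ×ˢ A) ×ˢ (B ×ˢ A) | q.1.1 * q.1.2 / (q.2.1 * q.2.2) ∈ dyadicLevel B i} : ℝ) * 2 ^ i ≤
      2 * (Nat.log 2 B.card + 1) * √(b * ((2 ^ i) ^ 4 * (dyadicLevel B i).card ^ 3)) := by
  set D := dyadicLevel B i
  set H : ℝ := (2 ^ i) ^ 4 * (D.card : ℝ) ^ 3 with hH
  set N : ℕ → ℕ := fun j => ∑ v ∈ dyadicLevel B j, #{q ∈ A ×ˢ A | v * q.1 / q.2 ∈ D}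
  have hterm : ∀ j ∈ range (Nat.log 2 B.card + 1), (2 : ℝ) * (2 ^ j * 2 ^ i * N j) ≤ 2 * √(b * H) :=
    fun j hj => mul_le_mul_of_nonneg_left
      (two_pow_mul_two_pow_mul_le_sqrt hb henergy hH.ge (by rw [hH]; exact_mod_cast hmax j hj))
      zero_le_two
  have hcard : (#{q ∈ (B ×ˢ A) ×ˢ (B ×ˢ A) | q.1.1 * q.1.2 / (q.2.1 * q.2.2) ∈ D} : ℝ) ≤
      ∑ j ∈ range (Nat.log 2 B.card + 1), 2 * 2 ^ j * (N j : ℝ) := by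
    exact_mod_cast (card_filter_mul_div_mul_mem_le A B D).trans
      (sum_convolution_mul_le_sum_dyadicLevel B _)
  calc (#{q ∈ (B ×ˢ A) ×ˢ (B ×ˢ A) | q.1.1 * q.1.2 / (q.2.1 * q.2.2) ∈ D} : ℝ) * 2 ^ i
      ≤ (∑ j ∈ range (Nat.log 2 B.card + 1), 2 * 2 ^ j * (N j : ℝ)) * 2 ^ i := by gcongr
    _ = ∑ j ∈ range (Nat.log 2 B.card + 1), 2 * (2 ^ j * 2 ^ i * N j : ℝ) := by
        rw [sum_mul]
        exact sum_congr rfl fun j _ => by ring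
    _ ≤ ∑ j ∈ range (Nat.log 2 B.card + 1), 2 * √(b * H) := sum_le_sum hterm
    _ = 2 * (Nat.log 2 B.card + 1) * √(b * H) := by
        rw [sum_const, card_range, nsmul_eq_mul]
        push_cast
        ring

end DyadicLevels

section EnergyIncrement

open scoped Combinatorics.Additive

lemma pow_four_mul_pow_four_le_of_pow_four_le {n M δ τ d b K E X W : ℝ}
    (hM : 0 < M) (hτ : 0 < τ) (hd : 0 ≤ d) (hb : 0 ≤ b) (hE : 0 ≤ E) (hX : 0 ≤ X)
    (hpairs : (n / 2 * M) ^ 4 ≤ X ^ 2 * (E * (2 * τ * M))) (hXW : X * δ ^ 2 ≤ W)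
    (hW : (W * τ) ^ 2 ≤ 4 * K ^ 2 * (b * (τ ^ 4 * d ^ 3))) (hdM : τ * d ≤ M) :
    n ^ 4 * δ ^ 4 ≤ 128 * K ^ 2 * b * E := by
  refine le_of_mul_le_mul_right ?_ (by positivity : 0 < M ^ 4 * τ ^ 2)
  calc n ^ 4 * δ ^ 4 * (M ^ 4 * τ ^ 2) = 16 * ((n / 2 * M) ^ 4 * δ ^ 4 * τ ^ 2) := by ring
    _ ≤ 16 * (X ^ 2 * (E * (2 * τ * M)) * δ ^ 4 * τ ^ 2) := by gcongr
    _ = 16 * (E * (2 * τ * M)) * ((X * δ ^ 2) ^ 2 * τ ^ 2) := by ring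
    _ ≤ 16 * (E * (2 * τ * M)) * (W ^ 2 * τ ^ 2) := by gcongr
    _ = 16 * (E * (2 * τ * M)) * (W * τ) ^ 2 := by ring
    _ ≤ 16 * (E * (2 * τ * M)) * (4 * K ^ 2 * (b * (τ ^ 4 * d ^ 3))) := by gcongr
    _ = 128 * K ^ 2 * b * E * (M * τ ^ 2) * (τ * d) ^ 3 := by ring
    _ ≤ 128 * K ^ 2 * b * E * (M * τ ^ 2) * M ^ 3 := by gcongr
    _ = 128 * K ^ 2 * b * E * (M ^ 4 * τ ^ 2) := by ring

variable {G : Type*} [CommGroup G] [DecidableEq G]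

/- Cauchy–Schwarz on the triples `(a, b, c) ∈ B × B × A` with `a / b ∈ D` and `a * c, b * c ∈ P`,
mapped to the pairs `(a * c, b * c)`. -/
lemma pow_four_le_sq_card_filter_mul_fourthEnergy {A B D P : Finset G} (hBA : B ⊆ A)
    (hP : ∀ a ∈ B, (#{c ∈ A | a * c ∉ P} : ℝ) ≤ A.card / 4) :
    ((A.card : ℝ) / 2 * ∑ d ∈ D, (B.convolution B⁻¹ d : ℝ)) ^ 4 ≤
      (#{z ∈ P ×ˢ P | z.1 / z.2 ∈ D} : ℝ) ^ 2 *
        (fourthEnergy A * ∑ d ∈ D, (B.convolution B⁻¹ d : ℝ) ^ 2) := by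
  set X : Finset (G × G) := {z ∈ P ×ˢ P | z.1 / z.2 ∈ D} with hX
  set T : Finset ((G × G) × G) :=
    {t ∈ (B ×ˢ B) ×ˢ A | t.1.1 / t.1.2 ∈ D ∧ t.1.1 * t.2 ∈ P ∧ t.1.2 * t.2 ∈ P} with hT
  set c := collisionCount T fun t => (t.1.1 * t.2, t.1.2 * t.2)
  have hcard : (A.card : ℝ) / 2 * ∑ d ∈ D, (B.convolution B⁻¹ d : ℝ) ≤ T.card :=
    le_trans (by linarith) (sub_mul_card_le_card_filter_mul_mem hP)
  have hmaps : ∀ t ∈ T, (t.1.1 * t.2, t.1.2 * t.2) ∈ X := fun t ht => by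
    simp only [hT, hX, mem_filter, mem_product, mul_div_mul_right_eq_div] at ht ⊢
    exact ⟨ht.2.2, ht.2.1⟩
  have hTX : (T.card : ℝ) ^ 2 ≤ X.card * c := by
    have hsq := sq_card_filter_mem_le T (fun t => (t.1.1 * t.2, t.1.2 * t.2)) X
    rw [filter_true_of_mem hmaps] at hsq
    exact_mod_cast hsq
  have hsub : T ⊆ {t ∈ (B ×ˢ B) ×ˢ A | t.1.1 / t.1.2 ∈ D} :=
    monotone_filter_right _ fun _ _ ht => ht.1
  have hcollisions : (c : ℝ) ^ 2 ≤ fourthEnergy A * ∑ d ∈ D, (B.convolution B⁻¹ d : ℝ) ^ 2 := by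
    exact_mod_cast sq_collisionCount_triples_le hBA hsub
  calc ((A.card : ℝ) / 2 * ∑ d ∈ D, (B.convolution B⁻¹ d : ℝ)) ^ 4
      ≤ (T.card : ℝ) ^ 4 := by gcongr
    _ = ((T.card : ℝ) ^ 2) ^ 2 := by ring
    _ ≤ (X.card * c) ^ 2 := by gcongr
    _ = (X.card : ℝ) ^ 2 * (c : ℝ) ^ 2 := mul_pow _ _ _
    _ ≤ _ := by gcongr

lemma card_pow_four_mul_pow_four_le {A B : Finset G} {b δ : ℝ} (hBA : B ⊆ A) (hB : B.Nonempty)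
    (hb : 0 ≤ b) (hδ : 0 ≤ δ)
    (henergy : ∀ U ⊆ A / A, (Eₘ[A, U] : ℝ) ^ 2 ≤ b * (U.card : ℝ) ^ 3)
    (hpopular : ∀ a ∈ B,
      (#{c ∈ A | (B.convolution A (a * c) : ℝ) ≤ δ} : ℝ) ≤ A.card / 4) :
    (A.card : ℝ) ^ 4 * δ ^ 4 ≤
      128 * (Nat.log 2 A.card + 1 : ℝ) ^ 2 * b * fourthEnergy A := by
  obtain ⟨i, hD, hmax⟩ := exists_dyadicLevel_nonempty_forall_le hB
  set D := dyadicLevel B i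
  set P : Finset G := {x ∈ B * A | δ < B.convolution A x} with hP
  set M := ∑ d ∈ D, (B.convolution B⁻¹ d : ℝ) with hM
  have hpopular' : ∀ a ∈ B, (#{c ∈ A | a * c ∉ P} : ℝ) ≤ A.card / 4 := by
    refine fun a ha => le_trans (Nat.cast_le.2 (card_le_card fun c hc => ?_)) (hpopular a ha)
    simp only [hP, mem_filter, not_and, not_lt] at hc ⊢
    exact ⟨hc.1, hc.2 (mul_mem_mul ha hc.1)⟩
  have hpairs := pow_four_le_sq_card_filter_mul_fourthEnergy (D := D) hBA hpopular'
  have hsq : ∑ d ∈ D, (B.convolution B⁻¹ d : ℝ) ^ 2 ≤ 2 * 2 ^ i * M := by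
    rw [hM, mul_sum]
    refine sum_le_sum fun d hd => ?_
    rw [sq]
    gcongr
    exact_mod_cast le_of_mem_dyadicLevel hd
  have hXW := card_filter_div_mem_mul_sq_le (A := A) (B := B) (D := D) (P := P) hδ
    fun x hx => (mem_filter.1 hx).2.le
  have hW := card_filter_mul_div_mul_mem_dyadicLevel_le hb
    (fun U hU => henergy U (hU.trans (div_subset_div hBA hBA))) hmax
  have hDM : 2 ^ i * (D.card : ℝ) ≤ M := by
    rw [mul_comm, ← nsmul_eq_mul]
    exact card_nsmul_le_sum _ _ _ fun d hd => by exact_mod_cast two_pow_le_of_mem_dyadicLevel hd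
  have hMpos : 0 < M :=
    lt_of_lt_of_le (mul_pos (by positivity) (Nat.cast_pos.2 hD.card_pos)) hDM
  refine pow_four_mul_pow_four_le_of_pow_four_le hMpos (τ := 2 ^ i) (by positivity)
    (Nat.cast_nonneg D.card) hb (Nat.cast_nonneg _) (Nat.cast_nonneg _)
    (hpairs.trans (by gcongr)) hXW ?_ hDM
  refine (pow_le_pow_left₀ (by positivity) hW 2).trans ?_
  rw [mul_pow, Real.sq_sqrt (by positivity), mul_pow]
  norm_num only
  gcongr

theorem card_pow_twelve_le_mul_fourthEnergy {A : Finset G} (hA : A.Nonempty) {b : ℝ} (hb : 0 ≤ b)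
    (henergy : ∀ U ⊆ A / A, (Eₘ[A, U] : ℝ) ^ 2 ≤ b * (U.card : ℝ) ^ 3) :
    (A.card : ℝ) ^ 12 ≤
      524288 * (Nat.log 2 A.card + 1 : ℝ) ^ 2 * b * ((A * A).card : ℝ) ^ 4 * fourthEnergy A := by
  have hcard : (0 : ℝ) < A.card := Nat.cast_pos.2 hA.card_pos
  have : (0 : ℝ) < (A * A).card := Nat.cast_pos.2 (hA.mul hA).card_pos
  set δ : ℝ := A.card ^ 2 / (8 * (A * A).card) with hδ
  obtain ⟨B, hBA, hB, hpopular⟩ := exists_subset_card_filter_convolution_le (A := A) (C := A)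
    (δ := δ) (κ := A.card / 4) (by positivity) (by
      rw [hδ]
      field_simp
      linarith)
  have hpow := card_pow_four_mul_pow_four_le hBA hB hb (by positivity) henergy hpopular
  calc (A.card : ℝ) ^ 12 = 4096 * (A * A).card ^ 4 * (A.card ^ 4 * δ ^ 4) := by
        rw [hδ]
        field_simp
        norm_num
    _ ≤ 4096 * (A * A).card ^ 4 *
          (128 * (Nat.log 2 A.card + 1 : ℝ) ^ 2 * b * fourthEnergy A) := by gcongr
    _ = 524288 * (Nat.log 2 A.card + 1 : ℝ) ^ 2 * b * (A * A).card ^ 4 * fourthEnergy A := by ring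

end EnergyIncrement

/-! ### Lines attached to `f` -/

section Configurations

lemma card_le_mul_card_of_card_fiber_le {ι κ X T : Type*} [DecidableEq T]
    {A : Finset X} {w : X → T} {m : ℕ} (hm : ∀ t, #{x ∈ A | w x = t} ≤ m)
    {s : Finset ι} {t : Finset κ} (φ : ι → κ) (e : ι → X)
    (hφ : ∀ i ∈ s, φ i ∈ t) (he : ∀ i ∈ s, e i ∈ A)
    (hw : ∀ i ∈ s, ∀ j ∈ s, φ i = φ j → w (e i) = w (e j))
    (hinj : ∀ i ∈ s, ∀ j ∈ s, φ i = φ j → e i = e j → i = j) :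
    s.card ≤ m * t.card := by
  classical
  refine card_le_mul_card_image_of_maps_to hφ m fun k _ => ?_
  obtain hempty | ⟨i, hi⟩ := {j ∈ s | φ j = k}.eq_empty_or_nonempty
  · simp only [hempty, card_empty, zero_le]
  obtain ⟨his, rfl⟩ := mem_filter.1 hi
  refine (card_le_card_of_injOn e (t := {x ∈ A | w x = w (e i)}) ?_ ?_).trans (hm _)
  · intro j hj
    obtain ⟨hjs, hji⟩ := mem_filter.1 hj
    exact mem_filter.2 ⟨he j hjs, hw j hjs i his hji⟩
  · intro j hj j' hj' hjj'
    obtain ⟨hjs, hji⟩ := mem_filter.1 hj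
    obtain ⟨hjs', hji'⟩ := mem_filter.1 hj'
    exact hinj j hjs j' hjs' (hji.trans hji'.symm) hjj'

lemma card_le_card_of_subset_image_of_injective {X Y T P : Type*} [DecidableEq P]
    {A : Finset X} {D : Finset Y} {w : X → T} {l : X × Y → P} {S : Finset P}
    (hS : S ⊆ (A ×ˢ D).image l)
    (hinj : ∀ z z', l z ∈ S → l z' ∈ S → w z.1 = w z'.1 → l z = l z') : S.card ≤ A.card := by
  refine card_le_card_of_forall_subsingleton (fun q x => ∃ y, l (x, y) = q) ?_ ?_
  · intro q hq
    obtain ⟨z, hz, rfl⟩ := mem_image.1 (hS hq)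
    exact ⟨z.1, (mem_product.1 hz).1, z.2, rfl⟩
  · rintro x _ _ ⟨hq, y, rfl⟩ _ ⟨hq', y', rfl⟩
    exact hinj _ _ hq hq' rfl

variable {F : Type*} [Field F] [DecidableEq F]

lemma atMostOnLine_image {X Y T : Type*} [DecidableEq T]
    {A : Finset X} {D : Finset Y} {w : X → T} {m : ℕ} (hm : ∀ t, #{x ∈ A | w x = t} ≤ m)
    {l : X × Y → F × F}
    (hl : ∀ α β γ : F, (α ≠ 0 ∨ β ≠ 0) →
      (∀ z z', α * (l z).1 + β * (l z).2 = γ → α * (l z').1 + β * (l z').2 = γ →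
        w z.1 = w z'.1) ∨
      (∀ z z', α * (l z).1 + β * (l z).2 = γ → α * (l z').1 + β * (l z').2 = γ →
        w z.1 = w z'.1 → l z = l z')) :
    AtMostOnLine ((A ×ˢ D).image l) (A.card + m * D.card) := by
  intro α β γ hαβ S hS hline
  rcases hl α β γ hαβ with hconst | hinj
  · have hpreimage : S.card ≤ #{z ∈ A ×ˢ D | l z ∈ S} := by
      refine (card_le_card fun q hq => ?_).trans (card_image_le (f := l))
      obtain ⟨z, hz, rfl⟩ := mem_image.1 (hS hq)
      exact mem_image_of_mem l (mem_filter.2 ⟨hz, hq⟩)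
    refine (hpreimage.trans ?_).trans (Nat.le_add_left _ _)
    refine card_le_mul_card_of_card_fiber_le hm Prod.snd Prod.fst ?_ ?_ ?_
      fun z _ z' _ hsnd hfst => Prod.ext hfst hsnd
    · exact fun z hz => (mem_product.1 (mem_filter.1 hz).1).2
    · exact fun z hz => (mem_product.1 (mem_filter.1 hz).1).1
    · exact fun z hz z' hz' _ =>
        hconst z z' (hline _ (mem_filter.1 hz).2) (hline _ (mem_filter.1 hz').2)
  · refine le_trans ?_ (Nat.le_add_right _ _)
    exact card_le_card_of_subset_image_of_injective hS fun z z' hz hz' =>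
      hinj z z' (hline _ hz) (hline _ hz')

variable (g h : Fˣ → Fˣ) (A : Finset Fˣ)

/-- The set `f(A, A)` of values of `f(x, y) = g(x) (h(x) + y)`, as elements of the field. -/
def valueSet : Finset F := image₂ (fun x y : Fˣ => (g x : F) * (h x + y)) A A

/-- The line `b ↦ f(x, d b) = g(x) d b + g(x) h(x)` attached to `(x, d)`, as the pair of its slope
and its intercept. -/
def dilateLine (z : Fˣ × Fˣ) : F × F := (g z.1 * z.2, g z.1 * h z.1)

/-- The line `s ↦ u / g(x) * s - h(x) u` attached to `(x, u)`, as the pair of its slope and its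
intercept: it sends the value `f(x, a)` to `a u`. -/
def quotientLine (z : Fˣ × Fˣ) : F × F := (z.2 / g z.1, -(h z.1 * z.2))

lemma card_le_card_valueSet (hA : A.Nonempty) : A.card ≤ (valueSet g h A).card := by
  obtain ⟨x, hx⟩ := hA
  refine card_le_card_of_injOn (fun y => (g x : F) * (h x + y))
    (fun y hy => mem_image₂_of_mem hx hy) fun y _ y' _ hy => ?_
  exact Units.ext (add_left_cancel (mul_left_cancel₀ (g x).ne_zero hy))

variable {A} {m : ℕ} (hm : ∀ t, #{x ∈ A | g x * h x = t} ≤ m)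

include hm

lemma atMostOnLine_image_dilateLine (D : Finset Fˣ) :
    AtMostOnLine ((A ×ˢ D).image (dilateLine g h)) (A.card + m * D.card) := by
  refine atMostOnLine_image hm fun α β γ hαβ => ?_
  simp only [dilateLine, Units.ext_iff, Units.val_mul, Prod.mk.injEq]
  obtain rfl | hα := eq_or_ne α 0
  · have hβ : β ≠ 0 := hαβ.resolve_left (not_not.2 rfl)
    exact .inl fun z z' hz hz' => mul_left_cancel₀ hβ (by linear_combination hz - hz')
  · exact .inr fun z z' hz hz' hw =>
      ⟨mul_left_cancel₀ hα (by linear_combination hz - hz' - β * hw), hw⟩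

lemma atMostOnLine_image_quotientLine (U : Finset Fˣ) :
    AtMostOnLine ((A ×ˢ U).image (quotientLine g h)) (A.card + m * U.card) := by
  refine atMostOnLine_image hm fun α β γ hαβ => ?_
  have hsnd (z : Fˣ × Fˣ) :
      (quotientLine g h z).2 = -((g z.1 * h z.1 : Fˣ) : F) * (quotientLine g h z).1 := by
    have := (g z.1).ne_zero
    simp only [quotientLine, Units.val_mul]
    field_simp
  have hfst (z : Fˣ × Fˣ) : (quotientLine g h z).1 ≠ 0 := div_ne_zero z.2.ne_zero (g z.1).ne_zero
  have hfactor (z : Fˣ × Fˣ) (hz : α * (quotientLine g h z).1 + β * (quotientLine g h z).2 = γ) :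
      (α - β * (g z.1 * h z.1 : Fˣ)) * (quotientLine g h z).1 = γ := by
    rw [hsnd] at hz
    linear_combination hz
  obtain rfl | hγ := eq_or_ne γ 0
  · have hroot (z : Fˣ × Fˣ) (hz : α * (quotientLine g h z).1 + β * (quotientLine g h z).2 = 0) :
        α = β * (g z.1 * h z.1 : Fˣ) :=
      sub_eq_zero.1 ((mul_eq_zero.1 (hfactor z hz)).resolve_right (hfst z))
    refine .inl fun z z' hz hz' => Units.ext (mul_left_cancel₀ (a := β) ?_ ?_)
    · rintro rfl
      exact hαβ.elim (fun hα => hα (by simpa only [zero_mul] using hroot z hz)) (· rfl)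
    · rw [← hroot z hz, ← hroot z' hz']
  · refine .inr fun z z' hz hz' hw => ?_
    have hz := hfactor z hz
    have hz' := hfactor z' hz'
    rw [← hw] at hz'
    have hfst_eq : (quotientLine g h z).1 = (quotientLine g h z').1 :=
      mul_left_cancel₀ (left_ne_zero_of_mul (hz ▸ hγ)) (hz.trans hz'.symm)
    exact Prod.ext hfst_eq (by rw [hsnd z, hsnd z', hw, hfst_eq])

/- If `a / b ∈ D` with `a, b ∈ A`, then the line attached to `(x, a / b)` takes at `b` the value
`f(x, a)`. -/
lemma card_mul_sum_convolution_inv_le (D : Finset Fˣ) :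
    A.card * ∑ d ∈ D, A.convolution A⁻¹ d ≤
      m * #{v ∈ A.image Units.val ×ˢ (A ×ˢ D).image (dilateLine g h) |
        affineEval v ∈ valueSet g h A} := by
  rw [← card_filter_div_mem, ← card_product]
  refine card_le_mul_card_of_card_fiber_le hm
    (fun t : Fˣ × Fˣ × Fˣ => ((t.2.2 : F), dilateLine g h (t.1, t.2.1 / t.2.2)))
    Prod.fst ?_ ?_ ?_ ?_
  · rintro ⟨x, a, b⟩ ht
    simp only [mem_product, mem_filter] at ht ⊢
    refine ⟨⟨mem_image_of_mem _ ht.2.1.2, mem_image_of_mem _ (mem_product.2 ⟨ht.1, ht.2.2⟩)⟩, ?_⟩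
    refine mem_image₂.2 ⟨x, ht.1, a, ht.2.1.1, ?_⟩
    have := b.ne_zero
    simp only [affineEval, dilateLine, Units.val_div_eq_div_val]
    field_simp
    ring
  · exact fun t ht => (mem_product.1 ht).1
  · intro t _ t' _ ht
    exact Units.ext (congrArg (fun v => v.2.2) ht)
  · rintro ⟨x, a, b⟩ _ ⟨x', a', b'⟩ _ ht rfl
    simp only [dilateLine, Prod.mk.injEq, Units.val_inj] at ht
    obtain ⟨rfl, hdiv, _⟩ := ht
    have hdiv := Units.ext (mul_left_cancel₀ (g x).ne_zero hdiv)
    rw [div_left_inj] at hdiv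
    rw [hdiv]

lemma card_mul_convolution_le (U : Finset Fˣ) (z : Fˣ) :
    A.card * A.convolution U z ≤
      m * #{v ∈ valueSet g h A ×ˢ (A ×ˢ U).image (quotientLine g h) | affineEval v = (z : F)} := by
  rw [convolution, ← card_product]
  refine card_le_mul_card_of_card_fiber_le hm
    (fun t : Fˣ × Fˣ × Fˣ => ((g t.1 : F) * (h t.1 + t.2.1), quotientLine g h (t.1, t.2.2)))
    Prod.fst ?_ ?_ ?_ ?_
  · rintro ⟨x, a, u⟩ ht
    simp only [mem_product, mem_filter] at ht ⊢
    obtain ⟨hx, ⟨ha, hu⟩, rfl⟩ := ht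
    refine ⟨⟨mem_image₂_of_mem hx ha, mem_image_of_mem _ (mem_product.2 ⟨hx, hu⟩)⟩, ?_⟩
    have := (g x).ne_zero
    simp only [affineEval, quotientLine, Units.val_mul]
    field_simp
    ring
  · exact fun t ht => (mem_product.1 ht).1
  · rintro ⟨x, a, u⟩ _ ⟨x', a', u'⟩ _ ht
    simp only [quotientLine, Prod.mk.injEq, neg_inj, ← Units.val_div_eq_div_val, ← Units.val_mul,
      Units.val_inj] at ht
    obtain ⟨_, hslope, hintercept⟩ := ht
    calc g x * h x = h x * u / (u / g x) := by rw [mul_div_assoc, div_div_cancel, mul_comm]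
      _ = h x' * u' / (u' / g x') := by rw [hslope, hintercept]
      _ = g x' * h x' := by rw [mul_div_assoc, div_div_cancel, mul_comm]
  · rintro ⟨x, a, u⟩ _ ⟨x', a', u'⟩ _ ht rfl
    simp only [quotientLine, Prod.mk.injEq, ← Units.val_div_eq_div_val, Units.val_inj,
      div_left_inj] at ht
    obtain ⟨hvalue, rfl, _⟩ := ht
    rw [Units.ext (add_left_cancel (mul_left_cancel₀ (g x).ne_zero hvalue))]

end Configurations

section Variance

variable {F : Type*} [Field F] [Fintype F]

lemma sum_comp_mul_add (φ : F → ℝ) (y : F) :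
    ∑ l : F × F, φ (l.1 * y + l.2) = Fintype.card F * ∑ z, φ z := by
  have htranslate (a : F) : ∑ b, φ (a * y + b) = ∑ z, φ z :=
    Equiv.sum_comp (Equiv.addLeft (a * y)) φ
  simp only [Fintype.sum_prod_type, htranslate, sum_const, card_univ, nsmul_eq_mul]

lemma sum_comp_mul_add_mul_comp_mul_add (φ : F → ℝ) {y y' : F} (hy : y ≠ y') :
    ∑ l : F × F, φ (l.1 * y + l.2) * φ (l.1 * y' + l.2) = (∑ z, φ z) ^ 2 := by
  classical
  have hinj : Function.Injective fun l : F × F => (l.1 * y + l.2, l.1 * y' + l.2) := by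
    intro l l' hl
    simp only [Prod.mk.injEq] at hl
    have hslope : l.1 = l'.1 :=
      mul_right_cancel₀ (sub_ne_zero.2 hy) (by linear_combination hl.1 - hl.2)
    exact Prod.ext hslope (by linear_combination hl.1 - y * hslope)
  calc ∑ l : F × F, φ (l.1 * y + l.2) * φ (l.1 * y' + l.2)
      = ∑ v : F × F, φ v.1 * φ v.2 :=
        (Finite.injective_iff_bijective.1 hinj).sum_comp fun v => φ v.1 * φ v.2
    _ = (∑ z, φ z) ^ 2 := by rw [Fintype.sum_prod_type, sq, sum_mul_sum]

/- Distinct points `y` are uncorrelated: a line takes independent values at them. -/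
lemma sum_sq_sum_comp_mul_add {φ : F → ℝ} (hφ : ∑ z, φ z = 0) (Y : Finset F) :
    ∑ l : F × F, (∑ y ∈ Y, φ (l.1 * y + l.2)) ^ 2 =
      Fintype.card F * Y.card * ∑ z, φ z ^ 2 := by
  classical
  have hpair : ∀ y ∈ Y, ∑ y' ∈ Y, ∑ l : F × F, φ (l.1 * y + l.2) * φ (l.1 * y' + l.2) =
      Fintype.card F * ∑ z, φ z ^ 2 := by
    intro y hy
    rw [sum_eq_single_of_mem y hy fun y' _ hy' => by
      rw [sum_comp_mul_add_mul_comp_mul_add φ hy'.symm, hφ, sq, zero_mul]]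
    simp only [← sq]
    exact sum_comp_mul_add (fun z => φ z ^ 2) y
  calc ∑ l : F × F, (∑ y ∈ Y, φ (l.1 * y + l.2)) ^ 2
      = ∑ y ∈ Y, ∑ y' ∈ Y, ∑ l : F × F, φ (l.1 * y + l.2) * φ (l.1 * y' + l.2) := by
        simp only [sq, sum_mul_sum]
        rw [sum_comm]
        exact sum_congr rfl fun y _ => sum_comm
    _ = Fintype.card F * Y.card * ∑ z, φ z ^ 2 := by
        rw [sum_congr rfl hpair, sum_const, nsmul_eq_mul]
        ring

lemma sq_sum_comp_affineEval_le_of_sum_eq_zero {φ : F → ℝ} (hφ : ∑ z, φ z = 0) (Y : Finset F)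
    (L : Finset (F × F)) :
    (∑ v ∈ Y ×ˢ L, φ (affineEval v)) ^ 2 ≤
      Fintype.card F * (Y.card * L.card) * ∑ z, φ z ^ 2 := by
  calc (∑ v ∈ Y ×ˢ L, φ (affineEval v)) ^ 2
      = (∑ l ∈ L, ∑ y ∈ Y, φ (l.1 * y + l.2)) ^ 2 := by rw [sum_product_right]; rfl
    _ ≤ L.card * ∑ l ∈ L, (∑ y ∈ Y, φ (l.1 * y + l.2)) ^ 2 := sq_sum_le_card_mul_sum_sq
    _ ≤ L.card * ∑ l : F × F, (∑ y ∈ Y, φ (l.1 * y + l.2)) ^ 2 := by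
        gcongr
        exact subset_univ L
    _ = Fintype.card F * (Y.card * L.card) * ∑ z, φ z ^ 2 := by
        rw [sum_sq_sum_comp_mul_add hφ]
        ring

theorem sq_sum_comp_affineEval_sub_le (φ : F → ℝ) (Y : Finset F) (L : Finset (F × F)) :
    (∑ v ∈ Y ×ˢ L, φ (affineEval v) - Y.card * L.card * (∑ z, φ z) / Fintype.card F) ^ 2 ≤
      Fintype.card F * (Y.card * L.card) * ∑ z, φ z ^ 2 := by
  have hq : (0 : ℝ) < Fintype.card F := by exact_mod_cast Fintype.card_pos
  have hcard : (0 : ℝ) ≤ Fintype.card F * (Y.card * L.card) := by positivity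
  set mean : ℝ := (∑ z, φ z) / Fintype.card F with hmean
  have hsum : ∑ z, φ z = Fintype.card F * mean := by rw [hmean, mul_div_cancel₀ _ hq.ne']
  have hcentred : ∑ z, (φ z - mean) = 0 := by
    rw [sum_sub_distrib, sum_const, nsmul_eq_mul, card_univ, hsum, sub_self]
  have hvariance : ∑ z, (φ z - mean) ^ 2 ≤ ∑ z, φ z ^ 2 := by
    have hexpand : ∑ z, (φ z - mean) ^ 2 = ∑ z, φ z ^ 2 - Fintype.card F * mean ^ 2 := by
      simp only [sub_sq]
      rw [sum_add_distrib, sum_sub_distrib, ← sum_mul, ← mul_sum, hsum, sum_const, nsmul_eq_mul,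
        card_univ]
      ring
    rw [hexpand]
    exact sub_le_self _ (by positivity)
  calc (∑ v ∈ Y ×ˢ L, φ (affineEval v) - Y.card * L.card * (∑ z, φ z) / Fintype.card F) ^ 2
      = (∑ v ∈ Y ×ˢ L, (φ (affineEval v) - mean)) ^ 2 := by
        rw [sum_sub_distrib, sum_const, nsmul_eq_mul, card_product, Nat.cast_mul, mul_div_assoc]
    _ ≤ Fintype.card F * (Y.card * L.card) * ∑ z, (φ z - mean) ^ 2 :=
        sq_sum_comp_affineEval_le_of_sum_eq_zero hcentred Y L
    _ ≤ Fintype.card F * (Y.card * L.card) * ∑ z, φ z ^ 2 :=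
        mul_le_mul_of_nonneg_left hvariance hcard

/- The two alternatives are the main term and the error term of the second moment estimate. -/
lemma card_mul_sum_comp_affineEval_le_or (φ : F → ℕ) (Y : Finset F)
    (L : Finset (F × F)) :
    Fintype.card F * ∑ v ∈ Y ×ˢ L, φ (affineEval v) ≤ 2 * (Y.card * L.card) * ∑ z, φ z ∨
      (∑ v ∈ Y ×ˢ L, φ (affineEval v)) ^ 2 ≤
        4 * (Fintype.card F * (Y.card * L.card)) * ∑ z, φ z ^ 2 := by
  refine or_iff_not_imp_left.2 fun herror => ?_
  set I := ∑ v ∈ Y ×ˢ L, φ (affineEval v) with hI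
  set q := Fintype.card F with hq
  have hvariance := sq_sum_comp_affineEval_sub_le (fun z => (φ z : ℝ)) Y L
  simp only [← Nat.cast_sum, ← hI, ← hq] at hvariance
  set mean : ℝ := Y.card * L.card * (∑ z, φ z : ℕ) / q with hmean
  have hmean_le : mean ≤ I / 2 := by
    rw [hmean, div_le_div_iff₀ (by exact_mod_cast Fintype.card_pos) two_pos]
    have : Y.card * L.card * (∑ z, φ z) * 2 ≤ I * q := by lia
    exact_mod_cast this
  have hI_sq : (I : ℝ) ^ 2 ≤ 4 * (q * (Y.card * L.card)) * ∑ z, (φ z : ℝ) ^ 2 := by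
    calc (I : ℝ) ^ 2 = 4 * ((I : ℝ) / 2) ^ 2 := by ring
      _ ≤ 4 * ((I : ℝ) - mean) ^ 2 := by
          gcongr
          linarith
      _ ≤ 4 * (q * (Y.card * L.card) * ∑ z, (φ z : ℝ) ^ 2) := by gcongr
      _ = _ := by ring
  exact_mod_cast hI_sq

end Variance

/-! ### Energy bounds -/

lemma sum_pow_le_of_forall_pow_mul_card_le {ι : Type*} (s : Finset ι) (f : ι → ℕ) {n e B : ℕ}
    (he : e ≠ 0) (hf : ∀ x ∈ s, f x ≤ n)
    (hB : ∀ ρ ≠ 0, ρ ^ e * #{x ∈ s | ρ ≤ f x} ≤ B) :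
    ∑ x ∈ s, f x ^ e ≤ 2 ^ e * (Nat.log 2 n + 1) * B := by
  have hdyadic : ∀ x ∈ s, f x ^ e ≤
      ∑ j ∈ range (Nat.log 2 n + 1), if 2 ^ j ≤ f x then 2 ^ e * (2 ^ j) ^ e else 0 := by
    intro x hx
    obtain h0 | h0 := eq_or_ne (f x) 0
    · simp only [h0, zero_pow he, zero_le]
    refine le_trans ?_ (single_le_sum (fun _ _ => Nat.zero_le _)
      (mem_range_succ_iff.2 (Nat.log_mono_right (hf x hx))))
    rw [if_pos (Nat.pow_log_le_self 2 h0), ← mul_pow, ← pow_succ']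
    exact Nat.pow_le_pow_left (Nat.lt_pow_succ_log_self one_lt_two _).le e
  calc ∑ x ∈ s, f x ^ e
      ≤ ∑ x ∈ s, ∑ j ∈ range (Nat.log 2 n + 1),
          if 2 ^ j ≤ f x then 2 ^ e * (2 ^ j) ^ e else 0 := sum_le_sum hdyadic
    _ = ∑ j ∈ range (Nat.log 2 n + 1), 2 ^ e * ((2 ^ j) ^ e * #{x ∈ s | 2 ^ j ≤ f x}) := by
        rw [sum_comm]
        refine sum_congr rfl fun j _ => ?_
        rw [← sum_filter, sum_const, smul_eq_mul]
        ring
    _ ≤ ∑ j ∈ range (Nat.log 2 n + 1), 2 ^ e * B := by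
        gcongr with j
        exact hB _ (pow_ne_zero j two_ne_zero)
    _ = 2 ^ e * (Nat.log 2 n + 1) * B := by
        rw [sum_const, card_range, smul_eq_mul]
        ring

section FourthEnergy

variable {p : ℕ} [Fact p.Prime]

lemma natCast_factorial_ne_zero {n : ℕ} (hn : n < p) : (n.factorial : ZMod p) ≠ 0 := by
  rw [Ne, ZMod.natCast_eq_zero_iff, (Fact.out : p.Prime).dvd_factorial]
  exact hn.not_ge

lemma sq_collisionCount_affineEval_le {Y : Finset (ZMod p)} {L : Finset (ZMod p × ZMod p)}
    {k N m K : ℕ} (hm : 1 ≤ m) (hK : 1 ≤ K) (hY : Y.card ≤ k) (hL : AtMostOnLine L k)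
    (hN : Y.card * L.card ≤ N) (hNp : 144 * N < p ^ 2) (hNK : N ≤ 2 ^ (5 * K))
    (hk : k ^ 2 ≤ (3 * m) ^ 2 * N) :
    collisionCount (Y ×ˢ L) affineEval ^ 2 ≤ (60000 * m * K) ^ 2 * N ^ 3 := by
  have hchar : 6 * Nat.sqrt (4 * (Y.card * L.card)) < p := by
    refine lt_of_pow_lt_pow_left₀ 2 (Nat.zero_le p) ?_
    have := Nat.sqrt_le' (4 * (Y.card * L.card))
    rw [mul_pow]
    lia
  have hsq : √(N : ℝ) ^ 2 = N := Real.sq_sqrt N.cast_nonneg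
  have hkM : (k : ℝ) ≤ 3 * m * √N := by
    refine (sq_le_sq₀ k.cast_nonneg (by positivity)).1 ?_
    rw [mul_pow, hsq]
    exact_mod_cast hk
  have hmK : (1 : ℝ) ≤ m * K := by exact_mod_cast one_le_mul hm hK
  have hJ : (collisionCount (Y ×ˢ L) affineEval : ℝ) ≤ 60000 * m * K * √N ^ 3 := by
    calc (collisionCount (Y ×ˢ L) affineEval : ℝ)
        ≤ 43500 * √N ^ 3 + 936 * k * (5 * K : ℕ) * √N ^ 2 :=
          collisionCount_affineEval_le hY hL (natCast_factorial_ne_zero hchar) (Real.sqrt_nonneg _)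
            (by rw [hsq]; exact_mod_cast hN) (hN.trans hNK)
      _ ≤ 43500 * (m * K * √N ^ 3) + 936 * (3 * m * √N) * (5 * K : ℕ) * √N ^ 2 := by
          gcongr
          exact le_mul_of_one_le_left (by positivity) hmK
      _ = 57540 * (m * K * √N ^ 3) := by
          push_cast
          ring
      _ ≤ 60000 * (m * K * √N ^ 3) := by gcongr; norm_num
      _ = 60000 * m * K * √N ^ 3 := by ring
  have hJ_sq : (collisionCount (Y ×ˢ L) affineEval : ℝ) ^ 2 ≤ (60000 * m * K) ^ 2 * N ^ 3 := by
    calc (collisionCount (Y ×ˢ L) affineEval : ℝ) ^ 2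
        ≤ (60000 * m * K * √N ^ 3) ^ 2 := by gcongr
      _ = (60000 * m * K) ^ 2 * (√N ^ 2) ^ 3 := by ring
      _ = (60000 * m * K) ^ 2 * N ^ 3 := by rw [hsq]
  exact_mod_cast hJ_sq

lemma le_two_pow_log_add_one (n : ℕ) : n ≤ 2 ^ (Nat.log 2 n + 1) :=
  (Nat.lt_pow_succ_log_self one_lt_two n).le

variable {g h : (ZMod p)ˣ → (ZMod p)ˣ} {A : Finset (ZMod p)ˣ} {m : ℕ}

lemma sq_add_mul_le {n d m : ℕ} (hm : 1 ≤ m) (hd : 0 < d) (hdn : d ≤ n ^ 2) :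
    (n + m * d) ^ 2 ≤ (3 * m) ^ 2 * (n ^ 2 * d) := by
  have hn_sq : n ^ 2 ≤ m ^ 2 * (n ^ 2 * d) := by
    calc n ^ 2 = 1 * (n ^ 2 * 1) := by ring
      _ ≤ m ^ 2 * (n ^ 2 * d) := by gcongr; exacts [Nat.one_le_pow _ _ hm, hd]
  calc (n + m * d) ^ 2 ≤ 2 * (n ^ 2 + (m * d) ^ 2) := add_sq_le
    _ = 2 * (n ^ 2 + m ^ 2 * (d * d)) := by ring
    _ ≤ 2 * (m ^ 2 * (n ^ 2 * d) + m ^ 2 * (n ^ 2 * d)) := by gcongr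
    _ ≤ (3 * m) ^ 2 * (n ^ 2 * d) := by lia

lemma pow_four_mul_card_le_of_lt (hm : 1 ≤ m) (hfiber : ∀ t, #{x ∈ A | g x * h x = t} ≤ m)
    {D : Finset (ZMod p)ˣ} {ρ : ℕ} (hD : D.Nonempty) (hDA : D.card ≤ A.card ^ 2)
    (hρ : ∀ d ∈ D, ρ ≤ A.convolution A⁻¹ d) (hp : 144 * (A.card ^ 2 * D.card) < p ^ 2) :
    ρ ^ 4 * D.card ≤
      (60000 * m ^ 3 * (Nat.log 2 A.card + 1) * (valueSet g h A).card * A.card) ^ 2 := by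
  set n := A.card
  set d := D.card
  set S := (valueSet g h A).card
  set Y := A.image Units.val
  set L := (A ×ˢ D).image (dilateLine g h)
  have hd : 0 < d := hD.card_pos
  have hn : 0 < n := Nat.pos_of_ne_zero fun h0 => by simp only [h0] at hDA; lia
  have hY : Y.card = n := card_image_of_injective A Units.val_injective
  have hL : L.card ≤ n * d := card_image_le.trans_eq (card_product A D)
  have hrich : n * (d * ρ) ≤ m * #{v ∈ Y ×ˢ L | affineEval v ∈ valueSet g h A} := by
    refine le_trans ?_ (card_mul_sum_convolution_inv_le g h hfiber D)
    gcongr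
    exact card_nsmul_le_sum D _ ρ hρ
  have hcollision : collisionCount (Y ×ˢ L) affineEval ^ 2 ≤
      (60000 * m * (Nat.log 2 n + 1)) ^ 2 * (n ^ 2 * d) ^ 3 := by
    refine sq_collisionCount_affineEval_le hm (Nat.le_add_left 1 _)
      (hY.trans_le (Nat.le_add_right n _)) (atMostOnLine_image_dilateLine g h hfiber D) ?_ hp ?_ ?_
    · rw [hY, sq, mul_assoc]
      gcongr
    · calc n ^ 2 * d ≤ n ^ 2 * n ^ 2 := by gcongr
        _ = n ^ 4 := by ring
        _ ≤ n ^ 5 := Nat.pow_le_pow_right hn (by norm_num)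
        _ ≤ (2 ^ (Nat.log 2 n + 1)) ^ 5 := by gcongr; exact le_two_pow_log_add_one n
        _ = 2 ^ (5 * (Nat.log 2 n + 1)) := by rw [← pow_mul, mul_comm]
    · exact sq_add_mul_le hm hd hDA
  have hquartic : (n ^ 4 * d ^ 3) * (ρ ^ 4 * d) ≤ (n ^ 4 * d ^ 3) *
      (60000 * m ^ 3 * (Nat.log 2 n + 1) * S * n) ^ 2 := by
    calc (n ^ 4 * d ^ 3) * (ρ ^ 4 * d) = ((n * (d * ρ)) ^ 2) ^ 2 := by ring
      _ ≤ ((m * #{v ∈ Y ×ˢ L | affineEval v ∈ valueSet g h A}) ^ 2) ^ 2 := by gcongr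
      _ = m ^ 4 * (#{v ∈ Y ×ˢ L | affineEval v ∈ valueSet g h A} ^ 2) ^ 2 := by ring
      _ ≤ m ^ 4 * (S * collisionCount (Y ×ˢ L) affineEval) ^ 2 := by
          gcongr
          exact sq_card_filter_mem_le _ _ _
      _ = m ^ 4 * S ^ 2 * collisionCount (Y ×ˢ L) affineEval ^ 2 := by ring
      _ ≤ m ^ 4 * S ^ 2 * ((60000 * m * (Nat.log 2 n + 1)) ^ 2 * (n ^ 2 * d) ^ 3) := by gcongr
      _ = _ := by ring
  exact le_of_mul_le_mul_left hquartic (by positivity)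

lemma pow_four_mul_le_of_sq_le {n ρ d q : ℕ} (hn : 0 < n) (hq : n ^ 5 ≤ q ^ 3)
    (hρd : ρ * d ≤ n ^ 2) (hqd : q ^ 2 ≤ 144 * (n ^ 2 * d)) : ρ ^ 4 * d ≤ 144 ^ 3 * n ^ 4 := by
  have hρq : ρ * q ^ 2 ≤ 144 * n ^ 4 := by
    calc ρ * q ^ 2 ≤ ρ * (144 * (n ^ 2 * d)) := by gcongr
      _ = 144 * n ^ 2 * (ρ * d) := by ring
      _ ≤ 144 * n ^ 2 * n ^ 2 := by gcongr
      _ = 144 * n ^ 4 := by ring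
  have hcube : n ^ 10 * ρ ^ 3 ≤ n ^ 10 * (144 ^ 3 * n ^ 2) := by
    calc n ^ 10 * ρ ^ 3 = (n ^ 5) ^ 2 * ρ ^ 3 := by ring
      _ ≤ (q ^ 3) ^ 2 * ρ ^ 3 := by gcongr
      _ = (ρ * q ^ 2) ^ 3 := by ring
      _ ≤ (144 * n ^ 4) ^ 3 := by gcongr
      _ = n ^ 10 * (144 ^ 3 * n ^ 2) := by ring
  calc ρ ^ 4 * d = ρ ^ 3 * (ρ * d) := by ring
    _ ≤ 144 ^ 3 * n ^ 2 * n ^ 2 := by gcongr; exact le_of_mul_le_mul_left hcube (by positivity)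
    _ = 144 ^ 3 * n ^ 4 := by ring

theorem fourthEnergy_le (hA : A.Nonempty) (hm : 1 ≤ m)
    (hfiber : ∀ t, #{x ∈ A | g x * h x = t} ≤ m) (hp : A.card ^ 5 ≤ p ^ 3) :
    fourthEnergy A ≤ 2 ^ 4 * (Nat.log 2 A.card + 1) *
      (60000 * m ^ 3 * (Nat.log 2 A.card + 1) * (valueSet g h A).card * A.card) ^ 2 := by
  refine sum_pow_le_of_forall_pow_mul_card_le _ _ four_ne_zero
    (fun u _ => convolution_le_card_left) fun ρ hρ => ?_
  set D := {u ∈ A / A | ρ ≤ A.convolution A⁻¹ u}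
  have hlevel : ∀ u ∈ D, ρ ≤ A.convolution A⁻¹ u := fun u hu => (mem_filter.1 hu).2
  have hρD : ρ * D.card ≤ A.card ^ 2 := by
    calc ρ * D.card = D.card • ρ := by rw [smul_eq_mul, mul_comm]
      _ ≤ ∑ u ∈ D, A.convolution A⁻¹ u := card_nsmul_le_sum D _ ρ hlevel
      _ ≤ A.card ^ 2 := by
        rw [← card_filter_div_mem, sq, ← card_product]
        exact card_filter_le _ _
  obtain hempty | hne := D.eq_empty_or_nonempty
  · simp only [hempty, card_empty, mul_zero, zero_le]
  by_cases hsmall : 144 * (A.card ^ 2 * D.card) < p ^ 2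
  · exact pow_four_mul_card_le_of_lt hm hfiber hne
      ((Nat.le_mul_of_pos_left _ (Nat.pos_of_ne_zero hρ)).trans hρD) hlevel hsmall
  · calc ρ ^ 4 * D.card
        ≤ 144 ^ 3 * A.card ^ 4 := pow_four_mul_le_of_sq_le hA.card_pos hp hρD (not_lt.1 hsmall)
      _ ≤ 60000 ^ 2 * A.card ^ 4 := Nat.mul_le_mul_right _ (by norm_num)
      _ = (60000 * 1 ^ 3 * 1 * A.card * A.card) ^ 2 := by ring
      _ ≤ _ := by
        gcongr
        exacts [Nat.le_add_left 1 _, card_le_card_valueSet g h A hA]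

end FourthEnergy

section EnergyBound

open scoped Combinatorics.Additive

lemma mulEnergy_le_card_mul_card_sq {G : Type*} [Group G] [DecidableEq G] (A B : Finset G) :
    Eₘ[A, B] ≤ A.card * B.card ^ 2 := by
  calc Eₘ[A, B] = ∑ x ∈ A * B, A.convolution B x * A.convolution B x := by
        rw [mulEnergy_eq_sum_sq']
        exact sum_congr rfl fun x _ => sq (A.convolution B x)
    _ ≤ ∑ x ∈ A * B, A.convolution B x * B.card := by
        gcongr
        exact convolution_le_card_right
    _ = (A ×ˢ B).card * B.card := by
        rw [← sum_mul]
        congr 1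
        refine (card_eq_sum_card_fiberwise fun q hq => ?_).symm
        obtain ⟨hA, hB⟩ := mem_product.1 hq
        exact mul_mem_mul hA hB
    _ = A.card * B.card ^ 2 := by
        rw [card_product, mul_assoc, sq]

section Field

variable {F : Type*} [Field F] [DecidableEq F]

/-- The number of representations of a field element `z`, possibly zero, as a product `a * u` with
`a ∈ A` and `u ∈ U`; it extends `A.convolution U` from the units to the whole field. -/
def productCount (A U : Finset Fˣ) (z : F) : ℕ := #{q ∈ A ×ˢ U | (q.1 * q.2 : F) = z}

lemma productCount_coe (A U : Finset Fˣ) (z : Fˣ) :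
    productCount A U (z : F) = A.convolution U z := by
  simp only [productCount, convolution, ← Units.val_mul, Units.val_inj]

lemma sum_productCount [Fintype F] (A U : Finset Fˣ) :
    ∑ z : F, productCount A U z = A.card * U.card := by
  rw [← card_product]
  exact (card_eq_sum_card_fiberwise fun _ _ => mem_coe.2 (mem_univ _)).symm

lemma sum_sq_productCount [Fintype F] (A U : Finset Fˣ) :
    ∑ z : F, productCount A U z ^ 2 = Eₘ[A, U] := by
  rw [mulEnergy_eq_sum_sq]
  refine (Fintype.sum_of_injective Units.val Units.val_injective _ _ (fun z hz => ?_)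
    fun z => ?_).symm
  · refine (pow_eq_zero_iff two_ne_zero).2 (card_eq_zero.2 (filter_eq_empty_iff.2 fun q _ hq => ?_))
    exact hz ⟨q.1 * q.2, by rw [Units.val_mul, hq]⟩
  · rw [productCount_coe, convolution]

variable (g h : Fˣ → Fˣ) {A : Finset Fˣ} {m : ℕ} (hm : ∀ t, #{x ∈ A | g x * h x = t} ≤ m)

include hm

lemma card_sq_mul_mulEnergy_le (U : Finset Fˣ) :
    A.card ^ 2 * Eₘ[A, U] ≤ m ^ 2 *
      collisionCount (valueSet g h A ×ˢ (A ×ˢ U).image (quotientLine g h)) affineEval := by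
  set s := valueSet g h A ×ˢ (A ×ˢ U).image (quotientLine g h)
  calc A.card ^ 2 * Eₘ[A, U] = ∑ z ∈ A * U, (A.card * A.convolution U z) ^ 2 := by
        simp only [mul_pow, ← mul_sum, mulEnergy_eq_sum_sq', convolution]
    _ ≤ ∑ z ∈ A * U, (m * #{v ∈ s | affineEval v = (z : F)}) ^ 2 :=
        sum_le_sum fun z _ => Nat.pow_le_pow_left (card_mul_convolution_le g h hm U z) 2
    _ = m ^ 2 * ∑ z ∈ (A * U).image Units.val, #{v ∈ s | affineEval v = z} ^ 2 := by
        rw [sum_image Units.val_injective.injOn]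
        simp only [mul_pow, mul_sum]
    _ ≤ m ^ 2 * collisionCount s affineEval := by
        gcongr
        exact sum_sq_card_filter_eq_le_collisionCount _ _ _

lemma card_mul_mulEnergy_le (U : Finset Fˣ) :
    A.card * Eₘ[A, U] ≤ m * ∑ v ∈ valueSet g h A ×ˢ (A ×ˢ U).image (quotientLine g h),
      productCount A U (affineEval v) := by
  set s := valueSet g h A ×ˢ (A ×ˢ U).image (quotientLine g h)
  calc A.card * Eₘ[A, U]
      = ∑ z ∈ A * U, A.card * A.convolution U z * A.convolution U z := by
        simp only [mulEnergy_eq_sum_sq', convolution, mul_sum, sq, mul_assoc]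
    _ ≤ ∑ z ∈ A * U, m * #{v ∈ s | affineEval v = (z : F)} * A.convolution U z :=
        sum_le_sum fun z _ => Nat.mul_le_mul_right _ (card_mul_convolution_le g h hm U z)
    _ = m * ∑ z ∈ (A * U).image Units.val,
          ∑ v ∈ s with affineEval v = z, productCount A U (affineEval v) := by
        rw [sum_image Units.val_injective.injOn, mul_sum]
        refine sum_congr rfl fun z _ => ?_
        rw [sum_congr rfl fun v hv => by rw [(mem_filter.1 hv).2, productCount_coe], sum_const,
          smul_eq_mul, mul_assoc]
    _ ≤ m * ∑ v ∈ s, productCount A U (affineEval v) := by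
        gcongr
        exact sum_fiberwise_le_sum_of_sum_fiber_nonneg fun _ _ => Nat.zero_le _

lemma card_mul_mulEnergy_le_or [Fintype F] (U : Finset Fˣ) :
    Fintype.card F * (A.card * Eₘ[A, U]) ≤
        2 * m * (valueSet g h A).card * (A.card * U.card) ^ 2 ∨
      A.card * Eₘ[A, U] ≤ 4 * m ^ 2 * Fintype.card F * (valueSet g h A).card * U.card := by
  set q := Fintype.card F
  set S := (valueSet g h A).card
  set L := (A ×ˢ U).image (quotientLine g h)
  set E := Eₘ[A, U]
  set I := ∑ v ∈ valueSet g h A ×ˢ L, productCount A U (affineEval v)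
  have hI : A.card * E ≤ m * I := card_mul_mulEnergy_le g h hm U
  have hL : L.card ≤ A.card * U.card := card_image_le.trans_eq (card_product A U)
  refine (card_mul_sum_comp_affineEval_le_or (productCount A U) (valueSet g h A) L).imp ?_ ?_
  · intro hmain
    rw [sum_productCount] at hmain
    calc q * (A.card * E) ≤ q * (m * I) := by gcongr
      _ = m * (q * I) := by ring
      _ ≤ m * (2 * (S * L.card) * (A.card * U.card)) := by gcongr
      _ ≤ m * (2 * (S * (A.card * U.card)) * (A.card * U.card)) := by gcongr
      _ = 2 * m * S * (A.card * U.card) ^ 2 := by ring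
  · intro herror
    rw [sum_sq_productCount] at herror
    obtain hzero | hpos := (A.card * E).eq_zero_or_pos
    · simp only [hzero, zero_le]
    refine le_of_mul_le_mul_right ?_ hpos
    calc A.card * E * (A.card * E) ≤ m * I * (m * I) := by gcongr
      _ = m ^ 2 * I ^ 2 := by ring
      _ ≤ m ^ 2 * (4 * (q * (S * L.card)) * E) := by gcongr
      _ ≤ m ^ 2 * (4 * (q * (S * (A.card * U.card))) * E) := by gcongr
      _ = 4 * m ^ 2 * q * S * U.card * (A.card * E) := by ring

end Field

lemma sq_add_add_mul_le {n u S m : ℕ} (hn : 0 < n) (hm : 1 ≤ m) (hnS : n ≤ S) (hSu : S ≤ n * u)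
    (hun : u ≤ n ^ 2) : (S + (n + m * u)) ^ 2 ≤ (3 * m) ^ 2 * (S * (n * u)) := by
  have hu : 0 < u := Nat.pos_of_mul_pos_left (hn.trans_le (hnS.trans hSu))
  have hS_sq : S ^ 2 ≤ S * (n * u) := sq S ▸ Nat.mul_le_mul_left S hSu
  have hn_sq : n ^ 2 ≤ S * (n * u) := by
    calc n ^ 2 = n * (n * 1) := by ring
      _ ≤ S * (n * u) := by gcongr; exact hu
  have hu_sq : u ^ 2 ≤ S * (n * u) := by
    calc u ^ 2 = u * u := sq u
      _ ≤ n ^ 2 * u := by gcongr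
      _ = n * (n * u) := by ring
      _ ≤ S * (n * u) := by gcongr
  calc (S + (n + m * u)) ^ 2 ≤ 3 * (S ^ 2 + n ^ 2 + (m * u) ^ 2) := by
        linarith [two_mul_le_add_sq S n, two_mul_le_add_sq S (m * u),
          two_mul_le_add_sq n (m * u)]
    _ = 3 * (1 * S ^ 2 + 1 * n ^ 2 + m ^ 2 * u ^ 2) := by ring
    _ ≤ 3 * (m ^ 2 * (S * (n * u)) + m ^ 2 * (S * (n * u)) + m ^ 2 * (S * (n * u))) := by
        gcongr <;> exact Nat.one_le_pow _ _ hm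
    _ = (3 * m) ^ 2 * (S * (n * u)) := by ring

lemma sq_mulEnergy_mul_card_le_of_mul_le {G : Type*} [Group G] [DecidableEq G] {A B : Finset G}
    {W : ℕ} (hW : A.card * B.card ≤ W) : Eₘ[A, B] ^ 2 * A.card ≤ (W * B.card) ^ 3 := by
  calc Eₘ[A, B] ^ 2 * A.card ≤ (A.card * B.card ^ 2) ^ 2 * A.card := by
        gcongr
        exact mulEnergy_le_card_mul_card_sq A B
    _ = (A.card * B.card) ^ 3 * B.card := by ring
    _ ≤ W ^ 3 * B.card ^ 3 := by
        gcongr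
        exact Nat.le_self_pow three_ne_zero _
    _ = (W * B.card) ^ 3 := (mul_pow _ _ _).symm

section EnergyOverPrimeField

variable {p : ℕ} [Fact p.Prime] {g h : (ZMod p)ˣ → (ZMod p)ˣ} {A U : Finset (ZMod p)ˣ} {m : ℕ}

lemma sq_mulEnergy_mul_card_le_of_lt (hA : A.Nonempty) (hm : 1 ≤ m)
    (hfiber : ∀ t, #{x ∈ A | g x * h x = t} ≤ m) (hU : U.card ≤ A.card ^ 2)
    (hSU : (valueSet g h A).card ≤ A.card * U.card)
    (hp : 144 * ((valueSet g h A).card * (A.card * U.card)) < p ^ 2) :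
    Eₘ[A, U] ^ 2 * A.card ≤
      (60000 * m ^ 3 * (Nat.log 2 A.card + 1)) ^ 2 * ((valueSet g h A).card * U.card) ^ 3 := by
  have hSn : (valueSet g h A).card ≤ A.card * A.card := card_image₂_le _ A A
  have hnS : A.card ≤ (valueSet g h A).card := card_le_card_valueSet g h A hA
  set n := A.card
  set u := U.card
  set S := (valueSet g h A).card
  set E := Eₘ[A, U]
  set L := (A ×ˢ U).image (quotientLine g h)
  have hn : 0 < n := hA.card_pos
  have hL : L.card ≤ n * u := card_image_le.trans_eq (card_product A U)
  have hcollision : collisionCount (valueSet g h A ×ˢ L) affineEval ^ 2 ≤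
      (60000 * m * (Nat.log 2 n + 1)) ^ 2 * (S * (n * u)) ^ 3 := by
    refine sq_collisionCount_affineEval_le (k := S + (n + m * u)) hm (Nat.le_add_left 1 _)
      (Nat.le_add_right S _)
      ((atMostOnLine_image_quotientLine g h hfiber U).mono (Nat.le_add_left _ S))
      (Nat.mul_le_mul_left S hL) hp ?_ ?_
    · calc S * (n * u) ≤ n * n * (n * n ^ 2) := by gcongr
        _ = n ^ 5 := by ring
        _ ≤ (2 ^ (Nat.log 2 n + 1)) ^ 5 := by gcongr; exact le_two_pow_log_add_one n
        _ = 2 ^ (5 * (Nat.log 2 n + 1)) := by rw [← pow_mul, mul_comm]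
    · exact sq_add_add_mul_le hn hm hnS hSU hU
  have hquartic : n ^ 3 * (E ^ 2 * n) ≤
      n ^ 3 * ((60000 * m ^ 3 * (Nat.log 2 n + 1)) ^ 2 * (S * u) ^ 3) := by
    calc n ^ 3 * (E ^ 2 * n) = (n ^ 2 * E) ^ 2 := by ring
      _ ≤ (m ^ 2 * collisionCount (valueSet g h A ×ˢ L) affineEval) ^ 2 :=
          Nat.pow_le_pow_left (card_sq_mul_mulEnergy_le g h hfiber U) 2
      _ = m ^ 4 * collisionCount (valueSet g h A ×ˢ L) affineEval ^ 2 := by ring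
      _ ≤ m ^ 4 * ((60000 * m * (Nat.log 2 n + 1)) ^ 2 * (S * (n * u)) ^ 3) := by gcongr
      _ = _ := by ring
  exact le_of_mul_le_mul_left hquartic (by positivity)

lemma sq_mulEnergy_mul_card_le_of_le (hA : A.Nonempty) (hm : 1 ≤ m)
    (hfiber : ∀ t, #{x ∈ A | g x * h x = t} ≤ m) {W : ℕ} (hS : (valueSet g h A).card ≤ W)
    (hUW : U.card * A.card ≤ W ^ 2) (hWp : A.card ^ 2 * W ≤ p ^ 2)
    (hp : p ^ 2 ≤ 144 * ((valueSet g h A).card * (A.card * U.card))) :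
    Eₘ[A, U] ^ 2 * A.card ≤ 2304 * m ^ 4 * (W * U.card) ^ 3 := by
  have hmain := card_mul_mulEnergy_le_or g h hfiber U
  rw [ZMod.card] at hmain
  have hn : 0 < A.card := hA.card_pos
  set n := A.card
  set u := U.card
  set S := (valueSet g h A).card
  set E := Eₘ[A, U]
  rcases hmain with hmain | herror
  · have hp0 : 0 < n ^ 2 * p ^ 2 := by
      have := (Fact.out : p.Prime).pos
      positivity
    refine le_of_mul_le_mul_left ?_ hp0
    calc n ^ 2 * p ^ 2 * (E ^ 2 * n) = (p * (n * E)) ^ 2 * n := by ring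
      _ ≤ (2 * m * S * (n * u) ^ 2) ^ 2 * n := by gcongr
      _ = 4 * m ^ 2 * n ^ 2 * (S ^ 2 * (u * n) * n ^ 2 * u ^ 3) := by ring
      _ ≤ 4 * m ^ 2 * n ^ 2 * (W ^ 2 * W ^ 2 * n ^ 2 * u ^ 3) := by gcongr
      _ = 4 * m ^ 2 * n ^ 2 * (n ^ 2 * W) * (W * u) ^ 3 := by ring
      _ ≤ 2304 * m ^ 4 * n ^ 2 * p ^ 2 * (W * u) ^ 3 := by
        gcongr <;> norm_num
      _ = n ^ 2 * p ^ 2 * (2304 * m ^ 4 * (W * u) ^ 3) := by ring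
  · refine le_of_mul_le_mul_left ?_ hn
    calc n * (E ^ 2 * n) = (n * E) ^ 2 := by ring
      _ ≤ (4 * m ^ 2 * p * S * u) ^ 2 := by gcongr
      _ = 16 * m ^ 4 * (S * u) ^ 2 * p ^ 2 := by ring
      _ ≤ 16 * m ^ 4 * (S * u) ^ 2 * (144 * (S * (n * u))) := by gcongr
      _ = 2304 * m ^ 4 * (S * u) ^ 3 * n := by ring
      _ ≤ 2304 * m ^ 4 * (W * u) ^ 3 * n := by gcongr
      _ = n * (2304 * m ^ 4 * (W * u) ^ 3) := by ring

theorem sq_mulEnergy_mul_card_le (hA : A.Nonempty) (hm : 1 ≤ m)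
    (hfiber : ∀ t, #{x ∈ A | g x * h x = t} ≤ m) (hp : A.card ^ 5 ≤ p ^ 3) {W : ℕ}
    (hS : (valueSet g h A).card ≤ W) (hAA : (A * A).card ≤ W) (hW : W ^ 3 ≤ A.card ^ 4)
    (hU : U ⊆ A / A) :
    Eₘ[A, U] ^ 2 * A.card ≤
      (60000 * m ^ 3 * (Nat.log 2 A.card + 1)) ^ 2 * (W * U.card) ^ 3 := by
  obtain hsmall | hSU := le_or_gt (A.card * U.card) (valueSet g h A).card
  · refine (sq_mulEnergy_mul_card_le_of_mul_le (hsmall.trans hS)).trans ?_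
    exact Nat.le_mul_of_pos_left _ (by positivity)
  have hUW : U.card * A.card ≤ W ^ 2 := by
    calc U.card * A.card ≤ (A / A).card * A.card := by gcongr
      _ ≤ (A * A).card * (A * A).card := ruzsa_triangle_inequality_div_mul_mul A A A
      _ ≤ W ^ 2 := by
        rw [sq]
        gcongr
  have hWp : A.card ^ 2 * W ≤ p ^ 2 := by
    refine le_of_pow_le_pow_left₀ three_ne_zero (Nat.zero_le _) ?_
    calc (A.card ^ 2 * W) ^ 3 = A.card ^ 6 * W ^ 3 := by ring
      _ ≤ A.card ^ 6 * A.card ^ 4 := by gcongr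
      _ = (A.card ^ 5) ^ 2 := by ring
      _ ≤ (p ^ 3) ^ 2 := by gcongr
      _ = (p ^ 2) ^ 3 := by ring
  obtain hlt | hle := lt_or_ge (144 * ((valueSet g h A).card * (A.card * U.card))) (p ^ 2)
  · have hUA : U.card ≤ A.card ^ 2 := (card_le_card hU).trans (sq A.card ▸ card_div_le)
    refine (sq_mulEnergy_mul_card_le_of_lt hA hm hfiber hUA hSU.le hlt).trans ?_
    gcongr
  · refine (sq_mulEnergy_mul_card_le_of_le hA hm hfiber hS hUW hWp hle).trans ?_
    gcongr
    calc 2304 * m ^ 4 ≤ 60000 ^ 2 * m ^ 6 * 1 ^ 2 := by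
          rw [one_pow, mul_one]
          gcongr <;> norm_num
      _ = (60000 * m ^ 3 * 1) ^ 2 := by ring
      _ ≤ _ := by
          gcongr
          exact Nat.le_add_left 1 _

end EnergyOverPrimeField

end EnergyBound

section Assembly

open scoped Combinatorics.Additive

variable {p : ℕ} [Fact p.Prime]

theorem card_pow_eleven_le_of_units {g h : (ZMod p)ˣ → (ZMod p)ˣ} {A : Finset (ZMod p)ˣ} {m W : ℕ}
    (hA : A.Nonempty) (hm : 1 ≤ m) (hfiber : ∀ t, #{x ∈ A | g x * h x = t} ≤ m)
    (hp : A.card ^ 5 ≤ p ^ 3) (hS : (valueSet g h A).card ≤ W) (hAA : (A * A).card ≤ W) :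
    A.card ^ 11 ≤
      2 ^ 23 * 60000 ^ 4 * m ^ 12 * (Nat.log 2 A.card + 1) ^ 7 * W ^ 9 := by
  have hn : 0 < A.card := hA.card_pos
  obtain hW | hW := lt_or_ge (A.card ^ 4) (W ^ 3)
  · calc A.card ^ 11 ≤ A.card ^ 12 := Nat.pow_le_pow_right hn (by norm_num)
      _ = (A.card ^ 4) ^ 3 := by ring
      _ ≤ (W ^ 3) ^ 3 := by gcongr
      _ = W ^ 9 := by ring
      _ ≤ _ := Nat.le_mul_of_pos_left _ (by positivity)
  set n := A.card
  set K := Nat.log 2 n + 1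
  have henergy : ∀ U ⊆ A / A, (Eₘ[A, U] : ℝ) ^ 2 ≤
      (60000 * m ^ 3 * K) ^ 2 * W ^ 3 / n * (U.card : ℝ) ^ 3 := by
    intro U hU
    rw [div_mul_eq_mul_div, le_div_iff₀ (by exact_mod_cast hn), mul_assoc, ← mul_pow]
    exact_mod_cast sq_mulEnergy_mul_card_le hA hm hfiber hp hS hAA hW hU
  have htwelve : (n : ℝ) ^ 12 ≤ 524288 * (K : ℝ) ^ 2 *
      ((60000 * m ^ 3 * K) ^ 2 * W ^ 3 / n) * (A * A).card ^ 4 * fourthEnergy A := by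
    simpa only [K, Nat.cast_add_one] using
      card_pow_twelve_le_mul_fourthEnergy hA (by positivity) henergy
  have hfourth : fourthEnergy A ≤ 2 ^ 4 * K * (60000 * m ^ 3 * K * W * n) ^ 2 := by
    refine (fourthEnergy_le hA hm hfiber hp).trans ?_
    gcongr
  have heleven : (n * n ^ 11 : ℝ) ≤ n * (2 ^ 23 * 60000 ^ 4 * m ^ 12 * K ^ 7 * W ^ 9) := by
    calc (n * n ^ 11 : ℝ) = (n : ℝ) ^ 12 := by ring
      _ ≤ 524288 * (K : ℝ) ^ 2 * ((60000 * m ^ 3 * K) ^ 2 * W ^ 3 / n) * (A * A).card ^ 4 *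
          fourthEnergy A := htwelve
      _ ≤ 524288 * (K : ℝ) ^ 2 * ((60000 * m ^ 3 * K) ^ 2 * W ^ 3 / n) * W ^ 4 *
          (2 ^ 4 * K * (60000 * m ^ 3 * K * W * n) ^ 2) := by
        gcongr
        exact_mod_cast hfourth
      _ = n * (2 ^ 23 * 60000 ^ 4 * m ^ 12 * K ^ 7 * W ^ 9) := by
        field_simp
        ring
  exact_mod_cast le_of_mul_le_mul_left heleven (by exact_mod_cast hn)

lemma card_filter_units_mul_le_mu {g h : ZMod p → ZMod p} (g' h' : (ZMod p)ˣ → (ZMod p)ˣ)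
    (hg : ∀ x, (g' x : ZMod p) = g x) (hh : ∀ x, (h' x : ZMod p) = h x) (t : (ZMod p)ˣ) :
    #{x | g' x * h' x = t} ≤ mu fun x => g x * h x := by
  refine le_trans ?_ (le_sup (b := (t : ZMod p)) (mem_filter.2 ⟨mem_univ _, t.ne_zero⟩))
  refine card_le_card_of_injOn Units.val (fun x hx => ?_) Units.val_injective.injOn
  refine mem_filter.2 ⟨mem_univ _, x.ne_zero, ?_⟩
  dsimp only
  rw [← hg, ← hh, ← Units.val_mul, (mem_filter.1 hx).2]

theorem card_pow_eleven_le {g h : ZMod p → ZMod p} (hg : ∀ x ≠ 0, g x ≠ 0) (hh : ∀ x ≠ 0, h x ≠ 0)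
    {m : ℕ} (hm : 1 ≤ m) (hmu : mu (fun x => g x * h x) ≤ m) {A : Finset (ZMod p)}
    (hA : A.Nonempty) (hA0 : 0 ∉ A) (hp : A.card ^ 5 ≤ p ^ 3) :
    A.card ^ 11 ≤ 2 ^ 23 * 60000 ^ 4 * m ^ 12 * (Nat.log 2 A.card + 1) ^ 7 *
      max (image₂ (fun x y => g x * (h x + y)) A A).card (A * A).card ^ 9 := by
  obtain ⟨B, -, rfl⟩ : ∃ B ⊆ (univ : Finset (ZMod p)ˣ), B.image Units.val = A :=
    subset_image_iff.1 fun x hx =>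
      mem_image.2 ⟨Units.mk0 x (ne_of_mem_of_not_mem hx hA0), mem_univ _, rfl⟩
  set g' : (ZMod p)ˣ → (ZMod p)ˣ := fun x => Units.mk0 (g x) (hg x x.ne_zero)
  set h' : (ZMod p)ˣ → (ZMod p)ˣ := fun x => Units.mk0 (h x) (hh x x.ne_zero)
  have hvalue : image₂ (fun x y => g x * (h x + y)) (B.image Units.val) (B.image Units.val) =
      valueSet g' h' B := by
    rw [image₂_image_left, image₂_image_right]
    rfl
  have hmul : B.image Units.val * B.image Units.val = (B * B).image Units.val :=
    (image_mul (Units.coeHom (ZMod p))).symm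
  rw [hvalue, hmul]
  simp only [card_image_of_injective _ Units.val_injective] at hp ⊢
  have hfiber (t : (ZMod p)ˣ) : #{x ∈ B | g' x * h' x = t} ≤ m :=
    (card_le_card (filter_subset_filter _ (subset_univ B))).trans
      ((card_filter_units_mul_le_mu g' h' (fun _ => rfl) (fun _ => rfl) t).trans hmu)
  exact card_pow_eleven_le_of_units (image_nonempty.1 hA) hm hfiber hp
    (le_max_left _ _) (le_max_right _ _)

lemma natLog_two_add_one_le_two_mul_log {n : ℕ} (hn : n ≠ 0) :
    (Nat.log 2 n + 1 : ℝ) ≤ 2 * Real.log (2 * n) := by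
  have hlog_two : 0 < Real.log 2 := Real.log_pos one_lt_two
  calc (Nat.log 2 n + 1 : ℝ) = (Nat.log 2 (n * 2) : ℝ) := by
        rw [Nat.log_mul_base one_lt_two hn, Nat.cast_add_one]
    _ ≤ Real.logb 2 (n * 2 : ℕ) := Real.natLog_le_logb _ _
    _ = Real.log (2 * n) / Real.log 2 := by rw [Real.logb, Nat.cast_mul, Nat.cast_two, mul_comm]
    _ ≤ 2 * Real.log (2 * n) := by
        have hlog : 0 ≤ Real.log (2 * n) := by exact_mod_cast Real.log_natCast_nonneg (2 * n)
        rw [div_le_iff₀ hlog_two]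
        nlinarith [Real.log_two_gt_d9]

lemma rpow_mul_rpow_mul_rpow_le_of_pow_le {n W D l : ℝ} (hn : 0 ≤ n) (hW : 0 ≤ W) (hD : 0 < D)
    (hl : 0 < l) (h : n ^ 11 ≤ D * l ^ 7 * W ^ 9) :
    D ^ (-(1 / 9) : ℝ) * l ^ (-(7 / 9) : ℝ) * n ^ (11 / 9 : ℝ) ≤ W := by
  refine le_of_pow_le_pow_left₀ (n := 9) (by norm_num) hW ?_
  have hpow {x : ℝ} (hx : 0 ≤ x) (a : ℝ) : (x ^ (a / 9)) ^ 9 = x ^ a := by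
    rw [← Real.rpow_mul_natCast hx, Nat.cast_ofNat, div_mul_cancel₀ a (by norm_num)]
  rw [mul_pow, mul_pow, ← neg_div, ← neg_div, hpow hD.le, hpow hl.le, hpow hn, Real.rpow_neg_one,
    Real.rpow_neg hl.le]
  rw [Real.rpow_ofNat, Real.rpow_ofNat, ← mul_inv, inv_mul_le_iff₀ (by positivity)]
  exact h

lemma pow_five_le_pow_three_of_le_rpow {n p : ℕ} (h : (n : ℝ) ≤ (p : ℝ) ^ (3 / 5 : ℝ)) :
    n ^ 5 ≤ p ^ 3 := by
  have : (n : ℝ) ^ 5 ≤ (p : ℝ) ^ 3 := by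
    calc (n : ℝ) ^ 5 ≤ ((p : ℝ) ^ (3 / 5 : ℝ)) ^ 5 := by gcongr
      _ = (p : ℝ) ^ 3 := by
        rw [← Real.rpow_mul_natCast p.cast_nonneg, ← Real.rpow_natCast]
        norm_num
  exact_mod_cast this

end Assembly

end ProductExpander

theorem product_expander_eleven_ninths :
    ∀ m : ℕ, 1 ≤ m → ∃ C > (0:ℝ), ∃ c ≥ (0:ℝ),
      ∀ (p : ℕ) [Fact p.Prime], p ≠ 2 →
      ∀ g h : ZMod p → ZMod p,
      (∀ x : ZMod p, x ≠ 0 → g x ≠ 0) → (∀ x : ZMod p, x ≠ 0 → h x ≠ 0) →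
      mu (fun x => g x * h x) ≤ m →
      ∀ A : Finset (ZMod p), A.Nonempty → (0:ZMod p) ∉ A →
      (A.card : ℝ) ≤ (p:ℝ) ^ ((3:ℝ)/5) →
      C * (Real.log (2 * (A.card:ℝ))) ^ (-c) * (A.card : ℝ) ^ ((11:ℝ)/9) ≤
        max ((Finset.image₂ (fun x y => g x * (h x + y)) A A).card : ℝ) (((A * A).card : ℝ)) := by
  intro m hm
  have hD : (0 : ℝ) < 2 ^ 23 * 60000 ^ 4 * m ^ 12 * 2 ^ 7 := by positivity
  refine ⟨_, Real.rpow_pos_of_pos hD (-(1 / 9)), 7 / 9, by norm_num, ?_⟩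
  intro p _ _ g h hg hh hmu A hA hA0 hAp
  have hn : (1 : ℝ) ≤ A.card := by exact_mod_cast hA.card_pos
  have hlog : 0 < Real.log (2 * A.card) := Real.log_pos (by linarith)
  rw [← Nat.cast_max]
  refine ProductExpander.rpow_mul_rpow_mul_rpow_le_of_pow_le (Nat.cast_nonneg _)
    (Nat.cast_nonneg _) hD hlog ?_
  set W := max (image₂ (fun x y => g x * (h x + y)) A A).card (A * A).card
  calc (A.card : ℝ) ^ 11
      ≤ 2 ^ 23 * 60000 ^ 4 * m ^ 12 * (Nat.log 2 A.card + 1) ^ 7 * W ^ 9 := by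
        exact_mod_cast ProductExpander.card_pow_eleven_le hg hh hm hmu hA hA0
          (ProductExpander.pow_five_le_pow_three_of_le_rpow hAp)
    _ ≤ 2 ^ 23 * 60000 ^ 4 * m ^ 12 * (2 * Real.log (2 * A.card)) ^ 7 * W ^ 9 := by
        gcongr
        exact ProductExpander.natLog_two_add_one_le_two_mul_log hA.card_ne_zero
    _ = 2 ^ 23 * 60000 ^ 4 * m ^ 12 * 2 ^ 7 * Real.log (2 * A.card) ^ 7 * W ^ 9 := by ring
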